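/- arXiv:2201.00476 — 3 statements merged into one kernel-verified Lean document; each statement's English description precedes it below -/
import Mathlib

section
/- Let m, n be positive integers with n ≥ 2. There exists a set Z = mP_1 + ... + mP_{n+4} of n+4 non-degenerate equimultiple fat points in P^n such that reg(Z) = 3m - 1 < T(Z) = 3m, where T(Z) is the Segre bound max{T_j(Z) : j=1,...,n}, T_j(Z) = max{⌊(mq+j-2)/j⌋ : some q of the points lie on a j-dimensional linear subspace}. -/
open MvPolynomial

noncomputable section

/-- The defining prime ideal of the point of projective space with homogeneous
coordinates `p`: the ideal generated by the linear forms vanishing at `p`. -/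
def pointIdeal {K : Type} [Field K] {N : ℕ} (p : Fin N → K) :
    Ideal (MvPolynomial (Fin N) K) :=
  Ideal.span {f | f.IsHomogeneous 1 ∧ eval p f = 0}

/-- The ideal of the fat point scheme `m₁P₁ + ⋯ + m_sP_s`. -/
def fatIdeal {K : Type} [Field K] {N s : ℕ} (p : Fin s → Fin N → K) (m : Fin s → ℕ) :
    Ideal (MvPolynomial (Fin N) K) :=
  ⨅ i, pointIdeal (p i) ^ (m i)

/-- `dim_K` of the degree-`t` graded piece of the ideal `I`. -/
def gradedDim (K : Type) [Field K] {N : ℕ} (I : Ideal (MvPolynomial (Fin N) K)) (t : ℕ) : ℕ :=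
  Module.finrank K ↥(homogeneousSubmodule (Fin N) K t ⊓ I.restrictScalars K)

/-- The Hilbert function of `R/I` in degree `t`. -/
def hilbFn (K : Type) [Field K] {N : ℕ} (I : Ideal (MvPolynomial (Fin N) K)) (t : ℕ) : ℕ :=
  Module.finrank K ↥(homogeneousSubmodule (Fin N) K t) - gradedDim K I t

/-- The regularity index of `R/I` relative to the multiplicity `e`:
the least `t` with `H_{R/I}(t) = e`. -/
def regIndex (K : Type) [Field K] {N : ℕ} (I : Ideal (MvPolynomial (Fin N) K)) (e : ℕ) : ℕ :=
  sInf {t | hilbFn K I t = e}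

/-- The multiplicity `e(R/I) = ∑ C(mᵢ+n-1, n)` of a fat point scheme in `ℙⁿ`. -/
def fatMult (n : ℕ) {s : ℕ} (m : Fin s → ℕ) : ℕ :=
  ∑ i, (m i + n - 1).choose n

/-- The regularity index of the fat point scheme `m₁P₁ + ⋯ + m_sP_s` in `ℙⁿ`. -/
def regFat (K : Type) [Field K] {n s : ℕ} (p : Fin s → Fin (n + 1) → K) (m : Fin s → ℕ) : ℕ :=
  regIndex K (fatIdeal p m) (fatMult n m)

/-- The coordinate vectors `p i` represent distinct points of projective space. -/
def ProjDistinct {K : Type} [Field K] {N s : ℕ} (p : Fin s → Fin N → K) : Prop :=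
  (∀ i, p i ≠ 0) ∧ ∀ i j, i ≠ j → ∀ c : K, p i ≠ c • p j

/-- The points `p i`, `i ∈ Q`, lie on a `j`-dimensional linear subspace of `ℙⁿ`. -/
def OnLinearSubspace {K : Type} [Field K] {N s : ℕ} (p : Fin s → Fin N → K)
    (Q : Finset (Fin s)) (j : ℕ) : Prop :=
  ∃ W : Submodule K (Fin N → K), Module.finrank K ↥W ≤ j + 1 ∧ ∀ i ∈ Q, p i ∈ W

open Classical in
/-- The Segre bound `T(Z) = max {T_j(Z) | j = 1,…,n}` for fat points in `ℙⁿ`. -/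
def segreBound {K : Type} [Field K] (n : ℕ) {s : ℕ} (p : Fin s → Fin (n + 1) → K)
    (m : Fin s → ℕ) : ℕ :=
  (Finset.Icc 1 n).sup fun j =>
    Finset.univ.powerset.sup fun Q =>
      if Q.Nonempty ∧ OnLinearSubspace p Q j then (∑ i ∈ Q, m i + j - 2) / j else 0

/-- The standard coordinate point `(1,0,…,0)`. -/
def stdPt (K : Type) [Field K] (N : ℕ) : Fin N → K := fun j => if (j : ℕ) = 0 then 1 else 0

set_option linter.unusedSimpArgs false
theorem finrank_hom (K : Type) [Field K] (n t : ℕ) :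
    Module.finrank K ↥(homogeneousSubmodule (Fin (n + 1)) K t) = (t + n).choose n := by
  rw [homogeneousSubmodule_eq_finsupp_supported,
    (AddMonoidAlgebra.supportedEquivFinsupp (R := K) (S := K)
      {d : Fin (n + 1) →₀ ℕ | d.degree = t}).finrank_eq]
  have e : {d : Fin (n + 1) →₀ ℕ | d.degree = t} ≃ Sym (Fin (n + 1)) t :=
    (Equiv.subtypeEquivRight (fun d => by
      simp [Finsupp.degree_eq_sum, Finsupp.sum_fintype])).trans (Sym.equivNatSum _ _).symm
  rw [(Finsupp.domLCongr e : _ ≃ₗ[K] (_ →₀ K)).finrank_eq, Module.finrank_finsupp_self,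
    Sym.card_sym_eq_choose]
  simp only [Fintype.card_fin]
  rw [show n + 1 + t - 1 = t + n by omega, Nat.choose_symm_add]

instance finite_hom (K : Type) [Field K] (N t : ℕ) :
    Module.Finite K ↥(homogeneousSubmodule (Fin N) K t) :=
  Module.Finite.iff_fg.2 (homogeneousSubmodule_fg _ _ t)

theorem lin_split {K : Type} [Field K] {N : ℕ} (p : Fin N → K) (l : MvPolynomial (Fin N) K)
    (hl : l.IsHomogeneous 1) (hp : eval p l ≠ 0) (a : MvPolynomial (Fin N) K)
    (ha : a.IsHomogeneous 1) : ∃ c : K, a - C c * l ∈ pointIdeal p := by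
  refine ⟨eval p a / eval p l, Ideal.subset_span ⟨ha.sub (hl.C_mul _), ?_⟩⟩
  simp [hp]

theorem split_succ {K : Type} [Field K] {N : ℕ} (p : Fin N → K) (l : MvPolynomial (Fin N) K)
    (hl : l.IsHomogeneous 1) (hp : eval p l ≠ 0) (s : ℕ) (f : MvPolynomial (Fin N) K)
    (hf : f.IsHomogeneous (s + 1)) :
    ∃ g : MvPolynomial (Fin N) K, g.IsHomogeneous s ∧ f - l * g ∈ pointIdeal p ^ (s + 1) := by
  induction s generalizing f with
  | zero =>
    obtain ⟨c, hc⟩ := lin_split p l hl hp f hf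
    exact ⟨C c, isHomogeneous_C _ _, by simpa [mul_comm] using hc⟩
  | succ s ih =>
    have h : f ∈ homogeneousSubmodule (Fin N) K 1 * homogeneousSubmodule (Fin N) K 1 ^ (s + 1) := by
      rw [← pow_succ', homogeneousSubmodule_one_pow]; exact hf
    refine Submodule.mul_induction_on h ?_ ?_
    · intro a ha b hb
      rw [homogeneousSubmodule_one_pow] at hb
      obtain ⟨c, hc⟩ := lin_split p l hl hp a ha
      obtain ⟨g, hg, hb'⟩ := ih b hb
      refine ⟨a * g + C c * (b - l * g), ?_, ?_⟩
      · have h1 := IsHomogeneous.mul ha hg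
        have h2 := IsHomogeneous.mul hl hg
        rw [add_comm] at h1 h2
        exact h1.add (IsHomogeneous.C_mul (IsHomogeneous.sub hb h2) _)
      · have : a * b - l * (a * g + C c * (b - l * g)) = (a - C c * l) * (b - l * g) := by ring
        rw [this, pow_succ']
        exact Ideal.mul_mem_mul hc hb'
    · rintro x y ⟨g, hg, hx⟩ ⟨g', hg', hy⟩
      refine ⟨g + g', hg.add hg', ?_⟩
      have : x + y - l * (g + g') = (x - l * g) + (y - l * g') := by ring
      rw [this]; exact add_mem hx hy

theorem split_pow {K : Type} [Field K] {N : ℕ} (p : Fin N → K) (l : MvPolynomial (Fin N) K)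
    (hl : l.IsHomogeneous 1) (hp : eval p l ≠ 0) (d k : ℕ) (f : MvPolynomial (Fin N) K)
    (hf : f.IsHomogeneous (d + k)) :
    ∃ g : MvPolynomial (Fin N) K, g.IsHomogeneous d ∧ f - l ^ k * g ∈ pointIdeal p ^ (d + 1) := by
  induction k generalizing f with
  | zero => exact ⟨f, hf, by simp⟩
  | succ k ih =>
    obtain ⟨g, hg, h⟩ := split_succ p l hl hp (d + k) f hf
    obtain ⟨g', hg', h'⟩ := ih g hg
    refine ⟨g', hg', ?_⟩
    have : f - l ^ (k + 1) * g' = (f - l * g) + l * (g - l ^ k * g') := by ring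
    rw [this]
    exact add_mem (Ideal.pow_le_pow_right (by omega) h) (Ideal.mul_mem_left _ _ h')

/-- expansion at `p`: `x ↦ p + T x`. -/
def ptExpand {K : Type} [Field K] {N : ℕ} (p : Fin N → K) :
    MvPolynomial (Fin N) K →ₐ[K] Polynomial (MvPolynomial (Fin N) K) :=
  aeval (fun j => Polynomial.C (C (p j)) + Polynomial.X * Polynomial.C (X j))

theorem ptExpand_coeff_zero {K : Type} [Field K] {N : ℕ} (p : Fin N → K)
    (f : MvPolynomial (Fin N) K) : (ptExpand p f).coeff 0 = C (eval p f) := by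
  have h : (Polynomial.evalRingHom 0).comp (ptExpand p).toRingHom
      = (C : K →+* MvPolynomial (Fin N) K).comp (eval p) := by
    apply MvPolynomial.ringHom_ext
    · intro r
      simp [ptExpand, IsScalarTower.algebraMap_apply K (MvPolynomial (Fin N) K)
        (Polynomial (MvPolynomial (Fin N) K)), MvPolynomial.algebraMap_eq]
    · intro i; simp [ptExpand]
  have := congrArg (fun φ => φ f) h
  simpa [Polynomial.coeff_zero_eq_eval_zero] using this

theorem ptExpand_hom {K : Type} [Field K] {N : ℕ} (p : Fin N → K) (d : ℕ)
    (f : MvPolynomial (Fin N) K) (hf : f.IsHomogeneous d) :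
    (ptExpand p f).natDegree ≤ d ∧ (ptExpand p f).coeff d = f := by
  have h : f ∈ homogeneousSubmodule (Fin N) K 1 ^ d := by
    rw [homogeneousSubmodule_one_pow]; exact hf
  clear hf
  induction d generalizing f with
  | zero =>
    rw [pow_zero] at h
    obtain ⟨r, rfl⟩ := Submodule.mem_one.1 h
    rw [AlgHom.commutes, IsScalarTower.algebraMap_apply K (MvPolynomial (Fin N) K)
        (Polynomial (MvPolynomial (Fin N) K))]
    simp
  | succ d ih =>
    rw [pow_succ'] at h
    refine Submodule.mul_induction_on h ?_ ?_
    · intro a ha b hb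
      have hb' := ih b hb
      rw [homogeneousSubmodule_one_eq_span_X] at ha
      have ha' : (ptExpand p a).natDegree ≤ 1 ∧ (ptExpand p a).coeff 1 = a := by
        refine Submodule.span_induction ?_ ?_ ?_ ?_ ha
        · rintro _ ⟨i, rfl⟩
          simp only [ptExpand, aeval_X]
          constructor
          · compute_degree
          · simp
        · simp
        · rintro x y _ _ ⟨h1, h2⟩ ⟨h3, h4⟩
          rw [map_add]
          exact ⟨Polynomial.natDegree_add_le_of_degree_le h1 h3, by simp [h2, h4]⟩
        · rintro c x _ ⟨h1, h2⟩
          rw [map_smul]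
          exact ⟨(Polynomial.natDegree_smul_le _ _).trans h1, by simp [h2]⟩
      rw [map_mul]
      refine ⟨(Polynomial.natDegree_mul_le).trans (by omega), ?_⟩
      rw [add_comm d 1, Polynomial.coeff_mul_add_eq_of_natDegree_le ha'.1 hb'.1, ha'.2, hb'.2]
    · rintro x y ⟨h1, h2⟩ ⟨h3, h4⟩
      rw [map_add]
      exact ⟨Polynomial.natDegree_add_le_of_degree_le h1 h3, by simp [h2, h4]⟩

theorem map_pow_mem {K : Type} [Field K] {N : ℕ} {S : Type} [CommRing S] (p : Fin N → K)
    (φ : MvPolynomial (Fin N) K →+* S) (x : S)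
    (h : ∀ f : MvPolynomial (Fin N) K, f.IsHomogeneous 1 → eval p f = 0 → x ∣ φ f) (m : ℕ)
    (f : MvPolynomial (Fin N) K) (hf : f ∈ pointIdeal p ^ m) : x ^ m ∣ φ f := by
  have h1 : pointIdeal p ≤ (Ideal.span {x}).comap φ := by
    rw [pointIdeal, Ideal.span_le]
    rintro g ⟨hg, hg'⟩
    exact Ideal.mem_span_singleton.2 (h g hg hg')
  have h2 := Ideal.le_comap_pow φ m (Ideal.pow_right_mono h1 m hf)
  rw [Ideal.span_singleton_pow] at h2
  exact Ideal.mem_span_singleton.1 h2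

theorem eq_zero_of_mul_mem {K : Type} [Field K] {N : ℕ} (p : Fin N → K)
    (G f : MvPolynomial (Fin N) K) (hG : eval p G ≠ 0) (d : ℕ) (hf : f.IsHomogeneous d)
    (h : G * f ∈ pointIdeal p ^ (d + 1)) : f = 0 := by
  have h1 := map_pow_mem p (ptExpand p).toRingHom Polynomial.X (fun g hg hg' => by
    rw [Polynomial.X_dvd_iff]
    have := ptExpand_coeff_zero p g
    rw [hg', map_zero] at this
    exact this) (d + 1) _ h
  have h2 : ¬ (Polynomial.X ∣ ptExpand p G) := by
    rw [Polynomial.X_dvd_iff, ptExpand_coeff_zero]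
    simpa using hG
  have h3 : Polynomial.X ^ (d + 1) ∣ ptExpand p G * ptExpand p f := by simpa using h1
  have h4 := Prime.pow_dvd_of_dvd_mul_left Polynomial.prime_X _ h2 h3
  have h5 := (Polynomial.X_pow_dvd_iff.1 h4) d (by omega)
  rw [(ptExpand_hom p d f hf).2] at h5
  exact h5

theorem exists_linear {K : Type} [Field K] {N : ℕ} (f : MvPolynomial (Fin N) K)
    (hf : f.IsHomogeneous 1) : ∃ φ : (Fin N → K) →ₗ[K] K, ∀ v, eval v f = φ v := by
  have h : f ∈ homogeneousSubmodule (Fin N) K 1 := hf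
  rw [homogeneousSubmodule_one_eq_span_X] at h
  refine Submodule.span_induction ?_ ?_ ?_ ?_ h
  · rintro _ ⟨i, rfl⟩
    exact ⟨LinearMap.proj i, fun v => by simp⟩
  · exact ⟨0, by simp⟩
  · rintro x y _ _ ⟨a, ha⟩ ⟨b, hb⟩
    exact ⟨a + b, fun v => by simp [ha, hb]⟩
  · rintro c x _ ⟨a, ha⟩
    exact ⟨c • a, fun v => by simp [ha, smul_eval]⟩

theorem hilb_iff {K : Type} [Field K] {n s : ℕ} (p : Fin s → Fin (n + 1) → K) (d t : ℕ)
    (G : Fin s → MvPolynomial (Fin (n + 1)) K) (hG : ∀ i, eval (p i) (G i) ≠ 0)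
    (hs : ∀ i, ∀ f : MvPolynomial (Fin (n + 1)) K, f.IsHomogeneous t →
      ∃ g : MvPolynomial (Fin (n + 1)) K, g.IsHomogeneous d ∧
        f - G i * g ∈ pointIdeal (p i) ^ (d + 1)) :
    hilbFn K (fatIdeal p (fun _ => d + 1)) t = fatMult n (fun _ : Fin s => d + 1) ↔
      ∀ g : Fin s → MvPolynomial (Fin (n + 1)) K, (∀ i, (g i).IsHomogeneous d) →
        ∃ f : MvPolynomial (Fin (n + 1)) K, f.IsHomogeneous t ∧
          ∀ i, f - G i * g i ∈ pointIdeal (p i) ^ (d + 1) := by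
  choose γ hγ1 hγ2 using hs
  have huniq : ∀ i (g g' f : MvPolynomial (Fin (n + 1)) K), g.IsHomogeneous d →
      g'.IsHomogeneous d → f - G i * g ∈ pointIdeal (p i) ^ (d + 1) →
      f - G i * g' ∈ pointIdeal (p i) ^ (d + 1) → g = g' := by
    intro i g g' f hg hg' h h'
    have := eq_zero_of_mul_mem (p i) (G i) (g - g') (hG i) d (hg.sub hg') (by
      have := sub_mem h' h
      have e : f - G i * g' - (f - G i * g) = G i * (g - g') := by ring
      rwa [e] at this)
    exact sub_eq_zero.1 this
  let V := homogeneousSubmodule (Fin (n + 1)) K t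
  let H := homogeneousSubmodule (Fin (n + 1)) K d
  let Γ : V →ₗ[K] (Fin s → H) :=
    { toFun := fun f i => ⟨γ i f.1 f.2, hγ1 i f.1 f.2⟩
      map_add' := by
        intro x y
        funext i
        apply Subtype.ext
        refine huniq i _ _ (x.1 + y.1) (hγ1 _ _ _) ((hγ1 _ _ _).add (hγ1 _ _ _)) (hγ2 _ _ _) ?_
        change x.1 + y.1 - G i * (γ i x.1 x.2 + γ i y.1 y.2) ∈ _
        have := add_mem (hγ2 i x.1 x.2) (hγ2 i y.1 y.2)
        convert this using 1
        ring
      map_smul' := by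
        intro c x
        funext i
        apply Subtype.ext
        refine huniq i _ _ (c • x.1) (hγ1 _ _ _) (H.smul_mem c (hγ1 i x.1 x.2)) (hγ2 _ _ _) ?_
        change c • x.1 - G i * (c • γ i x.1 x.2) ∈ _
        have := Ideal.mul_mem_left _ (C c) (hγ2 i x.1 x.2)
        convert this using 1
        simp only [smul_eq_C_mul]
        ring }
  have hker : LinearMap.ker Γ = ((fatIdeal p (fun _ => d + 1)).restrictScalars K).comap V.subtype := by
    ext f
    rw [LinearMap.mem_ker]
    simp only [Submodule.mem_comap, Submodule.restrictScalars_mem, fatIdeal, Submodule.mem_iInf,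
      Submodule.subtype_apply]
    constructor
    · intro h i
      have h1 : γ i f.1 f.2 = 0 := congrArg (fun z : Fin s → H => (z i).1) h
      have h2 := hγ2 i f.1 f.2
      rw [h1] at h2
      simpa using h2
    · intro h
      funext i
      apply Subtype.ext
      refine huniq i _ _ f.1 (hγ1 _ _ _) (isHomogeneous_zero _ _ _) (hγ2 _ _ _) ?_
      simpa using h i
  have hdim : gradedDim K (fatIdeal p (fun _ => d + 1)) t = Module.finrank K (LinearMap.ker Γ) := by
    rw [gradedDim, hker]
    refine (LinearEquiv.finrank_eq ?_).symm
    refine (Submodule.equivMapOfInjective V.subtype V.injective_subtype _).trans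
      (LinearEquiv.ofEq _ _ ?_)
    rw [Submodule.map_comap_subtype]
  have hrn := LinearMap.finrank_range_add_finrank_ker Γ
  have hh : hilbFn K (fatIdeal p (fun _ => d + 1)) t = Module.finrank K (LinearMap.range Γ) := by
    rw [hilbFn, hdim]
    change Module.finrank K V - _ = _
    omega
  have he : fatMult n (fun _ : Fin s => d + 1) = Module.finrank K (Fin s → H) := by
    rw [Module.finrank_pi_fintype]
    simp only [fatMult, H, finrank_hom]
    rw [show d + 1 + n - 1 = d + n by omega]
  rw [hh, he]
  have hsurj : Module.finrank K (LinearMap.range Γ) = Module.finrank K (Fin s → H) ↔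
      Function.Surjective Γ := by
    rw [← LinearMap.range_eq_top]
    constructor
    · exact Submodule.eq_top_of_finrank_eq
    · intro h; rw [h, finrank_top]
  rw [hsurj]
  constructor
  · intro h g hg
    obtain ⟨f, hf⟩ := h (fun i => ⟨g i, hg i⟩)
    refine ⟨f.1, f.2, fun i => ?_⟩
    have h1 : γ i f.1 f.2 = g i := congrArg (fun z : Fin s → H => (z i).1) hf
    rw [← h1]
    exact hγ2 i f.1 f.2
  · intro h g
    obtain ⟨f, hf, hf'⟩ := h (fun i => (g i).1) (fun i => (g i).2)
    refine ⟨⟨f, hf⟩, ?_⟩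
    funext i
    apply Subtype.ext
    exact huniq i _ _ f (hγ1 _ _ _) (g i).2 (hγ2 _ _ _) (hf' i)

/-- Every point is separated from the others by two hyperplanes. -/
def HypSep {K : Type} [Field K] {N s : ℕ} (p : Fin s → Fin N → K)
    (A B : Fin s → MvPolynomial (Fin N) K) : Prop :=
  (∀ i, (A i).IsHomogeneous 1) ∧ (∀ i, (B i).IsHomogeneous 1) ∧
  (∀ i, eval (p i) (A i) ≠ 0) ∧ (∀ i, eval (p i) (B i) ≠ 0) ∧
  ∀ i j, i ≠ j → eval (p j) (A i) = 0 ∨ eval (p j) (B i) = 0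

theorem sep_hilb {K : Type} [Field K] {n s : ℕ} (p : Fin s → Fin (n + 1) → K)
    (A B : Fin s → MvPolynomial (Fin (n + 1)) K) (h : HypSep p A B) (d : ℕ) :
    hilbFn K (fatIdeal p (fun _ => d + 1)) (d + (d + 1) + (d + 1)) =
      fatMult n (fun _ : Fin s => d + 1) := by
  obtain ⟨hA, hB, hpA, hpB, hs⟩ := h
  rw [hilb_iff p d _ (fun i => A i ^ (d + 1) * B i ^ (d + 1))]
  · intro g hg
    refine ⟨∑ l, A l ^ (d + 1) * B l ^ (d + 1) * g l, ?_, ?_⟩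
    · refine IsHomogeneous.sum _ _ _ fun l _ => ?_
      have := (((hA l).pow (d + 1)).mul ((hB l).pow (d + 1))).mul (hg l)
      convert this using 1
      ring
    · intro i
      rw [← Finset.add_sum_erase _ _ (Finset.mem_univ i), add_sub_cancel_left]
      refine Ideal.sum_mem _ fun l hl => ?_
      have hli : l ≠ i := Finset.ne_of_mem_erase hl
      apply Ideal.mul_mem_right
      rcases hs l i hli with h | h
      · exact Ideal.mul_mem_right _ _ (Ideal.pow_mem_pow (show A l ∈ pointIdeal (p i) from Ideal.subset_span ⟨hA l, h⟩) _)
      · exact Ideal.mul_mem_left _ _ (Ideal.pow_mem_pow (show B l ∈ pointIdeal (p i) from Ideal.subset_span ⟨hB l, h⟩) _)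
  · intro i
    simp [hpA i, hpB i]
  · intro i f hf
    obtain ⟨g, hg, h1⟩ := split_pow (p i) (A i) (hA i) (hpA i) (d + (d + 1)) (d + 1) f hf
    obtain ⟨g', hg', h2⟩ := split_pow (p i) (B i) (hB i) (hpB i) d (d + 1) g hg
    refine ⟨g', hg', ?_⟩
    have e : f - A i ^ (d + 1) * B i ^ (d + 1) * g' =
      (f - A i ^ (d + 1) * g) + A i ^ (d + 1) * (g - B i ^ (d + 1) * g') := by ring
    rw [e]
    exact add_mem (Ideal.pow_le_pow_right (by omega) h1) (Ideal.mul_mem_left _ _ h2)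

theorem sep_distinct {K : Type} [Field K] {N s : ℕ} (p : Fin s → Fin N → K)
    (A B : Fin s → MvPolynomial (Fin N) K) (h : HypSep p A B) : ProjDistinct p := by
  obtain ⟨hA, hB, hpA, hpB, hs⟩ := h
  refine ⟨fun i hi => ?_, fun i j hij c hc => ?_⟩
  · obtain ⟨φ, hφ⟩ := exists_linear _ (hA i)
    exact hpA i (by rw [hφ, hi, map_zero])
  · obtain ⟨φ, hφ⟩ := exists_linear _ (hA i)
    obtain ⟨ψ, hψ⟩ := exists_linear _ (hB i)
    rcases hs i j hij with h | h
    · exact hpA i (by rw [hφ, hc, map_smul, ← hφ, h, smul_zero])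
    · exact hpB i (by rw [hψ, hc, map_smul, ← hψ, h, smul_zero])

theorem line_aux {K : Type} [Field K] {N s : ℕ} (p : Fin s → Fin N → K) (hd : ProjDistinct p)
    (W : Submodule K (Fin N → K)) (hW : Module.finrank K W ≤ 2) (f : MvPolynomial (Fin N) K)
    (hf : f.IsHomogeneous 1) (i j l : Fin s) (hjl : j ≠ l) (hi : p i ∈ W) (hj : p j ∈ W)
    (hl : p l ∈ W) (h1 : eval (p i) f ≠ 0) (h2 : eval (p j) f = 0) (h3 : eval (p l) f = 0) :
    False := by
  obtain ⟨φ, hφ⟩ := exists_linear _ hf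
  have hli : LinearIndependent K ![p j, p l] := by
    rw [LinearIndependent.pair_iff' (hd.1 j)]
    intro a h
    exact hd.2 l j hjl.symm a h.symm
  have hsub : Submodule.span K (Set.range ![p j, p l]) ≤ W := by
    rw [Submodule.span_le]
    rintro _ ⟨a, rfl⟩
    fin_cases a
    · exact hj
    · exact hl
  have heq := Submodule.eq_of_le_of_finrank_le hsub (by
    rw [finrank_span_eq_card hli]; simpa using hW)
  rw [← heq] at hi
  have hk : Submodule.span K (Set.range ![p j, p l]) ≤ LinearMap.ker φ := by
    rw [Submodule.span_le]
    rintro _ ⟨a, rfl⟩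
    fin_cases a
    · simpa [hφ] using h2
    · simpa [hφ] using h3
  exact h1 (by rw [hφ]; exact hk hi)

theorem line_card {K : Type} [Field K] {N s : ℕ} (p : Fin s → Fin N → K)
    (A B : Fin s → MvPolynomial (Fin N) K) (h : HypSep p A B) (Q : Finset (Fin s))
    (hQ : OnLinearSubspace p Q 1) : Q.card ≤ 3 := by
  classical
  have hd := sep_distinct p A B h
  obtain ⟨hA, hB, hpA, hpB, hs⟩ := h
  obtain ⟨W, hW, hQW⟩ := hQ
  by_contra! hc
  obtain ⟨i, hi⟩ : Q.Nonempty := Finset.card_pos.1 (by omega)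
  have hcov : Q.erase i ⊆ (Q.erase i).filter (fun j => eval (p j) (A i) = 0) ∪
      (Q.erase i).filter (fun j => eval (p j) (B i) = 0) := by
    intro j hj
    rcases hs i j (Finset.ne_of_mem_erase hj).symm with h | h
    · exact Finset.mem_union_left _ (Finset.mem_filter.2 ⟨hj, h⟩)
    · exact Finset.mem_union_right _ (Finset.mem_filter.2 ⟨hj, h⟩)
  have h1 := (Finset.card_le_card hcov).trans (Finset.card_union_le _ _)
  rw [Finset.card_erase_of_mem hi] at h1
  rcases lt_or_ge 1 ((Q.erase i).filter (fun j => eval (p j) (A i) = 0)).card with h2 | h2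
  · obtain ⟨j, hj, l, hl, hjl⟩ := Finset.one_lt_card.1 h2
    simp only [Finset.mem_filter, Finset.mem_erase] at hj hl
    exact line_aux p hd W hW (A i) (hA i) i j l hjl (hQW i hi) (hQW j hj.1.2) (hQW l hl.1.2)
      (hpA i) hj.2 hl.2
  · obtain ⟨j, hj, l, hl, hjl⟩ := Finset.one_lt_card.1 
      (show 1 < ((Q.erase i).filter (fun j => eval (p j) (B i) = 0)).card by omega)
    simp only [Finset.mem_filter, Finset.mem_erase] at hj hl
    exact line_aux p hd W hW (B i) (hB i) i j l hjl (hQW i hi) (hQW j hj.1.2) (hQW l hl.1.2)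
      (hpB i) hj.2 hl.2

/-- The fourth line of the star configuration. -/
def lineForm {K : Type} [Field K] (k : ℕ) (a : K) : MvPolynomial (Fin (k + 3)) K :=
  C (a - 1) * X 0 + C a * X 1 + X 2

/-- The points: coordinate points and the three points of the fourth line. -/
def pts {K : Type} [Field K] (k : ℕ) (a : K) : Fin (k + 3 + 3) → Fin (k + 3) → K :=
  Fin.append (fun i => Pi.single i 1)
    ![Pi.single 1 1 - a • Pi.single 2 1, Pi.single 0 1 + (1 - a) • Pi.single 2 1,
      a • Pi.single 0 1 + (1 - a) • Pi.single 1 1]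

/-- First hyperplane. -/
def hypA (K : Type) [Field K] (k : ℕ) : Fin (k + 3 + 3) → MvPolynomial (Fin (k + 3)) K :=
  Fin.append (fun i => X i) ![X 1, X 0, X 0]

/-- Second hyperplane. -/
def hypB {K : Type} [Field K] (k : ℕ) (a : K) : Fin (k + 3 + 3) → MvPolynomial (Fin (k + 3)) K :=
  Fin.append (fun i => if i = 0 ∨ i = 1 ∨ i = 2 then lineForm k a else X i) ![X 2, X 2, X 1]

theorem lineForm_hom {K : Type} [Field K] (k : ℕ) (a : K) : (lineForm k a).IsHomogeneous 1 :=
  ((isHomogeneous_C_mul_X _ _).add (isHomogeneous_C_mul_X _ _)).add (isHomogeneous_X _ _)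

theorem fin_ne (k : ℕ) : (0 : Fin (k + 3)) ≠ 1 ∧ (0 : Fin (k + 3)) ≠ 2 ∧ (1 : Fin (k + 3)) ≠ 2 ∧
    (1 : Fin (k + 3)) ≠ 0 ∧ (2 : Fin (k + 3)) ≠ 0 ∧ (2 : Fin (k + 3)) ≠ 1 := by
  have h0 : ((0 : Fin (k + 3)) : ℕ) = 0 := rfl
  have h1 : ((1 : Fin (k + 3)) : ℕ) = 1 := rfl
  have h2 : ((2 : Fin (k + 3)) : ℕ) = 2 := rfl
  refine ⟨?_, ?_, ?_, ?_, ?_, ?_⟩ <;> intro h <;> have := congrArg Fin.val h <;> omega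

theorem forall_idx {k : ℕ} {P : Fin (k + 3 + 3) → Prop} (h : ∀ i : Fin (k + 3), P (Fin.castAdd 3 i))
    (h0 : P (Fin.natAdd (k + 3) 0)) (h1 : P (Fin.natAdd (k + 3) 1))
    (h2 : P (Fin.natAdd (k + 3) 2)) : ∀ i, P i := by
  intro i
  refine Fin.addCases h (fun j => ?_) i
  fin_cases j
  · exact h0
  · exact h1
  · exact h2

theorem pts_sep {K : Type} [Field K] (k : ℕ) (a : K) (h0 : a ≠ 0) (h1 : a ≠ 1) :
    HypSep (pts k a) (hypA K k) (hypB k a) := by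
  obtain ⟨h01, h02, h12, h10, h20, h21⟩ := fin_ne k
  have ha : a - 1 ≠ 0 := sub_ne_zero.2 h1
  have hb : 1 - a ≠ 0 := sub_ne_zero.2 h1.symm
  refine ⟨?_, ?_, ?_, ?_, ?_⟩
  · apply forall_idx <;> simp [hypA, isHomogeneous_X]
  · apply forall_idx
    · intro i
      simp only [hypB, Fin.append_left]
      split_ifs
      · exact lineForm_hom k a
      · exact isHomogeneous_X _ _
    all_goals simp [hypB, isHomogeneous_X]
  · apply forall_idx <;> simp [hypA, pts, h0, ha, hb, h01, h02, h12, h10, h20, h21]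
  · apply forall_idx
    · intro i
      simp only [hypB, Fin.append_left, pts]
      split_ifs with h
      · rcases h with rfl | rfl | rfl <;>
          simp [lineForm, h0, ha, hb, h01, h02, h12, h10, h20, h21]
      · simp
    all_goals simp [hypB, pts, h0, ha, hb, h01, h02, h12, h10, h20, h21]
  · apply forall_idx
    · intro i
      apply forall_idx
      · intro j hij
        left
        have : i ≠ j := fun h => hij (by rw [h])
        simp [hypA, pts, this]
      all_goals
        intro _
        by_cases hi : i = 0 ∨ i = 1 ∨ i = 2
        · right
          simp [hypB, pts, hi, lineForm, h01, h02, h12, h10, h20, h21] <;> ring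
        · left
          push Not at hi
          simp [hypA, pts, hi.1, hi.2.1, hi.2.2]
    all_goals
      apply forall_idx
      · intro j _
        simp only [hypA, hypB, pts, Fin.append_left, Fin.append_right]
        by_cases hj : j = 0
        · subst hj; simp [h01, h02, h12, h10, h20, h21]
        by_cases hj : j = 1
        · subst hj; simp [h01, h02, h12, h10, h20, h21]
        simp_all [Pi.single_apply, eq_comm]
      all_goals
        first
        | (intro h; exact absurd rfl h)
        | (intro _; simp [hypA, hypB, pts, h01, h02, h12, h10, h20, h21])

theorem pts_span {K : Type} [Field K] (k : ℕ) (a : K) :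
    Submodule.span K (Set.range (pts k a)) = ⊤ := by
  rw [eq_top_iff, ← (Pi.basisFun K (Fin (k + 3))).span_eq]
  apply Submodule.span_mono
  rintro _ ⟨i, rfl⟩
  exact ⟨Fin.castAdd 3 i, by simp [pts]⟩

theorem pts_card {K : Type} [Field K] (k : ℕ) (a : K) (Q : Finset (Fin (k + 3 + 3))) (j : ℕ)
    (hQ : OnLinearSubspace (pts k a) Q j) : Q.card ≤ j + 4 := by
  classical
  obtain ⟨W, hW, hQW⟩ := hQ
  let S : Finset (Fin (k + 3)) := Finset.univ.filter (fun i => Fin.castAdd 3 i ∈ Q)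
  have hsub : Q ⊆ S.image (Fin.castAdd 3) ∪ (Finset.univ : Finset (Fin 3)).image (Fin.natAdd (k + 3)) := by
    intro i
    refine Fin.addCases (fun i hi => ?_) (fun i hi => ?_) i
    · exact Finset.mem_union_left _ (Finset.mem_image.2 ⟨i, by simp [S, hi], rfl⟩)
    · exact Finset.mem_union_right _ (Finset.mem_image.2 ⟨i, by simp, rfl⟩)
  have h1 := (Finset.card_le_card hsub).trans (Finset.card_union_le _ _)
  have h2 : (S.image (Fin.castAdd 3)).card ≤ S.card := Finset.card_image_le
  have h3 : ((Finset.univ : Finset (Fin 3)).image (Fin.natAdd (k + 3))).card ≤ 3 :=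
    Finset.card_image_le
  have hli : LinearIndependent K (fun i : S => (⟨Pi.single i.1 1, by
      have := hQW (Fin.castAdd 3 i.1) ((Finset.mem_filter.1 i.2).2)
      simpa [pts] using this⟩ : W)) := by
    apply LinearIndependent.of_comp W.subtype
    have := (Pi.basisFun K (Fin (k + 3))).linearIndependent.comp (fun i : S => i.1)
      Subtype.val_injective
    convert this using 1
    funext i
    simp
  have h4 := hli.fintype_card_le_finrank
  rw [Fintype.card_coe] at h4
  omega

theorem pts_segre {K : Type} [Field K] (k : ℕ) (a : K) (h0 : a ≠ 0) (h1 : a ≠ 1) (m : ℕ)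
    (hm : 0 < m) : segreBound (k + 2) (pts k a) (fun _ => m) = 3 * m := by
  classical
  apply le_antisymm
  · unfold segreBound
    refine Finset.sup_le fun j hj => Finset.sup_le fun Q _ => ?_
    rw [Finset.mem_Icc] at hj
    split_ifs with h
    · simp only [Finset.sum_const, smul_eq_mul]
      rcases Nat.eq_or_lt_of_le hj.1 with h2 | h2
      · subst h2
        have := line_card _ _ _ (pts_sep k a h0 h1) Q h.2
        rw [Nat.div_one]
        have : Q.card * m ≤ 3 * m := Nat.mul_le_mul_right _ this
        omega
      · have hc := pts_card k a Q j h.2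
        have hc' : Q.card * m ≤ (j + 4) * m := Nat.mul_le_mul_right _ hc
        rw [Nat.div_le_iff_le_mul_add_pred (by omega)]
        obtain ⟨i, rfl⟩ : ∃ i, j = i + 2 := ⟨j - 2, by omega⟩
        have : Q.card * m + (i + 2) - 2 = Q.card * m + i := by omega
        rw [this]
        have : i + 2 - 1 = i + 1 := by omega
        rw [this]
        nlinarith [Nat.zero_le (i * m)]
    · exact Nat.zero_le _
  · let W : Submodule K (Fin (k + 3) → K) := Submodule.span K (Set.range
      ![(Pi.single 0 1 : Fin (k + 3) → K), Pi.single 1 1, Pi.single 2 1])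
    have hW : Module.finrank K W ≤ 2 + 1 := (finrank_range_le_card _).trans (by simp)
    have e0 : (Pi.single 0 1 : Fin (k + 3) → K) ∈ W := Submodule.subset_span ⟨0, rfl⟩
    have e1 : (Pi.single 1 1 : Fin (k + 3) → K) ∈ W := Submodule.subset_span ⟨1, rfl⟩
    have e2 : (Pi.single 2 1 : Fin (k + 3) → K) ∈ W := Submodule.subset_span ⟨2, rfl⟩
    let u : Fin 3 ⊕ Fin 3 → Fin (k + 3 + 3) :=
      Sum.elim (fun i => Fin.castAdd 3 (Fin.castLE (by omega) i)) (fun i => Fin.natAdd (k + 3) i)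
    have hu : Function.Injective u := by
      rintro (x | x) (y | y) h
      all_goals
        have h' := congrArg Fin.val h
        simp only [u, Sum.elim_inl, Sum.elim_inr, Fin.val_castAdd, Fin.val_castLE, Fin.val_natAdd] at h'
      · rw [Fin.ext h']
      · omega
      · omega
      · rw [Fin.ext (show (x : ℕ) = y by omega)]
    let Q : Finset (Fin (k + 3 + 3)) := Finset.univ.image u
    have hQc : Q.card = 6 := by
      rw [Finset.card_image_of_injective _ hu]; simp
    have hQ : Q.Nonempty ∧ OnLinearSubspace (pts k a) Q 2 := by
      refine ⟨Finset.card_pos.1 (by omega), W, hW, ?_⟩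
      intro i hi
      obtain ⟨x, _, rfl⟩ := Finset.mem_image.1 hi
      rcases x with x | x
      · fin_cases x
        · simpa [u, pts] using e0
        · have : (Fin.castLE (by omega) (1 : Fin 3) : Fin (k + 3)) = 1 := rfl
          simpa [u, pts, this] using e1
        · have : (Fin.castLE (by omega) (2 : Fin 3) : Fin (k + 3)) = 2 := rfl
          simpa [u, pts, this] using e2
      · fin_cases x
        · simpa [u, pts] using sub_mem e1 (W.smul_mem a e2)
        · simpa [u, pts] using add_mem e0 (W.smul_mem (1 - a) e2)
        · simpa [u, pts] using add_mem (W.smul_mem a e0) (W.smul_mem (1 - a) e1)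
    unfold segreBound
    refine le_trans ?_ (Finset.le_sup (b := 2) (Finset.mem_Icc.2 ⟨by omega, by omega⟩))
    refine le_trans ?_ (Finset.le_sup (b := Q) (Finset.mem_powerset.2 (Finset.subset_univ _)))
    rw [if_pos hQ]
    simp only [Finset.sum_const, smul_eq_mul, hQc]
    omega

/-- Restriction to the line through the first two coordinate points. -/
def restr (K : Type) [Field K] (k : ℕ) : MvPolynomial (Fin (k + 3)) K →ₐ[K] Polynomial K :=
  aeval (fun j => if j = 0 then Polynomial.X else if j = 1 then 1 - Polynomial.X else 0)

theorem restr_eval {K : Type} [Field K] (k : ℕ) (c : K) (f : MvPolynomial (Fin (k + 3)) K) :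
    Polynomial.eval c (restr K k f) =
      eval (c • Pi.single 0 1 + (1 - c) • Pi.single 1 1) f := by
  obtain ⟨h01, h02, h12, h10, h20, h21⟩ := fin_ne k
  have h : (Polynomial.evalRingHom c).comp (restr K k).toRingHom
      = eval (c • Pi.single 0 1 + (1 - c) • Pi.single 1 1) := by
    apply MvPolynomial.ringHom_ext
    · intro r
      simp [restr]
    · intro i
      by_cases hi : i = 0
      · subst hi; simp [restr, h01]
      by_cases hi' : i = 1
      · subst hi'; simp [restr, h10]
      simp [restr, hi, hi']
  exact congrArg (fun φ => φ f) h

theorem restr_dvd {K : Type} [Field K] (k : ℕ) (c : K) (p : Fin (k + 3) → K)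
    (hp : c • Pi.single 0 1 + (1 - c) • Pi.single 1 1 = p) (m : ℕ)
    (f : MvPolynomial (Fin (k + 3)) K) (hf : f ∈ pointIdeal p ^ m) :
    (Polynomial.X - Polynomial.C c) ^ m ∣ restr K k f := by
  refine map_pow_mem p (restr K k).toRingHom _ (fun g _ hg => ?_) m f hf
  rw [Polynomial.dvd_iff_isRoot, Polynomial.IsRoot]
  exact (restr_eval k c g).trans (by rw [hp, hg])

theorem pts_low {K : Type} [Field K] (k : ℕ) (a : K) (h0 : a ≠ 0) (h1 : a ≠ 1) (d t : ℕ)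
    (ht : t < 3 * d + 2) :
    hilbFn K (fatIdeal (pts k a) (fun _ => d + 1)) t ≠
      fatMult (k + 2) (fun _ : Fin (k + 3 + 3) => d + 1) := by
  obtain ⟨h01, h02, h12, h10, h20, h21⟩ := fin_ne k
  intro h
  rcases lt_or_ge t d with htd | htd
  · have h2 : hilbFn K (fatIdeal (pts k a) (fun _ => d + 1)) t ≤ (t + (k + 2)).choose (k + 2) := by
      rw [← finrank_hom K]; exact Nat.sub_le _ _
    have h3 : (t + (k + 2)).choose (k + 2) ≤ (d + (k + 2)).choose (k + 2) :=
      Nat.choose_le_choose _ (by omega)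
    have h4 : 0 < (d + (k + 2)).choose (k + 2) := Nat.choose_pos (by omega)
    rw [h] at h2
    simp only [fatMult, Finset.sum_const, Finset.card_univ, Fintype.card_fin, smul_eq_mul] at h2
    rw [show d + 1 + (k + 2) - 1 = d + (k + 2) by omega] at h2
    nlinarith
  · obtain ⟨r, rfl⟩ : ∃ r, t = d + r := ⟨t - d, by omega⟩
    obtain ⟨hA, hB, hpA, hpB, hs⟩ := pts_sep k a h0 h1
    rw [hilb_iff (pts k a) d (d + r) (fun i => hypA K k i ^ r)] at h
    · obtain ⟨f, hf, hf'⟩ := h (fun i => if i = Fin.castAdd 3 0 then X 1 ^ d else 0) (by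
        intro i
        split_ifs
        · exact isHomogeneous_X_pow _ _
        · exact isHomogeneous_zero _ _ _)
      have q0 := hf' (Fin.castAdd 3 0)
      have q1 := hf' (Fin.castAdd 3 1)
      have q2 := hf' (Fin.natAdd (k + 3) 2)
      have n1 : (Fin.castAdd 3 (1 : Fin (k + 3))) ≠ Fin.castAdd 3 0 := by
        intro h; exact h10 (Fin.castAdd_injective _ _ h)
      have n2 : (Fin.natAdd (k + 3) (2 : Fin 3)) ≠ Fin.castAdd 3 0 := by
        intro h
        have := congrArg Fin.val h
        simp at this
      rw [if_pos rfl] at q0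
      rw [if_neg n1, mul_zero, sub_zero] at q1
      rw [if_neg n2, mul_zero, sub_zero] at q2
      have d0 := restr_dvd k 1 _ (by simp [pts]) _ _ q0
      have d1 := restr_dvd k 0 _ (by simp [pts]) _ _ q1
      have d2 := restr_dvd k a _ (by simp [pts]) _ _ q2
      have e : restr K k (f - hypA K k (Fin.castAdd 3 0) ^ r * X 1 ^ d) =
          restr K k f - Polynomial.X ^ r * (1 - Polynomial.X) ^ d := by
        simp [restr, hypA, h10]
      rw [e] at d0
      have e' : (1 - Polynomial.X : Polynomial K) = -(Polynomial.X - Polynomial.C 1) := by simp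
      have d3 : (Polynomial.X - Polynomial.C (1 : K)) ^ d ∣ restr K k f := by
        have i1 : (Polynomial.X - Polynomial.C (1 : K)) ^ d ∣
            restr K k f - Polynomial.X ^ r * (1 - Polynomial.X) ^ d :=
          (pow_dvd_pow _ (by omega)).trans d0
        have i2 : (Polynomial.X - Polynomial.C (1 : K)) ^ d ∣
            Polynomial.X ^ r * (1 - Polynomial.X) ^ d := by
          apply Dvd.dvd.mul_left
          rw [e', neg_pow]
          exact Dvd.intro_left _ rfl
        simpa using dvd_add i1 i2
      have cop : ∀ x y : K, x ≠ y →
          IsCoprime (Polynomial.X - Polynomial.C x) (Polynomial.X - Polynomial.C y) :=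
        fun x y hxy => Polynomial.isCoprime_X_sub_C_of_isUnit_sub (sub_ne_zero.2 hxy).isUnit
      have c1 : IsCoprime ((Polynomial.X - Polynomial.C (0 : K)) ^ (d + 1))
          ((Polynomial.X - Polynomial.C a) ^ (d + 1)) := (cop 0 a h0.symm).pow
      have c2 : IsCoprime ((Polynomial.X - Polynomial.C (0 : K)) ^ (d + 1) *
          (Polynomial.X - Polynomial.C a) ^ (d + 1)) ((Polynomial.X - Polynomial.C (1 : K)) ^ d) :=
        IsCoprime.mul_left (cop 0 1 zero_ne_one).pow (cop a 1 h1).pow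
      have dd := c2.mul_dvd (c1.mul_dvd d1 d2) d3
      have hdeg : (restr K k f).natDegree ≤ (d + r) * 1 := by
        apply MvPolynomial.aeval_natDegree_le _ hf.totalDegree_le
        intro i
        split_ifs
        · simp
        · compute_degree
        · simp
      have hz : restr K k f = 0 := by
        by_contra hne
        have := Polynomial.natDegree_le_of_dvd dd hne
        have m1 : ∀ (x : K) (e : ℕ), ((Polynomial.X - Polynomial.C x) ^ e).Monic :=
          fun x e => (Polynomial.monic_X_sub_C x).pow e
        rw [((m1 _ _).mul (m1 _ _)).natDegree_mul (m1 _ _), (m1 _ _).natDegree_mul (m1 _ _)] at this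
        simp only [Polynomial.natDegree_pow, Polynomial.natDegree_X_sub_C] at this
        omega
      rw [hz, zero_sub, dvd_neg, e', neg_pow, pow_succ] at d0
      have e2 : (Polynomial.X : Polynomial K) ^ r * ((-1) ^ d * (Polynomial.X - Polynomial.C 1) ^ d)
          = (Polynomial.X - Polynomial.C 1) ^ d * (Polynomial.X ^ r * (-1) ^ d) := by ring
      rw [e2] at d0
      have d4 := (mul_dvd_mul_iff_left (pow_ne_zero d (Polynomial.X_sub_C_ne_zero (1 : K)))).1 d0
      rw [Polynomial.dvd_iff_isRoot, Polynomial.IsRoot] at d4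
      simp at d4
    · intro i
      simpa using pow_ne_zero r (hpA i)
    · intro i f hf
      exact split_pow _ _ (hA i) (hpA i) d r f hf

theorem pts_reg {K : Type} [Field K] (k : ℕ) (a : K) (h0 : a ≠ 0) (h1 : a ≠ 1) (d : ℕ) :
    regFat K (n := k + 2) (pts k a) (fun _ => d + 1) = 3 * (d + 1) - 1 := by
  unfold regFat regIndex
  apply IsLeast.csInf_eq
  constructor
  · have := sep_hilb (n := k + 2) _ _ _ (pts_sep k a h0 h1) d
    rw [show d + (d + 1) + (d + 1) = 3 * (d + 1) - 1 by omega] at this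
    exact this
  · intro t ht
    by_contra! hlt
    exact pts_low k a h0 h1 d t (by omega) ht

/-- Corollary 4.5: for every `m ≥ 1` and `n ≥ 2` there exist `n+4` non-degenerate
equimultiple fat points in `ℙⁿ` with `reg(Z) = 3m - 1 < T(Z) = 3m`. -/
theorem stmt13 {K : Type} [Field K] [IsAlgClosed K] (m n : ℕ) (hm : 0 < m) (hn : 2 ≤ n) :
    ∃ p : Fin (n + 4) → Fin (n + 1) → K, ProjDistinct p ∧
      Submodule.span K (Set.range p) = ⊤ ∧
      regFat K p (fun _ => m) = 3 * m - 1 ∧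
      segreBound n p (fun _ => m) = 3 * m ∧
      regFat K p (fun _ => m) < segreBound n p (fun _ => m) := by
  classical
  obtain ⟨d, rfl⟩ : ∃ d, m = d + 1 := ⟨m - 1, by omega⟩
  obtain ⟨k, rfl⟩ : ∃ k, n = k + 2 := ⟨n - 2, by omega⟩
  have : Infinite K := IsAlgClosed.instInfinite
  obtain ⟨a, ha⟩ := Infinite.exists_notMem_finset ({0, 1} : Finset K)
  have h0 : a ≠ 0 := fun h => ha (by simp [h])
  have h1 : a ≠ 1 := fun h => ha (by simp [h])
  have hr := pts_reg k a h0 h1 d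
  have hs := pts_segre k a h0 h1 (d + 1) hm
  refine ⟨pts k a, sep_distinct _ _ _ (pts_sep k a h0 h1), pts_span k a, hr, hs, ?_⟩
  calc _ = _ := hr
    _ < 3 * (d + 1) := by omega
    _ = _ := hs.symm
end
end

section
/- Let P_1,...,P_s be distinct points in P^n with s ≤ 5, let m be a positive integer, and Z = mP_1 + ... + mP_s. Then reg(Z) = max{T_j : j = 1,...,n}, where T_j = max{⌊(qm + j - 2)/j⌋ : some q of the points lie on a j-dimensional linear subspace}. -/
open MvPolynomial

noncomputable section

section Prelim
open scoped Pointwise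
variable {K : Type} [Field K] {N : ℕ}

/-- Linear forms vanishing at `P`. -/
def linVan (P : Fin N → K) : Submodule K (MvPolynomial (Fin N) K) where
  carrier := {f | f.IsHomogeneous 1 ∧ eval P f = 0}
  add_mem' := fun {a b} ha hb => ⟨ha.1.add hb.1, by simp [ha.2, hb.2]⟩
  zero_mem' := ⟨isHomogeneous_zero _ _ _, by simp⟩
  smul_mem' := fun c f hf => ⟨by
    rw [smul_eq_C_mul]; exact hf.1.C_mul c, by simp [hf.2]⟩

theorem mem_linVan {P : Fin N → K} {f : MvPolynomial (Fin N) K} : f ∈ linVan P ↔ f.IsHomogeneous 1 ∧ eval P f = 0 := Iff.rfl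

theorem linVan_le_pointIdeal (P : Fin N → K) : 
    linVan P ≤ (pointIdeal P).restrictScalars K := fun _ hf => Ideal.subset_span hf

/-- linear form of a functional -/
def formOf (φ : Module.Dual K (Fin N → K)) : MvPolynomial (Fin N) K :=
  ∑ j, C (φ (Pi.single j 1)) * X j

theorem formOf_hom (φ : Module.Dual K (Fin N → K)) : (formOf φ).IsHomogeneous 1 :=
  IsHomogeneous.sum _ _ _ fun _ _ => isHomogeneous_C_mul_X _ _

theorem eval_formOf (φ : Module.Dual K (Fin N → K)) (x : Fin N → K) : 
    eval x (formOf φ) = φ x := by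
  simp only [formOf, map_sum, map_mul, eval_C, eval_X]
  rw [LinearMap.pi_apply_eq_sum_univ φ x]
  refine Finset.sum_congr rfl fun j _ => ?_
  have : (fun k => if j = k then (1:K) else 0) = Pi.single j 1 := by
    ext k; simp [Pi.single_apply, eq_comm]
  simp [this, mul_comm]

theorem eval_lin {f : MvPolynomial (Fin N) K} (hf : f.IsHomogeneous 1) :
    ∃ φ : Module.Dual K (Fin N → K), ∀ x, eval x f = φ x := by
  have : f ∈ homogeneousSubmodule (Fin N) K 1 := hf
  rw [homogeneousSubmodule_one_eq_span_X] at this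
  induction this using Submodule.span_induction with
  | mem x h => obtain ⟨j, rfl⟩ := h; exact ⟨LinearMap.proj j, by simp⟩
  | zero => exact ⟨0, by simp⟩
  | add x y _ _ hx hy => 
    obtain ⟨a, ha⟩ := hx
      (by rw [← mem_homogeneousSubmodule, homogeneousSubmodule_one_eq_span_X]; assumption)
    obtain ⟨b, hb⟩ := hy
      (by rw [← mem_homogeneousSubmodule, homogeneousSubmodule_one_eq_span_X]; assumption)
    exact ⟨a + b, by simp [ha, hb]⟩
  | smul c x _ hx =>
    obtain ⟨a, ha⟩ := hx
      (by rw [← mem_homogeneousSubmodule, homogeneousSubmodule_one_eq_span_X]; assumption)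
    exact ⟨c • a, by simp [ha]⟩

/-- separating a vector from a subspace by a linear form -/
theorem exists_form {W : Submodule K (Fin N → K)} {x : Fin N → K} (hx : x ∉ W) :
    ∃ f : MvPolynomial (Fin N) K, f.IsHomogeneous 1 ∧ eval x f = 1 ∧ ∀ w ∈ W, eval w f = 0 := by
  obtain ⟨φ, h1, h2⟩ := Submodule.exists_le_ker_of_notMem hx
  refine ⟨formOf ((φ x)⁻¹ • φ), formOf_hom _, ?_, ?_⟩
  · rw [eval_formOf]; simp [h1]
  · intro w hw
    rw [eval_formOf]
    have : φ w = 0 := h2 hw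
    simp [this]

theorem exists_h {P : Fin N → K} (hP : P ≠ 0) :
    ∃ f : MvPolynomial (Fin N) K, f.IsHomogeneous 1 ∧ eval P f = 1 := by
  obtain ⟨f, h1, h2, _⟩ := exists_form (W := ⊥) (x := P) (by simpa using hP)
  exact ⟨f, h1, h2⟩

local notation "Rg" => homogeneousSubmodule (Fin N) K

theorem Rg_mul (a b : ℕ) : Rg a * Rg b = Rg (a + b) := by
  rw [← homogeneousSubmodule_one_pow _ a, ← homogeneousSubmodule_one_pow _ b, ← pow_add,
    homogeneousSubmodule_one_pow]

theorem Rg_one_le {P : Fin N → K} {h : MvPolynomial (Fin N) K} (hh : h.IsHomogeneous 1)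
    (h1 : eval P h = 1) : Rg 1 = Submodule.span K {h} ⊔ linVan P := by
  apply le_antisymm
  · intro f hf
    rw [Submodule.mem_sup]
    refine ⟨eval P f • h, Submodule.smul_mem _ _ (Submodule.mem_span_singleton_self _),
      f - eval P f • h, ⟨?_, by simp [h1]⟩, by ring⟩
    exact (Rg 1).sub_mem hf ((Rg 1).smul_mem _ hh)
  · refine sup_le ?_ fun f hf => hf.1
    rw [Submodule.span_singleton_le_iff_mem]; exact hh

theorem Rg_succ_le {P : Fin N → K} {h : MvPolynomial (Fin N) K} (hh : h.IsHomogeneous 1)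
    (h1 : eval P h = 1) (d : ℕ) : 
    Rg (d+1) ≤ Submodule.span K {h^(d+1)} ⊔ linVan P * Rg d := by
  induction d with
  | zero => 
    rw [Rg_one_le hh h1, homogeneousSubmodule_zero]
    simp
  | succ d ih => 
    have e : Rg (d+1+1) = Rg 1 * Rg (d+1) := by rw [Rg_mul]; congr 1; ring
    have key : Rg 1 * (linVan P * Rg d) = linVan P * Rg (d+1) := by
      rw [mul_left_comm, Rg_mul, add_comm]
    calc Rg (d+1+1) = Rg 1 * Rg (d+1) := e
      _ ≤ Rg 1 * (Submodule.span K {h^(d+1)} ⊔ linVan P * Rg d) := mul_le_mul' le_rfl ih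
      _ = Rg 1 * Submodule.span K {h^(d+1)} ⊔ linVan P * Rg (d+1) := by rw [Submodule.mul_sup, key]
      _ ≤ _ := by
        refine sup_le ?_ le_sup_right
        rw [Rg_one_le hh h1, Submodule.sup_mul]
        refine sup_le ?_ ?_
        · rw [Submodule.span_mul_span]; simp [← pow_succ']
        · refine le_sup_of_le_right (mul_le_mul' le_rfl ?_)
          rw [Submodule.span_singleton_le_iff_mem]
          simpa using hh.pow (d+1)

theorem eval_linVan_mul {P : Fin N → K} {V : Submodule K (MvPolynomial (Fin N) K)} 
    {f : MvPolynomial (Fin N) K} (hf : f ∈ linVan P * V) : eval P f = 0 := by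
  induction hf using Submodule.mul_induction_on' with
  | mem_mul_mem m hm n hn => simp [hm.2]
  | add x _ y _ hx hy => simp [hx, hy]

theorem Rg_le_F {P : Fin N → K} (hP : P ≠ 0) (d : ℕ) {F : MvPolynomial (Fin N) K}
    (hF : F.IsHomogeneous d) (hFP : eval P F ≠ 0) :
    Rg d ≤ Submodule.span K {F} ⊔ linVan P * Rg (d - 1) := by
  obtain ⟨h, hh, h1⟩ := exists_h hP
  cases d with
  | zero =>
    refine le_sup_of_le_left ?_
    have hF' : F ∈ Rg 0 := hF
    rw [homogeneousSubmodule_zero, Submodule.mem_one] at hF'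
    obtain ⟨c, rfl⟩ := hF'
    intro f hf
    rw [homogeneousSubmodule_zero, Submodule.mem_one] at hf
    obtain ⟨b, rfl⟩ := hf
    rw [Submodule.mem_span_singleton]
    have : c ≠ 0 := by rintro rfl; simp at hFP
    exact ⟨b / c, by rw [Algebra.smul_def, ← map_mul, div_mul_cancel₀ _ this]⟩
  | succ d =>
    simp only [Nat.add_sub_cancel]
    refine (Rg_succ_le hh h1 d).trans (sup_le ?_ le_sup_right)
    rw [Submodule.span_singleton_le_iff_mem]
    have := Rg_succ_le hh h1 d hF
    rw [Submodule.mem_sup] at this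
    obtain ⟨y, hy, z, hz, e⟩ := this
    obtain ⟨c, rfl⟩ := Submodule.mem_span_singleton.1 hy
    have hc : c ≠ 0 := by
      rintro rfl
      apply hFP
      rw [← e]; simp [eval_linVan_mul hz]
    have : h^(d+1) = c⁻¹ • F + (-c⁻¹) • z := by
      rw [← e, smul_add, smul_smul, inv_mul_cancel₀ hc]; simp
    rw [this]
    exact Submodule.add_mem_sup (Submodule.smul_mem _ _ (Submodule.mem_span_singleton_self _))
      (Submodule.smul_mem _ _ hz)

theorem linVan_pow_le (P : Fin N → K) (m : ℕ) :
    linVan P ^ m ≤ ((pointIdeal P)^m).restrictScalars K := by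
  induction m with
  | zero => simp
  | succ m ih =>
    rw [pow_succ, Submodule.mul_le]
    intro a ha b hb
    rw [Submodule.restrictScalars_mem, pow_succ]
    exact Ideal.mul_mem_mul (ih ha) (linVan_le_pointIdeal P hb)

theorem linVan_pow_mul_le (P : Fin N → K) (m : ℕ) (V : Submodule K (MvPolynomial (Fin N) K)) :
    linVan P ^ m * V ≤ ((pointIdeal P)^m).restrictScalars K := by
  rw [Submodule.mul_le]
  intro a ha b _
  exact Ideal.mul_mem_right _ _ (linVan_pow_le P m ha)

/-- separation at the point `i` in degree `t`. -/
def SepAt {s : ℕ} (p : Fin s → Fin N → K) (m t : ℕ) (i : Fin s) : Prop :=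
  ∀ f ∈ Rg t, ∃ g ∈ Rg t, f - g ∈ pointIdeal (p i) ^ m ∧ ∀ j, j ≠ i → g ∈ pointIdeal (p j) ^ m

theorem sepAt_of_core {s : ℕ} (p : Fin s → Fin N → K) (m t : ℕ) (i : Fin s) (hm : 0 < m)
    (hP : p i ≠ 0) (ht : m ≤ t + 1)
    (S : Set (MvPolynomial (Fin N) K)) (hS : Submodule.span K S = linVan (p i))
    (H : ∀ k < m, ∀ π ∈ S ^ k, ∃ F : MvPolynomial (Fin N) K, F.IsHomogeneous (t - k) ∧
      eval (p i) F ≠ 0 ∧ ∀ j, j ≠ i → π * F ∈ pointIdeal (p j) ^ m) : SepAt p m t i := by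
  let J : Submodule K (MvPolynomial (Fin N) K) := 
    Rg t ⊓ ⨅ j, ⨅ (_ : j ≠ i), (pointIdeal (p j) ^ m).restrictScalars K
  have main : ∀ r, r ≤ m → linVan (p i) ^ (m - r) * Rg (t - (m - r)) ≤ 
      J ⊔ (pointIdeal (p i) ^ m).restrictScalars K := by
    intro r
    induction r with
    | zero => intro _; exact le_sup_of_le_right (linVan_pow_mul_le _ _ _)
    | succ r ih =>
      intro hr
      specialize ih (by omega)
      set k := m - (r + 1) with hk
      have e1 : m - r = k + 1 := by omega
      rw [e1] at ih
      conv_lhs => rw [← hS, Submodule.span_pow]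
      rw [Submodule.mul_le]
      intro a ha b hb
      induction ha using Submodule.span_induction with
      | zero => simp
      | add x y _ _ hx hy => rw [add_mul]; exact Submodule.add_mem _ hx hy
      | smul c x _ hx => rw [smul_mul_assoc]; exact Submodule.smul_mem _ _ hx
      | mem π hπ =>
        obtain ⟨F, hF1, hF2, hF3⟩ := H k (by omega) π hπ
        have hπ' : π ∈ linVan (p i) ^ k := by
          rw [← hS, Submodule.span_pow]; exact Submodule.subset_span hπ
        have := Rg_le_F hP _ hF1 hF2 hb
        rw [Submodule.mem_sup] at this
        obtain ⟨y, hy, z, hz, rfl⟩ := this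
        rw [mul_add]
        refine Submodule.add_mem _ ?_ ?_
        · obtain ⟨c, rfl⟩ := Submodule.mem_span_singleton.1 hy
          rw [mul_smul_comm]
          refine Submodule.smul_mem _ _ (Submodule.mem_sup_left ⟨?_, ?_⟩)
          · have h1 : linVan (p i) ^ k ≤ Rg k := by
              rw [← homogeneousSubmodule_one_pow _ k]
              exact pow_le_pow_left' (fun f hf => hf.1) k
            have := (show π.IsHomogeneous k from h1 hπ').mul hF1
            rwa [show k + (t - k) = t by omega] at this
          · simp only [SetLike.mem_coe, Submodule.mem_iInf]
            exact hF3
        · apply ih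
          rw [pow_succ, mul_assoc]
          exact Submodule.mul_mem_mul hπ' (by rwa [Nat.sub_sub] at hz)
  intro f hf
  have := main m le_rfl
  simp only [Nat.sub_self, pow_zero, one_mul, Nat.sub_zero] at this
  have := this hf
  rw [Submodule.mem_sup] at this
  obtain ⟨g, hg, u, hu, rfl⟩ := this
  refine ⟨g, hg.1, by simpa using hu, ?_⟩
  have := hg.2
  simp only [SetLike.mem_coe, Submodule.mem_iInf] at this
  exact this

end Prelim

section LinAlg
variable {K : Type*} [Field K] {V : Type*} [AddCommGroup V] [Module K V] [FiniteDimensional K V]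

theorem linalg_quot {A : Type*} [AddCommGroup A] [Module K A] [FiniteDimensional K A]
    (U : Submodule K V) (μ : A →ₗ[K] V) (h1 : ∀ a, μ a ∈ U → a = 0)
    (h2 : ∀ v, ∃ a, v - μ a ∈ U) : Module.finrank K V = Module.finrank K U + Module.finrank K A := by
  let ν := U.mkQ.comp μ
  have hb : Function.Bijective ν := by
    constructor
    · rw [injective_iff_map_eq_zero]
      intro f hf
      exact h1 f ((Submodule.Quotient.mk_eq_zero _).1 hf)
    · intro y
      obtain ⟨f, rfl⟩ := Submodule.mkQ_surjective _ y
      obtain ⟨g, hg⟩ := h2 f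
      exact ⟨g, ((Submodule.Quotient.eq _).2 hg).symm⟩
  rw [(LinearEquiv.ofBijective ν hb).finrank_eq, ← Submodule.finrank_quotient_add_finrank U, add_comm]

theorem linalg_iff {s : ℕ} (U : Fin s → Submodule K V) (e : ℕ) 
    (he : ∀ i, Module.finrank K V ≤ Module.finrank K (U i) + e) : 
    Module.finrank K V - Module.finrank K (⨅ i, U i : Submodule K V) = s * e ↔ 
      (∀ i, Module.finrank K V = Module.finrank K (U i) + e) ∧
      ∀ i f, ∃ g, f - g ∈ U i ∧ ∀ j, j ≠ i → g ∈ U j := by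
  set Φ := LinearMap.pi fun i => (U i).mkQ with hΦ
  have hker : LinearMap.ker Φ = ⨅ i, U i := by
    rw [hΦ, LinearMap.ker_pi]; simp
  have h1 := LinearMap.finrank_range_add_finrank_ker Φ
  rw [hker] at h1
  have h1' : Module.finrank K V - Module.finrank K (⨅ i, U i : Submodule K V) = 
    Module.finrank K (LinearMap.range Φ) := by omega
  rw [h1']
  have hcod : Module.finrank K (∀ i, V ⧸ U i) = ∑ i, Module.finrank K (V ⧸ U i) :=
    Module.finrank_pi_fintype K
  have hq : ∀ i, Module.finrank K (V ⧸ U i) + Module.finrank K (U i) = Module.finrank K V := 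
    fun i => Submodule.finrank_quotient_add_finrank (U i)
  have hle : Module.finrank K (LinearMap.range Φ) ≤ _ := Submodule.finrank_le (LinearMap.range Φ)
  rw [hcod] at hle
  have hqe : ∀ i, Module.finrank K (V ⧸ U i) ≤ e := fun i => by have := hq i; have := he i; omega
  have hsum : ∑ i, Module.finrank K (V ⧸ U i) ≤ s * e := by
    refine (Finset.sum_le_sum fun i _ => hqe i).trans (by simp)
  have hsurj : Function.Surjective Φ ↔ ∀ i f, ∃ g, f - g ∈ U i ∧ ∀ j, j ≠ i → g ∈ U j := by
    constructor
    · intro h i f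
      obtain ⟨g, hg⟩ := h (Pi.single i (Submodule.Quotient.mk f))
      refine ⟨g, ?_, ?_⟩
      · have := congrFun hg i
        simp only [hΦ, LinearMap.pi_apply, Pi.single_eq_same] at this
        exact (Submodule.Quotient.eq _).1 this.symm
      · intro j hj
        have := congrFun hg j
        simp only [hΦ, LinearMap.pi_apply, Pi.single_eq_of_ne hj] at this
        exact (Submodule.Quotient.mk_eq_zero _).1 this
    · intro h y
      have : ∀ i, ∃ g : V, Φ g = Pi.single i (y i) := by
        intro i
        obtain ⟨f, hf⟩ := Submodule.mkQ_surjective _ (y i)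
        obtain ⟨g, h1, h2⟩ := h i f
        refine ⟨g, ?_⟩
        ext1 j
        simp only [hΦ, LinearMap.pi_apply]
        by_cases hj : j = i
        · subst hj
          rw [Pi.single_eq_same, ← hf]
          exact ((Submodule.Quotient.eq _).2 h1).symm
        · rw [Pi.single_eq_of_ne hj]
          exact (Submodule.Quotient.mk_eq_zero _).2 (h2 j hj)
      choose g hg using this
      refine ⟨∑ i, g i, ?_⟩
      rw [map_sum]
      simp_rw [hg]
      exact Finset.univ_sum_single y
  rw [← hsurj]
  constructor
  · intro h
    have h2 : ∑ i, Module.finrank K (V ⧸ U i) = ∑ i : Fin s, e := by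
      simp; omega
    have h3 := (Finset.sum_eq_sum_iff_of_le fun i _ => hqe i).1 h2
    refine ⟨fun i => by rw [← h3 i (Finset.mem_univ _), ← hq i, add_comm], ?_⟩
    rw [← LinearMap.range_eq_top]
    apply Submodule.eq_top_of_finrank_eq
    rw [hcod]; omega
  · rintro ⟨h2, h3⟩
    rw [LinearMap.range_eq_top.2 h3, finrank_top, hcod]
    have : ∀ i, Module.finrank K (V ⧸ U i) = e := fun i => by have := hq i; have := h2 i; omega
    simp [this]

end LinAlg

section Dim
open scoped Pointwise
variable {K : Type} [Field K] {N : ℕ}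
local notation "Rg" => homogeneousSubmodule (Fin N) K

theorem Rg_le_pow {P : Fin N → K} {h : MvPolynomial (Fin N) K} (hh : h.IsHomogeneous 1)
    (h1 : eval P h = 1) (m : ℕ) : 
    Rg (m + 1) ≤ Submodule.span K {h} * Rg m ⊔ linVan P ^ (m+1) := by
  induction m with
  | zero => 
    rw [Rg_one_le hh h1, homogeneousSubmodule_zero]
    simp
  | succ m ih =>
    have e : Rg (m+1+1) = Rg 1 * Rg (m+1) := by rw [Rg_mul]; congr 1; ring
    calc Rg (m+1+1) = Rg 1 * Rg (m+1) := e
      _ = Submodule.span K {h} * Rg (m+1) ⊔ linVan P * Rg (m+1) := by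
        conv_lhs => rw [Rg_one_le hh h1, Submodule.sup_mul]
      _ ≤ Submodule.span K {h} * Rg (m+1) ⊔ 
            linVan P * (Submodule.span K {h} * Rg m ⊔ linVan P ^ (m+1)) := 
          sup_le_sup le_rfl (mul_le_mul' le_rfl ih)
      _ ≤ _ := by
        refine sup_le le_sup_left ?_
        rw [Submodule.mul_sup]
        refine sup_le (le_sup_of_le_left ?_) (le_sup_of_le_right (by rw [← pow_succ']))
        rw [mul_left_comm]
        refine mul_le_mul' le_rfl ?_
        rw [add_comm m 1, ← Rg_mul]
        exact mul_le_mul' (fun f hf => hf.1) le_rfl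

theorem Rg_le_hpow {P : Fin N → K} {h : MvPolynomial (Fin N) K} (hh : h.IsHomogeneous 1)
    (h1 : eval P h = 1) (m a : ℕ) (f : MvPolynomial (Fin N) K) (hf : f ∈ Rg (m + a)) :
    ∃ g ∈ Rg m, f - h ^ a * g ∈ (pointIdeal P) ^ (m+1) := by
  induction a generalizing f with
  | zero => exact ⟨f, hf, by simp⟩
  | succ a ih =>
    have e : Rg (m + (a+1)) = Rg (m + 1) * Rg a := by rw [Rg_mul]; congr 1; ring
    have h2 : Rg (m + (a+1)) ≤ Submodule.span K {h} * Rg (m+a) ⊔ 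
        ((pointIdeal P)^(m+1)).restrictScalars K := by
      rw [e]
      refine (mul_le_mul' (Rg_le_pow hh h1 m) le_rfl).trans ?_
      rw [Submodule.sup_mul, mul_assoc, Rg_mul]
      exact sup_le_sup le_rfl (linVan_pow_mul_le _ _ _)
    have := h2 hf
    rw [Submodule.mem_sup] at this
    obtain ⟨y, hy, z, hz, rfl⟩ := this
    rw [Submodule.mem_span_singleton_mul] at hy
    obtain ⟨w, hw, rfl⟩ := hy
    obtain ⟨g, hg, hg2⟩ := ih w hw
    refine ⟨g, hg, ?_⟩
    have : h * w + z - h ^ (a+1) * g = h * (w - h^a * g) + z := by ring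
    rw [this]
    exact Ideal.add_mem _ (Ideal.mul_mem_left _ _ hg2) hz

/-- The Taylor expansion map `X ↦ P + ε X`. -/
def taylorMap (P : Fin N → K) : MvPolynomial (Fin N) K →ₐ[K] Polynomial (MvPolynomial (Fin N) K) :=
  aeval fun j => Polynomial.C (C (P j)) + Polynomial.X * Polynomial.C (X j)

theorem taylorMap_lin (P : Fin N → K) {f : MvPolynomial (Fin N) K} (hf : f.IsHomogeneous 1) :
    taylorMap P f = Polynomial.C (C (eval P f)) + Polynomial.X * Polynomial.C f := by
  have : f ∈ Rg 1 := hf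
  rw [homogeneousSubmodule_one_eq_span_X] at this
  clear hf
  induction this using Submodule.span_induction with
  | mem x h => obtain ⟨j, rfl⟩ := h; simp [taylorMap]
  | zero => simp
  | add x y _ _ hx hy => rw [map_add, hx, hy]; simp; ring
  | smul c x _ hx => 
    rw [map_smul, hx]
    simp only [smul_eq_C_mul, map_mul, eval_C]
    rw [Algebra.smul_def]
    have : algebraMap K (Polynomial (MvPolynomial (Fin N) K)) c = Polynomial.C (C c) := rfl
    rw [this]; ring

theorem taylorMap_natDegree (P : Fin N → K) {f : MvPolynomial (Fin N) K} {d : ℕ} 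
    (hf : f.IsHomogeneous d) : (taylorMap P f).natDegree ≤ d := by
  have : f ∈ Rg d := hf
  rw [← homogeneousSubmodule_one_pow] at this
  clear hf
  induction this using Submodule.pow_induction_on_left' with
  | algebraMap r => simp
  | add x y i _ _ hx hy => rw [map_add]; exact Polynomial.natDegree_add_le_of_degree_le hx hy
  | mem_mul m hm i x hx ih =>
    rw [map_mul, taylorMap_lin P hm]
    refine Polynomial.natDegree_mul_le.trans ?_
    rw [Nat.succ_eq_add_one, add_comm]
    refine add_le_add ih ?_
    refine Polynomial.natDegree_add_le_of_degree_le (by simp) ?_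
    exact Polynomial.natDegree_mul_le.trans (by simp)

theorem taylorMap_inj (P : Fin N → K) {f : MvPolynomial (Fin N) K} (h : taylorMap P f = 0) :
    f = 0 := by
  let ev : Polynomial (MvPolynomial (Fin N) K) →ₐ[K] MvPolynomial (Fin N) K := 
    (Polynomial.aeval (1 : MvPolynomial (Fin N) K)).restrictScalars K
  let tr : MvPolynomial (Fin N) K →ₐ[K] MvPolynomial (Fin N) K := aeval fun j => X j - C (P j)
  have : (tr.comp (ev.comp (taylorMap P))) = AlgHom.id K _ := by
    ext j
    simp [tr, ev, taylorMap]
  have h2 := congrArg (fun g => g f) this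
  simp [h] at h2
  exact h2.symm

theorem taylorMap_pow (P : Fin N → K) (m : ℕ) {f : MvPolynomial (Fin N) K}
    (hf : f ∈ pointIdeal P ^ m) : Polynomial.X ^ m ∣ taylorMap P f := by
  have h1 : pointIdeal P ≤ (Ideal.span {(Polynomial.X : Polynomial (MvPolynomial (Fin N) K))}).comap 
      (taylorMap P) := by
    rw [pointIdeal, Ideal.span_le]
    intro g hg
    simp only [SetLike.mem_coe, Ideal.mem_comap]
    rw [taylorMap_lin P hg.1, hg.2, Ideal.mem_span_singleton]
    simp
  have h2 := (Ideal.pow_right_mono h1 m).trans (Ideal.le_comap_pow _ m) hf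
  rw [Ideal.mem_comap, Ideal.span_singleton_pow, Ideal.mem_span_singleton] at h2
  exact h2

theorem hpow_inj {P : Fin N → K} {h : MvPolynomial (Fin N) K} (hh : h.IsHomogeneous 1)
    (h1 : eval P h = 1) (m a : ℕ) {f : MvPolynomial (Fin N) K} (hf : f ∈ Rg m) 
    (hm : h ^ a * f ∈ pointIdeal P ^ (m+1)) : f = 0 := by
  have h2 := taylorMap_pow P (m+1) hm
  rw [map_mul, map_pow, taylorMap_lin P hh, h1] at h2
  have h3 : IsCoprime ((Polynomial.X : Polynomial (MvPolynomial (Fin N) K)) ^ (m+1)) 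
      ((Polynomial.C (C (1:K)) + Polynomial.X * Polynomial.C h) ^ a) := by
    apply IsCoprime.pow
    exact ⟨-Polynomial.C h, 1, by simp; ring⟩
  have h4 := h3.dvd_of_dvd_mul_left h2
  apply taylorMap_inj P
  by_contra hne
  have := Polynomial.natDegree_le_of_dvd h4 hne
  rw [Polynomial.natDegree_X_pow] at this
  have := taylorMap_natDegree P (show f.IsHomogeneous m from hf)
  omega

theorem finrank_Rg (n t : ℕ) : 
    Module.finrank K (homogeneousSubmodule (Fin (n+1)) K t) = (t + n).choose n := by
  rw [homogeneousSubmodule_eq_finsupp_supported]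
  have h1 := Module.finrank_eq_nat_card_basis 
    (basisRestrictSupport K {d : Fin (n+1) →₀ ℕ | d.degree = t})
  refine Eq.trans h1 ?_
  have : {d : Fin (n+1) →₀ ℕ | d.degree = t} = 
      ↑(Finset.univ.finsuppAntidiag t : Finset (Fin (n+1) →₀ ℕ)) := by
    ext d; simp [Finset.mem_finsuppAntidiag, Finsupp.degree_eq_sum]
  rw [this]
  simp only [Nat.card_coe_set_eq, Set.ncard_coe_finset, Finset.card_finsuppAntidiag_nat_eq_choose]
  simp only [Finset.card_univ, Fintype.card_fin]
  rw [show n + 1 + t - 1 = t + n by omega]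
  exact Nat.choose_symm_add

instance (t : ℕ) : FiniteDimensional K (Rg t) := 
  Module.Finite.iff_fg.2 (homogeneousSubmodule_fg _ _ t)

/-- graded piece of the power of the point ideal, inside `Rg t`. -/
def Ug (P : Fin N → K) (m t : ℕ) : Submodule K (Rg t) :=
  ((pointIdeal P ^ m).restrictScalars K).comap (Rg t).subtype

theorem finrank_quot {P : Fin N → K} (hP : P ≠ 0) (m a : ℕ) : 
    Module.finrank K (Rg (m+a)) = Module.finrank K (Ug P (m+1) (m+a)) + Module.finrank K (Rg m) := by
  obtain ⟨h, hh, h1⟩ := exists_h hP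
  let μ : Rg m →ₗ[K] Rg (m+a) := 
    ((LinearMap.mulLeft K (h^a)).domRestrict (Rg m)).codRestrict (Rg (m+a)) (fun x => by
      have := (hh.pow a).mul x.2
      rw [one_mul, add_comm] at this
      exact this)
  apply linalg_quot _ μ
  · intro f hf
    exact Subtype.ext (hpow_inj hh h1 m a f.2 hf)
  · intro f
    obtain ⟨g, hg, hg2⟩ := Rg_le_hpow hh h1 m a f f.2
    exact ⟨⟨g, hg⟩, hg2⟩

theorem hilb_iff_s15 {s n : ℕ} (hn : 0 < n) (hs : 0 < s) (p : Fin s → Fin (n+1) → K) 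
    (hp : ∀ i, p i ≠ 0) (m t : ℕ) (hm : 0 < m) : 
    hilbFn K (fatIdeal p (fun _ => m)) t = fatMult n (fun _ : Fin s => m) ↔ 
      m ≤ t + 1 ∧ ∀ i, SepAt p m t i := by
  obtain ⟨m, rfl⟩ : ∃ k, m = k + 1 := ⟨m - 1, by omega⟩
  have hg : gradedDim K (fatIdeal p (fun _ => m+1)) t = 
      Module.finrank K (⨅ i, Ug (p i) (m+1) t : Submodule K (homogeneousSubmodule (Fin (n+1)) K t)) := by
    unfold gradedDim
    rw [← Submodule.finrank_map_subtype_eq]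
    have : Submodule.map (homogeneousSubmodule (Fin (n+1)) K t).subtype
        (⨅ i, Ug (p i) (m+1) t) = 
        (homogeneousSubmodule (Fin (n+1)) K t ⊓ 
         Submodule.restrictScalars K (fatIdeal p fun x => m+1)) := by
      ext f
      simp [fatIdeal, Ug, Submodule.mem_iInf, and_comm]
    rw [this]
  have hmult : fatMult n (fun _ : Fin s => m + 1) = s * (m + n).choose n := by
    unfold fatMult
    simp only [Finset.sum_const, Finset.card_univ, Fintype.card_fin, smul_eq_mul]
    congr 2; omega
  have hsep : (∀ i, SepAt p (m+1) t i) ↔ ∀ i, ∀ f : homogeneousSubmodule (Fin (n+1)) K t, 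
      ∃ g, f - g ∈ Ug (p i) (m+1) t ∧ ∀ j, j ≠ i → g ∈ Ug (p j) (m+1) t := by
    constructor
    · intro h i f
      obtain ⟨g, hg, h1, h2⟩ := h i f f.2
      exact ⟨⟨g, hg⟩, h1, h2⟩
    · intro h i f hf
      obtain ⟨g, h1, h2⟩ := h i ⟨f, hf⟩
      exact ⟨g, g.2, h1, h2⟩
  unfold hilbFn
  rw [hg, hmult, hsep]
  by_cases ht : m ≤ t
  · obtain ⟨a, rfl⟩ := Nat.exists_eq_add_of_le ht
    have : ∀ i, Module.finrank K (homogeneousSubmodule (Fin (n+1)) K (m+a)) = 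
        Module.finrank K (Ug (p i) (m+1) (m+a)) + (m+n).choose n := by
      intro i; rw [finrank_quot (hp i), finrank_Rg]
    rw [linalg_iff _ _ fun i => (this i).le]
    constructor
    · intro h; exact ⟨by omega, h.2⟩
    · intro h; exact ⟨this, h.2⟩
  · have h0 : Module.finrank K (homogeneousSubmodule (Fin (n+1)) K t) < (m+n).choose n := by
      rw [finrank_Rg]
      obtain ⟨n, rfl⟩ : ∃ k, n = k + 1 := ⟨n - 1, by omega⟩
      have h1 : (t + (n+1)).choose (n+1) < (t + (n+1) + 1).choose (n+1) := by
        rw [Nat.choose_succ_succ (t + (n+1)) n]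
        have : 0 < (t + (n+1)).choose n := Nat.choose_pos (by omega)
        rw [Nat.succ_eq_add_one]; omega
      exact lt_of_lt_of_le h1 (Nat.choose_le_choose _ (by omega))
    rw [linalg_iff _ _ fun i => h0.le.trans (Nat.le_add_left _ _)]
    constructor
    · intro h
      have := h.1 ⟨0, hs⟩
      omega
    · intro h; omega

end Dim

section Lower
variable {K : Type} [Field K] {N : ℕ}
local notation "Rg" => homogeneousSubmodule (Fin N) K

/-- pull-back along a parametrised curve. -/
def pull (c : Fin N → Polynomial K) : MvPolynomial (Fin N) K →ₐ[K] Polynomial K := aeval c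

theorem pull_natDegree (c : Fin N → Polynomial K) (d : ℕ) (hc : ∀ j, (c j).natDegree ≤ d) 
    {f : MvPolynomial (Fin N) K} {t : ℕ} (hf : f.IsHomogeneous t) : 
    (pull c f).natDegree ≤ d * t := by
  have h1 : ∀ f ∈ Rg 1, (pull c f).natDegree ≤ d := by
    intro f hf
    rw [homogeneousSubmodule_one_eq_span_X] at hf
    induction hf using Submodule.span_induction with
    | mem x h => obtain ⟨j, rfl⟩ := h; simpa [pull] using hc j
    | zero => simp
    | add x y _ _ hx hy => rw [map_add]; exact Polynomial.natDegree_add_le_of_degree_le hx hy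
    | smul a x _ hx => rw [map_smul]; exact (Polynomial.natDegree_smul_le _ _).trans hx
  have : f ∈ Rg t := hf
  rw [← homogeneousSubmodule_one_pow] at this
  clear hf
  induction this using Submodule.pow_induction_on_left' with
  | algebraMap r => simp
  | add x y i _ _ hx hy => rw [map_add]; exact Polynomial.natDegree_add_le_of_degree_le hx hy
  | mem_mul m hm i x hx ih =>
    rw [map_mul]
    refine Polynomial.natDegree_mul_le.trans ?_
    rw [Nat.succ_eq_add_one, mul_add, mul_one, add_comm]
    exact add_le_add ih (h1 m hm)

theorem eval_pull (c : Fin N → Polynomial K) (f : MvPolynomial (Fin N) K) (τ : K) :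
    (pull c f).eval τ = eval (fun j => (c j).eval τ) f := by
  induction f using MvPolynomial.induction_on with
  | C a => simp [pull]
  | add p q hp hq => simp [hp, hq]
  | mul_X p n hp => rw [map_mul, Polynomial.eval_mul, hp, map_mul]; simp [pull]

theorem eval_pull_lin (c : Fin N → Polynomial K) {f : MvPolynomial (Fin N) K} 
    (hf : f.IsHomogeneous 1) {τ lam : K} {P : Fin N → K} 
    (hc : (fun j => (c j).eval τ) = lam • P) : (pull c f).eval τ = lam * eval P f := by
  rw [eval_pull, hc]
  obtain ⟨φ, hφ⟩ := eval_lin hf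
  simp [hφ]

theorem pull_dvd (c : Fin N → Polynomial K) {τ lam : K} {P : Fin N → K} 
    (hc : (fun j => (c j).eval τ) = lam • P) (m : ℕ) {f : MvPolynomial (Fin N) K} 
    (hf : f ∈ pointIdeal P ^ m) : (Polynomial.X - Polynomial.C τ) ^ m ∣ pull c f := by
  have h1 : pointIdeal P ≤ (Ideal.span {Polynomial.X - Polynomial.C τ}).comap (pull c) := by
    rw [pointIdeal, Ideal.span_le]
    intro g hg
    simp only [SetLike.mem_coe, Ideal.mem_comap]
    rw [Ideal.mem_span_singleton, Polynomial.dvd_iff_isRoot, Polynomial.IsRoot, 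
      eval_pull_lin c hg.1 hc, hg.2, mul_zero]
  have h2 := (Ideal.pow_right_mono h1 m).trans (Ideal.le_comap_pow _ m) hf
  rw [Ideal.mem_comap, Ideal.span_singleton_pow, Ideal.mem_span_singleton] at h2
  exact h2

theorem lower_curve {s : ℕ} (p : Fin s → Fin N → K) (m t : ℕ) (hm : 0 < m) (ht : m ≤ t + 1)
    {ι : Type} [Fintype ι] [DecidableEq ι] (e : ι → Fin s) (he : Function.Injective e) (i₀ : ι)
    (hP : p (e i₀) ≠ 0) (hsep : SepAt p m t (e i₀)) (τ lam : ι → K) (hτ : Function.Injective τ)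
    (c : Fin N → Polynomial K) (d : ℕ) (hd : ∀ j, (c j).natDegree ≤ d)
    (hc : ∀ i, (fun j => (c j).eval (τ i)) = lam i • p (e i)) (hl : lam i₀ ≠ 0)
    (ℓ : MvPolynomial (Fin N) K) (hℓ : ℓ ∈ linVan (p (e i₀))) 
    (hℓ2 : (pull c ℓ).derivative.eval (τ i₀) ≠ 0) : Fintype.card ι * m ≤ d * t + 1 := by
  obtain ⟨h, hh, h1⟩ := exists_h hP
  obtain ⟨k, rfl⟩ : ∃ k, m = k + 1 := ⟨m - 1, by omega⟩
  obtain ⟨a, rfl⟩ := Nat.exists_eq_add_of_le (show k ≤ t by omega)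
  have hfhom : (ℓ ^ k * h ^ a) ∈ Rg (k + a) := by
    have := (hℓ.1.pow k).mul (hh.pow a)
    simpa using this
  obtain ⟨g, hg, hg1, hg2⟩ := hsep _ hfhom
  have hroot : (pull c ℓ).IsRoot (τ i₀) := by
    rw [Polynomial.IsRoot, eval_pull_lin c hℓ.1 (hc i₀), hℓ.2, mul_zero]
  obtain ⟨u, hu⟩ := Polynomial.dvd_iff_isRoot.2 hroot
  have hu0 : u.eval (τ i₀) ≠ 0 := by
    rw [hu] at hℓ2
    simpa [Polynomial.derivative_mul] using hℓ2
  have hd1 := pull_dvd c (hc i₀) (k+1) hg1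
  set x := Polynomial.X - Polynomial.C (τ i₀) with hx
  have hx0 : x ≠ 0 := Polynomial.X_sub_C_ne_zero _
  have hnd : ¬ x ^ (k+1) ∣ pull c g := by
    intro hcon
    have h3 := dvd_add hd1 hcon
    rw [← map_add, sub_add_cancel, map_mul, map_pow, map_pow, hu, mul_pow, pow_succ, mul_assoc] at h3
    have h4 := (mul_dvd_mul_iff_left (pow_ne_zero k hx0)).1 h3
    rw [Polynomial.dvd_iff_isRoot, Polynomial.IsRoot, Polynomial.eval_mul, Polynomial.eval_pow,
      Polynomial.eval_pow, eval_pull_lin c hh (hc i₀), h1, mul_one] at h4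
    exact mul_ne_zero (pow_ne_zero _ hu0) (pow_ne_zero _ hl) h4
  have hne : pull c g ≠ 0 := by
    intro h0; apply hnd; rw [h0]; exact dvd_zero _
  have hk : x ^ k ∣ pull c g := by
    have h3 : x ^ k ∣ pull c (ℓ ^ k * h ^ a) := by
      rw [map_mul, map_pow, hu, mul_pow, mul_assoc]; exact dvd_mul_right _ _
    have h4 : x ^ k ∣ pull c (ℓ ^ k * h ^ a - g) := (pow_dvd_pow x (Nat.le_succ k)).trans hd1
    have := dvd_sub h3 h4
    rwa [← map_sub, sub_sub_cancel] at this
  let E : ι → ℕ := fun i => if i = i₀ then k else k + 1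
  have hprod : ∏ i, (Polynomial.X - Polynomial.C (τ i)) ^ E i ∣ pull c g := by
    apply Finset.prod_dvd_of_coprime
    · intro i _ j _ hij
      apply IsCoprime.pow
      exact Polynomial.isCoprime_X_sub_C_of_isUnit_sub (sub_ne_zero.2 (hτ.ne hij)).isUnit
    · intro i _
      by_cases hi : i = i₀
      · subst hi; simpa [E] using hk
      · simp only [E, hi, if_false]
        exact pull_dvd c (hc i) (k+1) (hg2 _ (he.ne hi))
  have hdeg := (Polynomial.natDegree_le_of_dvd hprod hne).trans (pull_natDegree c d hd hg)
  rw [Polynomial.natDegree_prod_of_monic _ _ (fun i _ => (Polynomial.monic_X_sub_C _).pow _)] at hdeg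
  simp only [Polynomial.natDegree_pow, Polynomial.natDegree_X_sub_C, mul_one] at hdeg
  have hsum : ∑ i, E i + 1 = Fintype.card ι * (k+1) := by
    have h5 : ∑ i, (E i + if i = i₀ then 1 else 0) = ∑ i : ι, (k+1) := by
      refine Finset.sum_congr rfl fun i _ => ?_
      by_cases hi : i = i₀ <;> simp [E, hi]
    rw [Finset.sum_add_distrib] at h5
    simpa using h5
  omega

theorem pull_comb {r : ℕ} (v : Fin r → Fin N → K) (q : Fin r → Polynomial K) 
    {f : MvPolynomial (Fin N) K} (hf : f.IsHomogeneous 1) : 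
    pull (fun j => ∑ k, Polynomial.C (v k j) * q k) f = ∑ k, Polynomial.C (eval (v k) f) * q k := by
  have : f ∈ Rg 1 := hf
  rw [homogeneousSubmodule_one_eq_span_X] at this
  clear hf
  induction this using Submodule.span_induction with
  | mem x h => obtain ⟨j, rfl⟩ := h; simp [pull]
  | zero => simp
  | add x y _ _ hx hy => simp [hx, hy, add_mul, Finset.sum_add_distrib]
  | smul a x _ hx => 
    simp [hx, Finset.smul_sum, mul_assoc, Polynomial.smul_eq_C_mul]

theorem eval_comb {r : ℕ} (v : Fin r → Fin N → K) (q : Fin r → Polynomial K) (τ : K) :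
    (fun j => (∑ k, Polynomial.C (v k j) * q k).eval τ) = ∑ k, (q k).eval τ • v k := by
  ext j
  simp [Polynomial.eval_finsetSum, mul_comm]

theorem conic_exists [Infinite K] (r : Fin 3 → K) (hr : Function.Injective r) (hr0 : ∀ k, r k ≠ 0) :
    ∃ (τ lam : Fin 5 → K) (q : Fin 3 → Polynomial K), Function.Injective τ ∧ (∀ i, lam i ≠ 0) ∧
      (∀ k, (q k).natDegree ≤ 2) ∧ 
      (∀ i k, (q k).eval (τ i) = 
        lam i * (![![1,0,0],![0,1,0],![0,0,1],![1,1,1],r] : Fin 5 → Fin 3 → K) i k) ∧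
      (q 1).derivative.eval (τ 0) ≠ 0 := by
  classical
  obtain ⟨μ, hμ⟩ := Infinite.exists_notMem_finset ({0, (r 0)⁻¹, (r 1)⁻¹, (r 2)⁻¹} : Finset K)
  simp only [Finset.mem_insert, Finset.mem_singleton, not_or] at hμ
  obtain ⟨hμ0, h0, h1, h2⟩ := hμ
  have key : ∀ k, 1 - μ * r k ≠ 0 := by
    intro k hk
    have : μ = (r k)⁻¹ := by
      field_simp [hr0 k]; rw [mul_comm] at hk; linear_combination -hk
    fin_cases k
    · exact h0 this
    · exact h1 this
    · exact h2 this
  obtain ⟨σ, hσ⟩ : ∃ σ : Fin 3 → K, ∀ k, σ k = μ * r k / (1 - μ * r k) := ⟨_, fun _ => rfl⟩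
  have hσ' : ∀ k, σ k * (1 - μ * r k) = μ * r k := fun k => by rw [hσ, div_mul_cancel₀ _ (key k)]
  have hσ0 : ∀ k, σ k ≠ 0 := fun k => by rw [hσ]; exact div_ne_zero (mul_ne_zero hμ0 (hr0 k)) (key k)
  have hσ1' : ∀ k, (1 + σ k) * (1 - μ * r k) = 1 := fun k => by linear_combination hσ' k
  have hσ1 : ∀ k, 1 + σ k ≠ 0 := fun k hk => by have := hσ1' k; rw [hk] at this; simp at this
  have hσr : ∀ k, σ k = (1 + σ k) * (μ * r k) := fun k => by linear_combination hσ' k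
  have hinj : ∀ k l, k ≠ l → σ k - σ l ≠ 0 := by
    intro k l hkl h
    apply hkl; apply hr
    have h3 : σ k = σ l := sub_eq_zero.1 h
    have h4 := hσr k; have h5 := hσr l
    rw [h3] at h4
    have := h4.symm.trans h5
    exact mul_left_cancel₀ hμ0 (mul_left_cancel₀ (hσ1 l) this)
  have a01 := hinj 0 1 (by decide)
  have a02 := hinj 0 2 (by decide)
  have a12 := hinj 1 2 (by decide)
  have a10 := hinj 1 0 (by decide)
  have a20 := hinj 2 0 (by decide)
  have a21 := hinj 2 1 (by decide)
  refine ⟨![σ 0, σ 1, σ 2, 0, -1], 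
    ![σ 0 * (σ 0 - σ 1) * (σ 0 - σ 2), σ 1 * (σ 1 - σ 0) * (σ 1 - σ 2), 
      σ 2 * (σ 2 - σ 0) * (σ 2 - σ 1), σ 0 * σ 1 * σ 2, μ * (1 + σ 0) * (1 + σ 1) * (1 + σ 2)],
    ![Polynomial.C (σ 0) * (Polynomial.X - Polynomial.C (σ 1)) * (Polynomial.X - Polynomial.C (σ 2)),
      Polynomial.C (σ 1) * (Polynomial.X - Polynomial.C (σ 0)) * (Polynomial.X - Polynomial.C (σ 2)),
      Polynomial.C (σ 2) * (Polynomial.X - Polynomial.C (σ 0)) * (Polynomial.X - Polynomial.C (σ 1))],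
    ?_, ?_, ?_, ?_, ?_⟩
  · have e0 : ∀ k, σ k ≠ -1 := fun k h => hσ1 k (by rw [h]; ring)
    have e1 : ∀ k, -1 ≠ σ k := fun k h => e0 k h.symm
    intro i j hij
    fin_cases i <;> fin_cases j <;> first 
      | rfl 
      | (exfalso; simp at hij; done)
      | (exfalso; simp at hij; 
         first 
         | exact hσ0 _ hij | exact hσ0 _ hij.symm | exact e0 _ hij | exact e1 _ hij
         | exact a01 (sub_eq_zero.2 hij) | exact a02 (sub_eq_zero.2 hij) 
         | exact a12 (sub_eq_zero.2 hij) | exact a10 (sub_eq_zero.2 hij) 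
         | exact a20 (sub_eq_zero.2 hij) | exact a21 (sub_eq_zero.2 hij))
  · intro i
    fin_cases i <;> simp [hσ0, hσ1, hμ0, a01, a02, a12, a10, a20, a21]
  · intro k
    have hq : ∀ a b c : K, (Polynomial.C a * (Polynomial.X - Polynomial.C b) * 
        (Polynomial.X - Polynomial.C c)).natDegree ≤ 2 := by
      intro a b c
      refine Polynomial.natDegree_mul_le.trans ?_
      rw [Polynomial.natDegree_X_sub_C]
      have := (Polynomial.natDegree_C_mul_le a (Polynomial.X - Polynomial.C b))
      rw [Polynomial.natDegree_X_sub_C] at this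
      omega
    fin_cases k <;> exact hq _ _ _
  · have b0 := hσr 0
    have b1 := hσr 1
    have b2 := hσr 2
    intro i k
    fin_cases i <;> fin_cases k <;> simp <;> first
      | ring1
      | (left; ring1)
      | linear_combination (1 + σ 1) * (1 + σ 2) * b0
      | linear_combination (1 + σ 0) * (1 + σ 2) * b1
      | linear_combination (1 + σ 0) * (1 + σ 1) * b2
  · simp [hσ0, a02]

end Lower

section Lower2
variable {K : Type} [Field K] {N : ℕ}
local notation "Rg" => homogeneousSubmodule (Fin N) K

theorem li_cover {r : ℕ} {v : Fin r → Fin N → K} (hv : LinearIndependent K v) 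
    {W : Submodule K (Fin N → K)} (hW : Module.finrank K W ≤ r) (h : ∀ k, v k ∈ W) 
    {x : Fin N → K} (hx : x ∈ W) : ∃ c : Fin r → K, ∑ k, c k • v k = x := by
  have : Submodule.span K (Set.range v) = W := by
    apply Submodule.eq_of_le_of_finrank_le
    · rw [Submodule.span_le]; rintro _ ⟨k, rfl⟩; exact h k
    · rw [finrank_span_eq_card hv]; simpa using hW
  rw [← this, Submodule.mem_span_range_iff_exists_fun] at hx
  exact hx

theorem li_two {s : ℕ} {p : Fin s → Fin N → K} (hd : ProjDistinct p) {a b : Fin s} (hab : a ≠ b) :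
    LinearIndependent K ![p a, p b] := by
  rw [LinearIndependent.pair_iff' (hd.1 a)]
  intro c h
  exact hd.2 b a hab.symm c h.symm

theorem li_three {s : ℕ} {p : Fin s → Fin N → K} (hd : ProjDistinct p) {a b c : Fin s} (hab : a ≠ b)
    (hc : p c ∉ Submodule.span K {p a, p b}) : LinearIndependent K ![p a, p b, p c] := by
  have h := linearIndependent_finSnoc (K := K) (v := ![p a, p b]) (x := p c)
  have e : (Fin.snoc ![p a, p b] (p c) : Fin 3 → Fin N → K) = ![p a, p b, p c] := by
    ext i j; fin_cases i <;> rfl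
  rw [e] at h
  rw [h]
  refine ⟨li_two hd hab, ?_⟩
  simpa [Matrix.range_cons, Matrix.range_empty, Set.pair_comm] using hc

theorem lower_line [Infinite K] {s : ℕ} (p : Fin s → Fin N → K) (hd : ProjDistinct p) (m t : ℕ) 
    (hm : 0 < m) (ht : m ≤ t + 1) (hsep : ∀ i, SepAt p m t i) (Q : Finset (Fin s)) (a b : Fin s)
    (ha : a ∈ Q) (hb : b ∈ Q) (hab : a ≠ b) (hQ : ∀ i ∈ Q, p i ∈ Submodule.span K {p a, p b}) :
    Q.card * m ≤ t + 1 := by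
  classical
  obtain ⟨χ, hχ⟩ := Module.exists_dual_forall_apply_ne_zero (K := K) p hd.1
  have h1 : ∀ i : Q, ∃ α β : K, α • p a + β • p b = p i := fun i => 
    Submodule.mem_span_pair.1 (hQ i i.2)
  choose α β hαβ using h1
  have hχ2 : ∀ i : Q, α i * χ (p a) + β i * χ (p b) = χ (p i) := by
    intro i; rw [← hαβ i]; simp
  let v : Fin 2 → Fin N → K := ![(χ (p a))⁻¹ • p a, (χ (p b))⁻¹ • p b]
  let q : Fin 2 → Polynomial K := ![1 - Polynomial.X, Polynomial.X]
  let τ : Q → K := fun i => β i * χ (p b) / χ (p i)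
  have hτ : ∀ i : Q, (1 - τ i) • v 0 + τ i • v 1 = (χ (p i))⁻¹ • p i := by
    intro i
    have e1 : 1 - τ i = α i * χ (p a) / χ (p i) := by
      simp only [τ]; rw [eq_div_iff (hχ i), sub_mul, div_mul_cancel₀ _ (hχ i), ← hχ2 i]; ring
    rw [e1, ← hαβ i]
    simp only [v, τ, Matrix.cons_val_zero, Matrix.cons_val_one, smul_smul, smul_add]
    have := hχ a; have := hχ b; have := hχ i
    rw [hαβ i]
    congr 2 <;> field_simp
  have hbspan : p b ∉ Submodule.span K {p a} := by
    rw [Submodule.mem_span_singleton]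
    rintro ⟨c, hc⟩
    exact hd.2 b a hab.symm c hc.symm
  obtain ⟨ℓ, hℓ, hℓ1, hℓ0⟩ := exists_form hbspan
  have hℓa := hℓ0 _ (Submodule.mem_span_singleton_self _)
  have := lower_curve p m t hm ht (fun i : Q => (i : Fin s)) Subtype.val_injective ⟨a, ha⟩ (hd.1 a) 
    (hsep a) τ (fun i => (χ (p i))⁻¹) ?_ (fun j => ∑ k, Polynomial.C (v k j) * q k) 1 ?_ ?_ 
    (inv_ne_zero (hχ a)) ℓ ⟨hℓ, hℓa⟩ ?_
  · simpa using this
  · intro i j hij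
    have e := hτ i
    rw [hij, hτ j] at e
    by_contra hne
    have hne' : (i : Fin s) ≠ j := fun h => hne (Subtype.ext h)
    refine hd.2 i j hne' (χ (p i) * (χ (p j))⁻¹) ?_
    rw [mul_smul, e, smul_smul, mul_inv_cancel₀ (hχ i), one_smul]
  · intro j
    apply Polynomial.natDegree_sum_le_of_forall_le
    intro k _
    refine (Polynomial.natDegree_C_mul_le _ _).trans ?_
    fin_cases k
    · exact (Polynomial.natDegree_sub_le _ _).trans (by simp)
    · exact Polynomial.natDegree_X_le
  · intro i
    rw [eval_comb]
    simpa [q] using hτ i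
  · rw [pull_comb _ _ hℓ]
    obtain ⟨φ, hφ⟩ := eval_lin hℓ
    rw [hφ] at hℓa hℓ1
    simp [v, q, hφ, hℓa, hℓ1, hχ]

theorem lower_conic_core [Infinite K] {s : ℕ} (p : Fin s → Fin N → K) (m t : ℕ) 
    (hm : 0 < m) (ht : m ≤ t + 1) (v : Fin 3 → Fin N → K) (hv : v 1 ∉ Submodule.span K {v 0, v 2})
    (r : Fin 3 → K) (hr : Function.Injective r) (hr0 : ∀ k, r k ≠ 0)
    {ι : Type} [Fintype ι] [DecidableEq ι] (e : ι → Fin s) (he : Function.Injective e) 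
    (σ : ι → Fin 5) (hσ : Function.Injective σ) (i₀ : ι) (hi₀ : σ i₀ = 0)
    (hP : p (e i₀) ≠ 0) (hsep : SepAt p m t (e i₀)) (μ : ι → K) (hμ : ∀ i, μ i ≠ 0)
    (h : ∀ i, ∑ k, (![![1,0,0],![0,1,0],![0,0,1],![1,1,1],r] : Fin 5 → Fin 3 → K) (σ i) k • v k
      = μ i • p (e i)) : Fintype.card ι * m ≤ 2 * t + 1 := by
  obtain ⟨τ, lam, q, hτ, hlam, hq, hev, hder⟩ := conic_exists r hr hr0
  obtain ⟨ℓ, hℓ, hℓ1, hℓ0⟩ := exists_form hv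
  have hℓv0 := hℓ0 (v 0) (Submodule.subset_span (by simp))
  have hℓv2 := hℓ0 (v 2) (Submodule.subset_span (by simp))
  have hv0 : v 0 = μ i₀ • p (e i₀) := by
    rw [← h i₀, hi₀]; simp [Fin.sum_univ_three]
  obtain ⟨φ, hφ⟩ := eval_lin hℓ
  have hℓp : eval (p (e i₀)) ℓ = 0 := by
    rw [hφ, hv0] at hℓv0
    rw [hφ]
    simpa [hμ] using hℓv0
  refine lower_curve p m t hm ht e he i₀ hP hsep (fun i => τ (σ i)) (fun i => lam (σ i) * μ i) 
    (hτ.comp hσ) (fun j => ∑ k, Polynomial.C (v k j) * q k) 2 ?_ ?_ 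
    (mul_ne_zero (hlam _) (hμ _)) ℓ ⟨hℓ, hℓp⟩ ?_
  · intro j
    apply Polynomial.natDegree_sum_le_of_forall_le
    intro k _
    exact (Polynomial.natDegree_C_mul_le _ _).trans (hq k)
  · intro i
    rw [eval_comb, mul_smul, ← h i, Finset.smul_sum]
    refine Finset.sum_congr rfl fun k _ => ?_
    rw [hev, mul_smul]
  · rw [pull_comb _ _ hℓ]
    simpa [Fin.sum_univ_three, hℓ1, hℓv0, hℓv2, hi₀] using hder

/-- no three of the points of `Q` are collinear -/
def NoTriple {s : ℕ} (p : Fin s → Fin N → K) (Q : Finset (Fin s)) : Prop :=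
  ∀ a ∈ Q, ∀ b ∈ Q, ∀ c ∈ Q, a ≠ b → a ≠ c → b ≠ c → p c ∉ Submodule.span K {p a, p b}

set_option maxHeartbeats 1000000 in
theorem lower_conic [Infinite K] {s : ℕ} (p : Fin s → Fin N → K) (hd : ProjDistinct p) (m t : ℕ) 
    (hm : 0 < m) (ht : m ≤ t + 1) (hsep : ∀ i, SepAt p m t i) (Q : Finset (Fin s)) 
    (hQ : NoTriple p Q) (W : Submodule K (Fin N → K)) (hW : Module.finrank K W ≤ 3) 
    (hQW : ∀ i ∈ Q, p i ∈ W) (hc : Q.card = 4 ∨ Q.card = 5) : Q.card * m ≤ 2 * t + 1 := by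
  classical
  have setup : ∀ {r : ℕ} (hr : 3 ≤ r) (f : Fin r → Fin s) (hf : Function.Injective f) 
      (hfQ : ∀ i, f i ∈ Q), ∀ i : Fin r, 3 ≤ (i : ℕ) → ∃ a : Fin 3 → K, (∀ k, a k ≠ 0) ∧ 
        p (f i) = a 0 • p (f ⟨0, by omega⟩) + a 1 • p (f ⟨1, by omega⟩) + a 2 • p (f ⟨2, by omega⟩) := by
    intro r hr f hf hfQ i hi
    have n01 : f ⟨0, by omega⟩ ≠ f ⟨1, by omega⟩ := hf.ne (by simp)
    have n02 : f ⟨0, by omega⟩ ≠ f ⟨2, by omega⟩ := hf.ne (by simp)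
    have n12 : f ⟨1, by omega⟩ ≠ f ⟨2, by omega⟩ := hf.ne (by simp)
    have n0 : f ⟨0, by omega⟩ ≠ f i := hf.ne (by rw [Ne, Fin.ext_iff]; simp; omega)
    have n1 : f ⟨1, by omega⟩ ≠ f i := hf.ne (by rw [Ne, Fin.ext_iff]; simp; omega)
    have n2 : f ⟨2, by omega⟩ ≠ f i := hf.ne (by rw [Ne, Fin.ext_iff]; simp; omega)
    obtain ⟨a, ha⟩ := li_cover (li_three hd n01 (hQ _ (hfQ _) _ (hfQ _) _ (hfQ _) n01 n02 n12)) hW 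
      (by intro k; fin_cases k <;> exact hQW _ (hfQ _)) (hQW _ (hfQ i))
    simp [Fin.sum_univ_three] at ha
    refine ⟨a, ?_, ha.symm⟩
    intro k hk
    fin_cases k
    · refine hQ _ (hfQ _) _ (hfQ _) _ (hfQ i) n12 n1 n2 ?_
      rw [Submodule.mem_span_pair]
      refine ⟨a 1, a 2, ?_⟩
      simp at hk
      rw [hk] at ha; simpa using ha
    · refine hQ _ (hfQ _) _ (hfQ _) _ (hfQ i) n02 n0 n2 ?_
      rw [Submodule.mem_span_pair]
      refine ⟨a 0, a 2, ?_⟩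
      simp at hk
      rw [hk] at ha; simpa using ha
    · refine hQ _ (hfQ _) _ (hfQ _) _ (hfQ i) n01 n0 n1 ?_
      rw [Submodule.mem_span_pair]
      refine ⟨a 0, a 1, ?_⟩
      simp at hk
      rw [hk] at ha; simpa using ha
  have spanv : ∀ (x y z : Fin N → K) (a b c : K), a ≠ 0 → b ≠ 0 → c ≠ 0 → 
      y ∉ Submodule.span K {x, z} → b • y ∉ Submodule.span K {a • x, c • z} := by
    intro x y z a b c ha hb hc hy h
    apply hy
    rw [Submodule.mem_span_pair] at h ⊢
    obtain ⟨u, w, h⟩ := h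
    refine ⟨b⁻¹ * u * a, b⁻¹ * w * c, ?_⟩
    have := congrArg (fun z => b⁻¹ • z) h
    simp only [smul_smul, inv_mul_cancel₀ hb, one_smul, smul_add] at this
    simpa only [mul_assoc] using this
  rcases hc with hc | hc
  · let f : Fin 4 → Fin s := fun i => ((Finset.equivFinOfCardEq hc).symm i : Q)
    have hf : Function.Injective f := Subtype.val_injective.comp (Equiv.injective _)
    have hfQ : ∀ i, f i ∈ Q := fun i => Subtype.property _
    obtain ⟨a, ha0, ha⟩ := setup (by norm_num) f hf hfQ 3 (by simp)
    obtain ⟨x, hx⟩ := Infinite.exists_notMem_finset ({0, 1} : Finset K)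
    obtain ⟨y, hy⟩ := Infinite.exists_notMem_finset ({0, 1, x} : Finset K)
    simp only [Finset.mem_insert, Finset.mem_singleton, not_or] at hx hy
    have hv := spanv (p (f 0)) (p (f 1)) (p (f 2)) (a 0) (a 1) (a 2) (ha0 0) (ha0 1) (ha0 2) 
      (hQ _ (hfQ _) _ (hfQ _) _ (hfQ _) (hf.ne (by decide)) (hf.ne (by decide)) (hf.ne (by decide)))
    have := lower_conic_core p m t hm ht ![a 0 • p (f 0), a 1 • p (f 1), a 2 • p (f 2)] hv ![1, x, y] 
      ?_ ?_ f hf (Fin.castLE (by norm_num)) (Fin.castLE_injective _) 0 rfl (hd.1 _) (hsep _) 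
      ![a 0, a 1, a 2, 1] ?_ ?_
    · rw [hc]; simpa using this
    · intro i j hij
      fin_cases i <;> fin_cases j <;> first
        | rfl
        | exact absurd hij hx.2 | exact absurd hij hy.2.1 | exact absurd hij hy.2.2
        | exact absurd hij.symm hx.2 | exact absurd hij.symm hy.2.1 | exact absurd hij.symm hy.2.2
    · intro i; fin_cases i <;> simp [hx, hy]
    · intro i; fin_cases i <;> simp [ha0]
    · intro i
      fin_cases i 
      · simp [Fin.sum_univ_three]
      · simp [Fin.sum_univ_three]
      · simp [Fin.sum_univ_three]
      · simp [Fin.sum_univ_three]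
        exact ha.symm
  · let f : Fin 5 → Fin s := fun i => ((Finset.equivFinOfCardEq hc).symm i : Q)
    have hf : Function.Injective f := Subtype.val_injective.comp (Equiv.injective _)
    have hfQ : ∀ i, f i ∈ Q := fun i => Subtype.property _
    obtain ⟨a, ha0, ha⟩ := setup (by norm_num) f hf hfQ 3 (by simp)
    obtain ⟨b, hb0, hb⟩ := setup (by norm_num) f hf hfQ 4 (by simp)
    have hv := spanv (p (f 0)) (p (f 1)) (p (f 2)) (a 0) (a 1) (a 2) (ha0 0) (ha0 1) (ha0 2) 
      (hQ _ (hfQ _) _ (hfQ _) _ (hfQ _) (hf.ne (by decide)) (hf.ne (by decide)) (hf.ne (by decide)))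
    have hne : ∀ k l i : Fin 5, k ≠ l → k ≠ i → l ≠ i → p (f i) ∉ Submodule.span K {p (f k), p (f l)} :=
      fun k l i h1 h2 h3 => hQ _ (hfQ _) _ (hfQ _) _ (hfQ _) (hf.ne h1) (hf.ne h2) (hf.ne h3)
    change p (f 3) = a 0 • p (f 0) + a 1 • p (f 1) + a 2 • p (f 2) at ha
    change p (f 4) = b 0 • p (f 0) + b 1 • p (f 1) + b 2 • p (f 2) at hb
    have r01 : b 0 / a 0 ≠ b 1 / a 1 := by
      intro h
      rw [div_eq_div_iff (ha0 0) (ha0 1)] at h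
      refine hne 3 2 4 (by decide) (by decide) (by decide) ?_
      rw [Submodule.mem_span_pair]
      refine ⟨b 0 / a 0, b 2 - b 0 / a 0 * a 2, ?_⟩
      have e : b 0 / a 0 * a 1 = b 1 := by field_simp [ha0 0]; rw [h, mul_comm]
      rw [hb, ha, ← e]
      have e2 : b 0 / a 0 * a 0 = b 0 := div_mul_cancel₀ _ (ha0 0)
      rw [smul_add, smul_add, smul_smul, smul_smul, smul_smul, e2, sub_smul]
      abel
    have r02 : b 0 / a 0 ≠ b 2 / a 2 := by
      intro h
      rw [div_eq_div_iff (ha0 0) (ha0 2)] at h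
      refine hne 3 1 4 (by decide) (by decide) (by decide) ?_
      rw [Submodule.mem_span_pair]
      refine ⟨b 0 / a 0, b 1 - b 0 / a 0 * a 1, ?_⟩
      have e : b 0 / a 0 * a 2 = b 2 := by field_simp [ha0 0]; rw [h, mul_comm]
      rw [hb, ha, ← e]
      have e2 : b 0 / a 0 * a 0 = b 0 := div_mul_cancel₀ _ (ha0 0)
      rw [smul_add, smul_add, smul_smul, smul_smul, smul_smul, e2, sub_smul]
      abel
    have r12 : b 1 / a 1 ≠ b 2 / a 2 := by
      intro h
      rw [div_eq_div_iff (ha0 1) (ha0 2)] at h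
      refine hne 3 0 4 (by decide) (by decide) (by decide) ?_
      rw [Submodule.mem_span_pair]
      refine ⟨b 1 / a 1, b 0 - b 1 / a 1 * a 0, ?_⟩
      have e : b 1 / a 1 * a 2 = b 2 := by field_simp [ha0 1]; rw [h, mul_comm]
      rw [hb, ha, ← e]
      have e2 : b 1 / a 1 * a 1 = b 1 := div_mul_cancel₀ _ (ha0 1)
      rw [smul_add, smul_add, smul_smul, smul_smul, smul_smul, e2, sub_smul]
      abel
    have := lower_conic_core p m t hm ht ![a 0 • p (f 0), a 1 • p (f 1), a 2 • p (f 2)] hv 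
      ![b 0 / a 0, b 1 / a 1, b 2 / a 2]
      ?_ ?_ f hf id Function.injective_id 0 rfl (hd.1 _) (hsep _) 
      ![a 0, a 1, a 2, 1, 1] ?_ ?_
    · rw [hc]; simpa using this
    · intro i j hij
      fin_cases i <;> fin_cases j <;> first
        | rfl
        | exact absurd hij r01 | exact absurd hij r02 | exact absurd hij r12
        | exact absurd hij.symm r01 | exact absurd hij.symm r02 | exact absurd hij.symm r12
    · intro i; fin_cases i <;> simp [ha0, hb0]
    · intro i; fin_cases i <;> simp [ha0]
    · intro i
      fin_cases i 
      · simp [Fin.sum_univ_three]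
      · simp [Fin.sum_univ_three]
      · simp [Fin.sum_univ_three]
      · simp [Fin.sum_univ_three]
        exact ha.symm
      · simp [Fin.sum_univ_three, smul_smul, ha0]
        exact hb.symm

end Lower2

section Lower3
variable {K : Type} [Field K] {N : ℕ}
local notation "Rg" => homogeneousSubmodule (Fin N) K

theorem eval_of_mem_pow {P : Fin N → K} {m : ℕ} (hm : 0 < m) {f : MvPolynomial (Fin N) K}
    (hf : f ∈ pointIdeal P ^ m) : eval P f = 0 := by
  have h1 : pointIdeal P ≤ RingHom.ker (eval P) := by
    rw [pointIdeal, Ideal.span_le]; intro g hg; exact hg.2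
  exact h1 (Ideal.pow_le_self hm.ne' hf)

theorem lower_dep {s : ℕ} (p : Fin s → Fin N → K) (hp : ∀ i, p i ≠ 0)
    (hsep : ∀ i, SepAt p 1 1 i) (Q : Finset (Fin s)) (W : Submodule K (Fin N → K)) 
    (hW : ∀ i ∈ Q, p i ∈ W) : Q.card ≤ Module.finrank K W := by
  have hli : LinearIndependent K (fun i : Q => p i) := by
    rw [Fintype.linearIndependent_iff]
    intro c hc i
    obtain ⟨h, hh, h1⟩ := exists_h (hp i)
    obtain ⟨g, hg, hg1, hg2⟩ := hsep i h hh
    have e1 := eval_of_mem_pow one_pos hg1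
    rw [map_sub, h1, sub_eq_zero] at e1
    obtain ⟨φ, hφ⟩ := eval_lin hg
    have e2 := congrArg φ hc
    rw [map_sum, map_zero, Finset.sum_eq_single i] at e2
    · rw [map_smul, ← hφ, ← e1] at e2
      simpa using e2
    · intro j _ hj
      rw [map_smul, ← hφ, eval_of_mem_pow one_pos (hg2 j (fun h => hj (Subtype.ext h))), smul_zero]
    · simp
  have h2 := finrank_span_eq_card hli
  have h3 : Submodule.span K (Set.range fun i : Q => p i) ≤ W := by
    rw [Submodule.span_le]; rintro _ ⟨i, rfl⟩; exact hW i i.2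
  have := Submodule.finrank_mono h3
  rw [h2] at this
  simpa using this

theorem lower_bound [Infinite K] {s : ℕ} (hs : s ≤ 5) (p : Fin s → Fin N → K) (hd : ProjDistinct p) 
    (m t : ℕ) (hm : 0 < m) (ht : m ≤ t + 1) (hsep : ∀ i, SepAt p m t i) (Q : Finset (Fin s)) 
    (j : ℕ) (hj : 1 ≤ j) (hQ : OnLinearSubspace p Q j) : Q.card * m ≤ j * t + 1 := by
  classical
  obtain ⟨W, hW, hQW⟩ := hQ
  have hcard : Q.card ≤ 5 := (Finset.card_le_univ Q).trans (by simpa using hs)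
  by_cases hone : Q.card ≤ 1
  · have : Q.card * m ≤ 1 * m := Nat.mul_le_mul_right _ hone
    have : 1 * t ≤ j * t := Nat.mul_le_mul_right _ hj
    omega
  obtain ⟨a, ha, b, hb, hab⟩ := Finset.one_lt_card.1 (not_le.1 hone)
  have H2 : 2 * m ≤ t + 1 := by
    have := lower_line p hd m t hm ht hsep {a, b} a b (by simp) (by simp) hab ?_
    · rwa [Finset.card_pair hab] at this
    · intro i hi
      simp only [Finset.mem_insert, Finset.mem_singleton] at hi
      rcases hi with rfl | rfl <;> exact Submodule.subset_span (by simp)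
  have H3 : ¬ NoTriple p Q → 3 * m ≤ t + 1 := by
    intro h
    unfold NoTriple at h
    push Not at h
    obtain ⟨a, ha, b, hb, c, hc, hab, hac, hbc, h⟩ := h
    have := lower_line p hd m t hm ht hsep {a, b, c} a b (by simp) (by simp) hab ?_
    · rwa [Finset.card_eq_three.2 ⟨a, b, c, hab, hac, hbc, rfl⟩] at this
    · intro i hi
      simp only [Finset.mem_insert, Finset.mem_singleton] at hi
      rcases hi with rfl | rfl | rfl
      · exact Submodule.subset_span (by simp)
      · exact Submodule.subset_span (by simp)
      · exact h
  rcases Nat.lt_or_ge j 2 with h1 | h1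
  · obtain rfl : j = 1 := by omega
    have := lower_line p hd m t hm ht hsep Q a b ha hb hab ?_
    · omega
    · intro i hi
      obtain ⟨c, hc⟩ := li_cover (li_two hd hab) hW 
        (by intro k; fin_cases k; exacts [hQW a ha, hQW b hb]) (hQW i hi)
      rw [Submodule.mem_span_pair]
      exact ⟨c 0, c 1, by simpa using hc⟩
  rcases Nat.lt_or_ge j 3 with h2 | h2
  · obtain rfl : j = 2 := by omega
    rcases Nat.lt_or_ge Q.card 4 with h4 | h4
    · have : Q.card * m ≤ 3 * m := Nat.mul_le_mul_right _ (by omega)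
      omega
    · by_cases hT : NoTriple p Q
      · exact lower_conic p hd m t hm ht hsep Q hT W hW hQW (by omega)
      · have := H3 hT
        have : Q.card * m ≤ 5 * m := Nat.mul_le_mul_right _ (by omega)
        omega
  have h3t : 3 * t ≤ j * t := Nat.mul_le_mul_right _ h2
  by_cases h5 : Q.card ≤ 4
  · have : Q.card * m ≤ 4 * m := Nat.mul_le_mul_right _ h5
    omega
  have h5 : Q.card = 5 := by omega
  rw [h5]
  by_cases hm2 : 2 ≤ m
  · omega
  obtain rfl : m = 1 := by omega
  by_cases ht2 : 2 ≤ t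
  · omega
  obtain rfl : t = 1 := by omega
  have := lower_dep p hd.1 hsep Q W hQW
  omega

end Lower3

section Upper
variable {K : Type} [Field K] {N : ℕ}
local notation "Rg" => homogeneousSubmodule (Fin N) K

theorem prod_mem_pow_count {R : Type*} [CommRing R] (I : Ideal R) {k : ℕ} (f : Fin k → R) 
    (P : Fin k → Prop) [DecidablePred P] (h : ∀ l, P l → f l ∈ I) : 
    ∏ l, f l ∈ I ^ (Finset.univ.filter P).card := by
  rw [← Finset.prod_filter_mul_prod_filter_not Finset.univ P]
  apply Ideal.mul_mem_right
  rw [← Finset.prod_const]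
  apply Ideal.prod_mem_prod
  intro l hl
  exact h l (Finset.mem_filter.1 hl).2

open scoped Pointwise in
theorem sep_of_cover {s : ℕ} (p : Fin s → Fin N → K) (m T : ℕ) (i : Fin s) (hm : 0 < m)
    (hP : p i ≠ 0) (ht : m ≤ T + 1) (B : Set (Finset (Fin s))) 
    (hS : ∀ ℓ ∈ linVan (p i), ℓ ∈ Submodule.span K 
      {ℓ | ℓ ∈ linVan (p i) ∧ ∃ b ∈ B, ∀ j ∈ b, eval (p j) ℓ = 0})
    (H : ∀ k < m, ∀ b : Fin k → Finset (Fin s), (∀ l, b l ∈ B) → 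
      ∃ A : Fin (T - k) → Finset (Fin s), (∀ l, p i ∉ Submodule.span K (p '' (A l : Set (Fin s)))) ∧
        ∀ j, j ≠ i → m ≤ (Finset.univ.filter fun l => j ∈ b l).card + 
          (Finset.univ.filter fun l => j ∈ A l).card) : SepAt p m T i := by
  refine sepAt_of_core p m T i hm hP ht _ 
    (le_antisymm (Submodule.span_le.2 fun ℓ hℓ => hℓ.1) hS) ?_
  intro k hk π hπ
  obtain ⟨f, rfl⟩ := Set.mem_pow.1 hπ
  choose b hbB hb using fun l => (f l).2.2
  obtain ⟨A, hA, hcount⟩ := H k hk b hbB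
  choose F hF hF1 hF0 using fun l => exists_form (hA l)
  refine ⟨∏ l, F l, ?_, ?_, ?_⟩
  · have := MvPolynomial.IsHomogeneous.prod Finset.univ F (fun _ => 1) (fun l _ => hF l)
    simpa using this
  · rw [map_prod]; simp [hF1]
  · intro j hj
    rw [List.prod_ofFn]
    have h1 := prod_mem_pow_count (pointIdeal (p j)) (fun l => ((f l : _) : MvPolynomial (Fin N) K)) 
      (fun l => j ∈ b l) (fun l hl => Ideal.subset_span ⟨(f l).2.1.1, hb l j hl⟩)
    have h2 := prod_mem_pow_count (pointIdeal (p j)) F (fun l => j ∈ A l) 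
      (fun l hl => Ideal.subset_span ⟨hF l, hF0 l _ (Submodule.subset_span ⟨j, hl, rfl⟩)⟩)
    have h3 := Ideal.mul_mem_mul h1 h2
    rw [← pow_add] at h3
    exact Ideal.pow_le_pow_right (hcount j hj) h3

theorem schedule {α : Type*} [DecidableEq α] (g : ℕ) (C : Finset α) (n : ℕ) : ∀ (d : α → ℕ) 
    (_ : ∀ i ∈ C, d i ≤ n) (_ : ∑ i ∈ C, d i ≤ g * n), 
    ∃ A : Fin n → Finset α, (∀ l, A l ⊆ C ∧ (A l).card ≤ g) ∧ 
      ∀ i ∈ C, d i ≤ (Finset.univ.filter fun l => i ∈ A l).card := by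
  induction n with
  | zero => 
    intro d h1 h2
    exact ⟨fun _ => ∅, fun l => l.elim0, fun i hi => (h1 i hi).trans (Nat.zero_le _)⟩
  | succ n ih =>
    intro d h1 h2
    let S := C.filter fun i => d i = n + 1
    let U := C.filter fun i => 0 < d i
    have hSU : S ⊆ U := by
      intro i hi
      simp only [S, U, Finset.mem_filter] at hi ⊢
      exact ⟨hi.1, by omega⟩
    have hSg : S.card ≤ g := by
      have e1 : ∑ i ∈ S, d i = S.card * (n + 1) := by
        have e0 : ∑ i ∈ S, d i = ∑ i ∈ S, (n + 1) := 
          Finset.sum_congr rfl (fun i hi => (Finset.mem_filter.1 hi).2)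
        rw [e0, Finset.sum_const, smul_eq_mul]
      have e2 : ∑ i ∈ S, d i ≤ ∑ i ∈ C, d i := Finset.sum_le_sum_of_subset (Finset.filter_subset _ _)
      exact Nat.le_of_mul_le_mul_right (e1 ▸ e2.trans h2) (Nat.succ_pos n)
    obtain ⟨A0, hSA, hAU, hA0⟩ := Finset.exists_subsuperset_card_eq hSU 
      (le_min hSg (Finset.card_le_card hSU)) (min_le_right g U.card)
    have hA0C : A0 ⊆ C := hAU.trans (Finset.filter_subset _ _)
    let d' : α → ℕ := fun i => d i - if i ∈ A0 then 1 else 0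
    have hd' : ∀ i ∈ C, d' i ≤ n := by
      intro i hi
      by_cases hiA : i ∈ A0
      · have := h1 i hi; simp only [d', hiA, if_true]; omega
      · have h3 : i ∉ S := fun h => hiA (hSA h)
        have h4 : d i ≠ n + 1 := fun h => h3 (Finset.mem_filter.2 ⟨hi, h⟩)
        have := h1 i hi; simp only [d', hiA, if_false]; omega
    have hdd : ∀ i ∈ C, d' i + (if i ∈ A0 then 1 else 0) = d i := by
      intro i hi
      by_cases hiA : i ∈ A0
      · have := (Finset.mem_filter.1 (hAU hiA)).2
        simp only [d', hiA, if_true]; omega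
      · simp [d', hiA]
    have hsum : ∑ i ∈ C, d' i ≤ g * n := by
      rcases le_total g U.card with hgu | hgu
      · rw [min_eq_left hgu] at hA0
        have e : ∑ i ∈ C, (d' i + (if i ∈ A0 then 1 else 0)) = ∑ i ∈ C, d i := 
          Finset.sum_congr rfl hdd
        rw [Finset.sum_add_distrib, Finset.sum_ite_mem, Finset.inter_eq_right.2 hA0C] at e
        simp only [Finset.sum_const, smul_eq_mul, mul_one, hA0] at e
        rw [mul_add, mul_one] at h2
        omega
      · rw [min_eq_right hgu] at hA0
        have hAU' : A0 = U := Finset.eq_of_subset_of_card_le hAU hA0.ge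
        have e : ∑ i ∈ C, d' i = ∑ i ∈ U, d' i := by
          symm
          apply Finset.sum_subset (Finset.filter_subset _ _)
          intro i hi hiU
          have : d i = 0 := by
            by_contra h
            exact hiU (Finset.mem_filter.2 ⟨hi, Nat.pos_of_ne_zero h⟩)
          simp [d', this]
        rw [e]
        calc ∑ i ∈ U, d' i ≤ ∑ i ∈ U, n := 
              Finset.sum_le_sum fun i hi => hd' i (Finset.filter_subset _ _ hi)
          _ = U.card * n := by simp
          _ ≤ g * n := Nat.mul_le_mul_right _ hgu
    obtain ⟨A, hA1, hA2⟩ := ih d' hd' hsum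
    refine ⟨Fin.cons A0 A, ?_, ?_⟩
    · intro l
      refine Fin.cases ?_ (fun l => ?_) l
      · exact ⟨hA0C, by simp only [Fin.cons_zero]; rw [hA0]; exact min_le_left _ _⟩
      · simpa using hA1 l
    · intro i hi
      rw [Fin.card_filter_univ_succ]
      have := hA2 i hi
      have := hdd i hi
      simp only [Fin.cons_zero, Fin.cons_succ]
      split_ifs at * <;> omega

end Upper

section Upper2
variable {K : Type} [Field K] {N : ℕ}
local notation "Rg" => homogeneousSubmodule (Fin N) K

theorem span_tags {s : ℕ} (p : Fin s → Fin N → K) (i : Fin s) (D : Finset (Fin s)) (hD : D.Nonempty)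
    (h : ∀ b ∈ D, p b ∉ Submodule.span K (insert (p i) (p '' (D.erase b : Set (Fin s))))) :
    ∀ ℓ ∈ linVan (p i), ℓ ∈ Submodule.span K {ℓ | ℓ ∈ linVan (p i) ∧ 
      ∃ b ∈ {b' : Finset (Fin s) | ∃ b ∈ D, b' = D.erase b}, ∀ j ∈ b, eval (p j) ℓ = 0} := by
  have h1 : ∀ b ∈ D, ∃ f : MvPolynomial (Fin N) K, f ∈ linVan (p i) ∧ eval (p b) f = 1 ∧ 
      ∀ j ∈ D, j ≠ b → eval (p j) f = 0 := by
    intro b hb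
    obtain ⟨f, hf, hf1, hf0⟩ := exists_form (h b hb)
    refine ⟨f, ⟨hf, hf0 _ (Submodule.subset_span (by simp))⟩, hf1, fun j hj hjb => hf0 _ ?_⟩
    exact Submodule.subset_span (Set.mem_insert_of_mem _ ⟨j, by simp [hj, hjb], rfl⟩)
  choose! φ hφ hφ1 hφ0 using h1
  intro ℓ hℓ
  have e : ℓ = (ℓ - ∑ b ∈ D, eval (p b) ℓ • φ b) + ∑ b ∈ D, eval (p b) ℓ • φ b := by abel
  have hmem : ∑ b ∈ D, eval (p b) ℓ • φ b ∈ linVan (p i) := 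
    Submodule.sum_mem _ fun b hb => Submodule.smul_mem _ _ (hφ b hb)
  rw [e]
  apply Submodule.add_mem
  · apply Submodule.subset_span
    obtain ⟨b, hb⟩ := hD
    refine ⟨Submodule.sub_mem _ hℓ hmem, D.erase b, ⟨b, hb, rfl⟩, ?_⟩
    intro j hj
    have hjD := Finset.mem_of_mem_erase hj
    rw [map_sub, map_sum, Finset.sum_eq_single j]
    · rw [smul_eval, hφ1 j hjD]; ring
    · intro c hc hcj
      rw [smul_eval, hφ0 c hc j hjD hcj.symm, mul_zero]
    · intro h; exact absurd hjD h
  · refine Submodule.sum_mem _ fun b hb => Submodule.smul_mem _ _ (Submodule.subset_span ?_)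
    refine ⟨hφ b hb, D.erase b, ⟨b, hb, rfl⟩, ?_⟩
    intro j hj
    exact hφ0 b hb j (Finset.mem_of_mem_erase hj) (Finset.ne_of_mem_erase hj)

theorem card_le_one_sub {α : Type*} [DecidableEq α] [Nonempty α] {S : Finset α} (h : S.card ≤ 1) : 
    ∃ e, S ⊆ {e} := Finset.card_le_one_iff_subset_singleton.1 h

theorem upper_dep {s : ℕ} (hs : s ≤ 5) (p : Fin s → Fin N → K) (hd : ProjDistinct p) 
    (m T : ℕ) (hm : 0 < m) 
    (HT : ∀ j, 1 ≤ j → ∀ Q : Finset (Fin s), OnLinearSubspace p Q j → Q.card * m ≤ j * T + 1)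
    (i : Fin s) (h2 : 2 * m ≤ T + 1) (g : ℕ) (hg : 1 ≤ g) (C : Finset (Fin s)) (hiC : i ∉ C)
    (hC : C.card = g + 1) (hCi : p i ∈ Submodule.span K (p '' (C : Set (Fin s))))
    (hmin : ∀ A : Finset (Fin s), i ∉ A → A.card ≤ g → 
      p i ∉ Submodule.span K (p '' (A : Set (Fin s)))) : SepAt p m T i := by
  classical
  have : Nonempty (Fin s) := ⟨i⟩
  set W := Submodule.span K (p '' (C : Set (Fin s))) with hWdef
  obtain ⟨c₀, hc₀⟩ : C.Nonempty := by rw [← Finset.card_pos]; omega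
  let D := C.erase c₀
  have hDc : D.card = g := by simp [D, Finset.card_erase_of_mem hc₀, hC]
  have hDne : D.Nonempty := by rw [← Finset.card_pos]; omega
  let C' := (Finset.univ.erase i).filter fun x => p x ∈ W
  let E := (Finset.univ.erase i).filter fun x => p x ∉ W
  have hiC' : i ∉ C' := by simp [C']
  have hpC : ∀ x ∈ C, p x ∈ W := fun x hx => Submodule.subset_span ⟨x, hx, rfl⟩
  have hCC' : C ⊆ C' := by
    intro x hx
    simp only [C', Finset.mem_filter, Finset.mem_erase, Finset.mem_univ, and_true]
    exact ⟨fun h => hiC (h ▸ hx), hpC x hx⟩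
  have hDC' : D ⊆ C' := (Finset.erase_subset _ _).trans hCC'
  have hcard : C'.card + E.card ≤ 4 := by
    have := Finset.card_filter_add_card_filter_not (s := Finset.univ.erase i) (fun x => p x ∈ W)
    simp only [C', E]
    rw [this, Finset.card_erase_of_mem (Finset.mem_univ _)]
    simp; omega
  have hC'card : g + 1 ≤ C'.card := hC ▸ Finset.card_le_card hCC'
  -- numerical bound
  have hnum : (C'.card + 1) * m ≤ g * T + 1 := by
    have := HT g hg (insert i C') ⟨W, ?_, ?_⟩
    · rwa [Finset.card_insert_of_notMem hiC'] at this
    · have h3 := finrank_span_finset_le_card (R := K) (C.image p)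
      rw [Finset.coe_image] at h3
      exact h3.trans (Finset.card_image_le.trans hC.le)
    · intro x hx
      rcases Finset.mem_insert.1 hx with rfl | hx
      · exact hCi
      · exact (Finset.mem_filter.1 hx).2
  -- matching
  obtain ⟨ψ, hψ1, hψ2, hψ3⟩ : ∃ ψ : Fin s → Fin s, (∀ e ∈ E, ψ e ∈ C') ∧ 
      (∀ e ∈ E, ∀ b ∈ D, ψ e ∉ D.erase b) ∧ 
      ∀ A ⊆ C', A.card ≤ g → (E.filter fun e => ψ e ∈ A).card ≤ 1 := by
    rcases Nat.lt_or_ge g 2 with hg2 | hg2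
    · obtain rfl : g = 1 := by omega
      have hle : Fintype.card E ≤ Fintype.card C' := by simp; omega
      obtain ⟨f⟩ := Function.Embedding.nonempty_of_card_le hle
      refine ⟨fun e => if h : e ∈ E then f ⟨e, h⟩ else e, ?_, ?_, ?_⟩
      · intro e he; simp [he]
      · intro e he b hb
        have : D.erase b = ∅ := by
          rw [← Finset.card_eq_zero, Finset.card_erase_of_mem hb, hDc]
        simp [this]
      · intro A hA hA1
        refine le_trans ?_ hA1
        refine Finset.card_le_card_of_injOn _ (fun e he => (Finset.mem_filter.1 he).2) ?_
        intro x hx y hy hxy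
        have hx' := (Finset.mem_filter.1 hx).1
        have hy' := (Finset.mem_filter.1 hy).1
        simp only [hx', hy', dif_pos] at hxy
        have := f.injective (Subtype.ext hxy)
        exact congrArg Subtype.val this
    · refine ⟨fun _ => c₀, fun e _ => hCC' hc₀, ?_, ?_⟩
      · intro e _ b _ h
        have := Finset.mem_of_mem_erase h
        simp [D] at this
      · intro A _ _
        exact (Finset.card_filter_le _ _).trans (by omega)
  refine sep_of_cover p m T i hm (hd.1 i) (by omega) _ (span_tags p i D hDne ?_) ?_
  · intro b hb hmem
    have hbC : b ∈ C := Finset.mem_of_mem_erase hb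
    by_cases hb2 : p b ∈ Submodule.span K (p '' (D.erase b : Set (Fin s)))
    · refine hmin (C.erase b) (fun h => hiC (Finset.mem_of_mem_erase h)) 
        (by rw [Finset.card_erase_of_mem hbC]; omega) ?_
      refine (Submodule.span_le.2 ?_ : W ≤ _) hCi
      rintro _ ⟨x, hx, rfl⟩
      by_cases hxb : x = b
      · subst hxb
        refine Submodule.span_mono (Set.image_mono ?_) hb2
        intro y hy
        simp [D] at hy ⊢
        tauto
      · exact Submodule.subset_span ⟨x, by simpa [hxb] using hx, rfl⟩
    · have h3 := mem_span_insert_exchange hmem hb2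
      refine hmin D (fun h => hiC (Finset.mem_of_mem_erase h)) hDc.le ?_
      refine Submodule.span_mono ?_ h3
      rintro _ (rfl | ⟨x, hx, rfl⟩)
      · exact ⟨b, hb, rfl⟩
      · exact ⟨x, Finset.mem_of_mem_erase hx, rfl⟩
  · intro k hk b hb
    let cnt : Fin s → ℕ := fun j => (Finset.univ.filter fun l => j ∈ b l).card
    have hcnt : ∀ j, cnt j ≤ k := fun j => (Finset.card_le_univ _).trans (by simp)
    have hbD : ∀ l, b l ⊆ D ∧ (b l).card = g - 1 := by
      intro l
      obtain ⟨x, hx, h⟩ := hb l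
      rw [h]
      exact ⟨Finset.erase_subset _ _, by rw [Finset.card_erase_of_mem hx, hDc]⟩
    have hcntsum : ∑ j ∈ C', cnt j = (g - 1) * k := by
      have h4 : ∀ j, cnt j = ∑ l : Fin k, if j ∈ b l then 1 else 0 := by
        intro j; simp [cnt]
      simp only [h4]
      rw [Finset.sum_comm]
      have h5 : ∀ l : Fin k, (∑ j ∈ C', if j ∈ b l then 1 else 0) = g - 1 := by
        intro l
        rw [Finset.sum_ite_mem, Finset.inter_eq_right.2 ((hbD l).1.trans hDC')]
        simp [(hbD l).2]
      simp [h5, mul_comm]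
    have hsum : ∑ j ∈ C', (m - cnt j) ≤ g * (T - k) := by
      have h6 : ∑ j ∈ C', (m - cnt j) + ∑ j ∈ C', cnt j = C'.card * m := by
        rw [← Finset.sum_add_distrib, Finset.sum_congr rfl (g := fun _ => m)]
        · simp
        · intro j _; have := hcnt j; omega
      rw [hcntsum] at h6
      obtain ⟨g', rfl⟩ : ∃ g', g = g' + 1 := ⟨g - 1, by omega⟩
      obtain ⟨u, rfl⟩ : ∃ u, T = u + k := ⟨T - k, by omega⟩
      rw [Nat.add_sub_cancel] at h6 ⊢
      nlinarith
    obtain ⟨A, hA1, hA2⟩ := schedule g C' (T - k) (fun j => m - cnt j) (by intro j _; omega) hsum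
    refine ⟨fun l => A l ∪ E.filter fun e => ψ e ∈ A l, ?_, ?_⟩
    · intro l hmem
      dsimp only at hmem
      have hiA : i ∉ A l := fun h => hiC' ((hA1 l).1 h)
      have hno := hmin (A l) hiA (hA1 l).2
      rcases card_le_one_sub (hψ3 (A l) (hA1 l).1 (hA1 l).2) with ⟨e, he⟩
      rcases Finset.subset_singleton_iff.1 he with h0 | h0
      · rw [h0, Finset.union_empty] at hmem
        exact hno hmem
      · rw [h0, Finset.coe_union, Finset.coe_singleton, Set.union_singleton, Set.image_insert_eq] at hmem
        have h3 := mem_span_insert_exchange hmem hno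
        have heE : e ∈ E := by
          have : e ∈ E.filter fun e => ψ e ∈ A l := by rw [h0]; simp
          exact (Finset.mem_filter.1 this).1
        refine (Finset.mem_filter.1 heE).2 ((Submodule.span_le.2 ?_ : _ ≤ W) h3)
        rintro _ (rfl | ⟨x, hx, rfl⟩)
        · exact hCi
        · exact (Finset.mem_filter.1 ((hA1 l).1 hx)).2
    · intro j hj
      dsimp only
      by_cases hjW : p j ∈ W
      · have hjC : j ∈ C' := by simp [C', hj, hjW]
        have h7 := hA2 j hjC
        have h8 : (Finset.univ.filter fun l => j ∈ A l).card ≤ (Finset.univ.filter fun l => 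
            j ∈ A l ∪ E.filter fun e => ψ e ∈ A l).card := by
          apply Finset.card_le_card
          intro l hl
          simp only [Finset.mem_filter, Finset.mem_univ, true_and, Finset.mem_union] at hl ⊢
          exact Or.inl hl
        change m ≤ cnt j + _
        omega
      · have hjE : j ∈ E := by simp [E, hj, hjW]
        have h7 := hA2 (ψ j) (hψ1 j hjE)
        have h8 : (Finset.univ.filter fun l => ψ j ∈ A l).card ≤ (Finset.univ.filter fun l => 
            j ∈ A l ∪ E.filter fun e => ψ e ∈ A l).card := by
          apply Finset.card_le_card
          intro l hl
          simp only [Finset.mem_filter, Finset.mem_univ, true_and, Finset.mem_union] at hl ⊢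
          exact Or.inr ⟨hjE, hl⟩
        have h9 : cnt (ψ j) = 0 := by
          simp only [cnt, Finset.card_eq_zero, Finset.filter_eq_empty_iff]
          intro l _ h
          obtain ⟨x, hx, hbx⟩ := hb l
          rw [hbx] at h
          exact hψ2 j hjE x hx h
        omega

theorem upper_bound {s : ℕ} (hs : s ≤ 5) (p : Fin s → Fin N → K) (hd : ProjDistinct p) 
    (m T : ℕ) (hm : 0 < m) 
    (HT : ∀ j, 1 ≤ j → ∀ Q : Finset (Fin s), OnLinearSubspace p Q j → Q.card * m ≤ j * T + 1)
    (i : Fin s) : m ≤ T + 1 ∧ SepAt p m T i := by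
  classical
  have : Nonempty (Fin s) := ⟨i⟩
  have hline : ∀ a b : Fin s, OnLinearSubspace p {a, b} 1 := by
    intro a b
    have h3 := finrank_range_le_card (R := K) (b := ![p a, p b])
    rw [Set.finrank, Fintype.card_fin] at h3
    refine ⟨Submodule.span K (Set.range ![p a, p b]), h3, ?_⟩
    intro x hx
    simp only [Finset.mem_insert, Finset.mem_singleton] at hx
    rcases hx with rfl | rfl
    · exact Submodule.subset_span ⟨0, rfl⟩
    · exact Submodule.subset_span ⟨1, rfl⟩
  have h1 : m ≤ T + 1 := by
    have := HT 1 le_rfl _ (hline i i)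
    simpa using this
  refine ⟨h1, ?_⟩
  have h2 : ∀ j, j ≠ i → 2 * m ≤ T + 1 := by
    intro j hj
    have := HT 1 le_rfl _ (hline i j)
    rw [Finset.card_pair hj.symm] at this
    omega
  let O : Finset (Fin s) := Finset.univ.erase i
  by_cases hO : p i ∈ Submodule.span K (p '' (O : Set (Fin s)))
  · have hex : ∃ r, ∃ A : Finset (Fin s), i ∉ A ∧ A.card = r ∧ 
        p i ∈ Submodule.span K (p '' (A : Set (Fin s))) := ⟨_, O, by simp [O], rfl, hO⟩
    obtain ⟨C, hiC, hCr, hCi⟩ := Nat.find_spec hex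
    have hmin := fun r => @Nat.find_min _ _ hex r
    generalize Nat.find hex = r at *
    have hr2 : 2 ≤ r := by
      by_contra hlt
      rcases card_le_one_sub (show C.card ≤ 1 by omega) with ⟨e, he⟩
      rcases Finset.subset_singleton_iff.1 he with h0 | h0
      · rw [h0] at hCi; simp at hCi; exact hd.1 i hCi
      · rw [h0] at hCi hiC
        simp only [Finset.coe_singleton, Set.image_singleton, Submodule.mem_span_singleton] at hCi
        obtain ⟨c, hc⟩ := hCi
        exact hd.2 i e (by simpa using hiC) c hc.symm
    obtain ⟨x, hx⟩ : C.Nonempty := by rw [← Finset.card_pos]; omega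
    obtain ⟨g, rfl⟩ : ∃ g, r = g + 1 := ⟨r - 1, by omega⟩
    refine upper_dep hs p hd m T hm HT i (h2 x fun h => hiC (h ▸ hx)) g (by omega) C hiC hCr hCi ?_
    intro A hiA hA h
    exact hmin A.card (by omega) ⟨A, hiA, rfl, h⟩
  · refine sep_of_cover p m T i hm (hd.1 i) h1 {∅} ?_ ?_
    · intro ℓ hℓ
      exact Submodule.subset_span ⟨hℓ, ∅, rfl, by simp⟩
    · intro k hk b hb
      refine ⟨fun _ => O, fun _ => hO, ?_⟩
      intro j hj
      have := h2 j hj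
      have : j ∈ O := by simp [O, hj]
      simp [this]; omega

end Upper2

section Final
variable {K : Type} [Field K]

theorem segre_iff {n s : ℕ} (hn : 0 < n) (p : Fin s → Fin (n + 1) → K) (m : ℕ) (hm : 0 < m) (T : ℕ) :
    segreBound n p (fun _ => m) ≤ T ↔ 
      ∀ j, 1 ≤ j → ∀ Q : Finset (Fin s), OnLinearSubspace p Q j → Q.card * m ≤ j * T + 1 := by
  classical
  have arith : ∀ j q : ℕ, 1 ≤ j → 1 ≤ q → ((q * m + j - 2) / j ≤ T ↔ q * m ≤ j * T + 1) := by
    intro j q hj hq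
    have : 1 ≤ q * m := Nat.mul_pos hq hm
    rw [← Nat.lt_succ_iff, Nat.div_lt_iff_lt_mul hj, Nat.succ_eq_add_one, mul_comm (T + 1), mul_add, 
      mul_one]
    omega
  have key : segreBound n p (fun _ => m) ≤ T ↔ ∀ j, 1 ≤ j → j ≤ n → ∀ Q : Finset (Fin s), 
      Q.Nonempty → OnLinearSubspace p Q j → Q.card * m ≤ j * T + 1 := by
    unfold segreBound
    rw [Finset.sup_le_iff]
    constructor
    · intro h j h1 h2 Q hQ hQj
      have h3 := (Finset.sup_le_iff.1 (h j (Finset.mem_Icc.2 ⟨h1, h2⟩))) Q (by simp)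
      rw [if_pos ⟨hQ, hQj⟩, Finset.sum_const, smul_eq_mul, arith j _ h1 (Finset.card_pos.2 hQ)] at h3
      exact h3
    · intro h j hj
      obtain ⟨h1, h2⟩ := Finset.mem_Icc.1 hj
      rw [Finset.sup_le_iff]
      intro Q _
      split_ifs with hc
      · rw [Finset.sum_const, smul_eq_mul, arith j _ h1 (Finset.card_pos.2 hc.1)]
        exact h j h1 h2 Q hc.1 hc.2
      · exact Nat.zero_le _
  rw [key]
  constructor
  · intro h j hj Q hQ
    rcases Q.eq_empty_or_nonempty with rfl | hne
    · simp
    by_cases hjn : j ≤ n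
    · exact h j hj hjn Q hne hQ
    · have h3 := h n hn le_rfl Q hne ⟨⊤, by simp, by simp⟩
      have : n * T ≤ j * T := Nat.mul_le_mul_right _ (by omega)
      omega
  · intro h j hj _ Q _ hQ
    exact h j hj Q hQ

theorem hilb_zero_pos {n s : ℕ} (hs : 0 < s) (p : Fin s → Fin (n + 1) → K) (m : ℕ) (hm : 0 < m) : 
    hilbFn K (fatIdeal p (fun _ => m)) 0 = 1 := by
  have h0 : homogeneousSubmodule (Fin (n+1)) K 0 ⊓ 
      (fatIdeal p (fun _ => m)).restrictScalars K = ⊥ := by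
    rw [eq_bot_iff]
    intro f hf
    obtain ⟨h1, h2⟩ := Submodule.mem_inf.1 hf
    have h3 : f ∈ pointIdeal (p ⟨0, hs⟩) ^ m := (Submodule.mem_iInf _).1 h2 ⟨0, hs⟩
    have h4 := eval_of_mem_pow hm h3
    rw [homogeneousSubmodule_zero] at h1
    obtain ⟨c, rfl⟩ := Submodule.mem_one.1 h1
    simp only [algebraMap_eq, eval_C] at h4
    simp [h4]
  rw [hilbFn, gradedDim, h0, finrank_bot, finrank_Rg]
  simp

end Final

/-- Lemma 2.9 (Thien–Sinh): the Segre bound is attained for at most five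
equimultiple fat points in `ℙⁿ`. -/
theorem stmt15 {K : Type} [Field K] [IsAlgClosed K] {n s : ℕ} (hs : s ≤ 5)
    (p : Fin s → Fin (n + 1) → K) (hdist : ProjDistinct p)
    (m : ℕ) (hm : 0 < m) :
    regFat K p (fun _ => m) = segreBound n p (fun _ => m) := by
  classical
  have hinf : Infinite K := IsAlgClosed.instInfinite
  rcases Nat.eq_zero_or_pos s with rfl | hs0
  · have e1 : segreBound n p (fun _ => m) = 0 := by
      rw [← Nat.le_zero]
      unfold segreBound
      refine Finset.sup_le fun j _ => Finset.sup_le fun Q _ => ?_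
      rw [if_neg]
      rintro ⟨⟨i, _⟩, _⟩
      exact i.elim0
    rw [e1, ← Nat.le_zero]
    refine Nat.sInf_le ?_
    have e2 : fatIdeal p (fun _ => m) = ⊤ := iInf_of_empty _
    change hilbFn K _ 0 = _
    rw [hilbFn, gradedDim, e2, Submodule.restrictScalars_top, inf_top_eq]
    simp [fatMult]
  rcases Nat.eq_zero_or_pos n with rfl | hn
  · have e1 : segreBound 0 p (fun _ => m) = 0 := by
      unfold segreBound; simp
    rw [e1, ← Nat.le_zero]
    refine Nat.sInf_le ?_
    have hs1 : s = 1 := by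
      by_contra hne
      have h1 : 1 < s := by omega
      have hz : p ⟨0, hs0⟩ 0 ≠ 0 := by
        intro h
        apply hdist.1 ⟨0, hs0⟩
        ext j
        rw [show j = 0 from Fin.ext (by omega), h]; rfl
      refine hdist.2 ⟨1, h1⟩ ⟨0, hs0⟩ (by simp) (p ⟨1, h1⟩ 0 / p ⟨0, hs0⟩ 0) ?_
      ext j
      rw [show j = 0 from Fin.ext (by omega), Pi.smul_apply, smul_eq_mul, div_mul_cancel₀ _ hz]
    subst hs1
    change hilbFn K _ 0 = _
    rw [hilb_zero_pos hs0 p m hm]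
    simp [fatMult]
  · have hmem : ∀ t, t ∈ {t | hilbFn K (fatIdeal p (fun _ => m)) t = fatMult n (fun _ : Fin s => m)} ↔
        m ≤ t + 1 ∧ ∀ i, SepAt p m t i := fun t => hilb_iff_s15 hn hs0 p hdist.1 m t hm
    have hup : segreBound n p (fun _ => m) ∈ 
        {t | hilbFn K (fatIdeal p (fun _ => m)) t = fatMult n (fun _ : Fin s => m)} := by
      rw [hmem]
      have h := fun i => upper_bound hs p hdist m _ hm ((segre_iff hn p m hm _).1 le_rfl) i
      exact ⟨(h ⟨0, hs0⟩).1, fun i => (h i).2⟩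
    apply le_antisymm
    · exact Nat.sInf_le hup
    · have h2 := Nat.sInf_mem (s := {t | hilbFn K (fatIdeal p (fun _ => m)) t = 
        fatMult n (fun _ : Fin s => m)}) ⟨_, hup⟩
      have h3 := (hmem _).1 h2
      rw [segre_iff hn p m hm]
      intro j hj Q hQ
      exact lower_bound hs p hdist m _ hm h3.1 h3.2 Q j hj hQ
end
end

section
/- Let n ≥ 3, 2 ≤ s ≤ n+2, and let P_1,...,P_s be distinct points in linearly general position in P^n. If m_1 ≥ m_2 ≥ ... ≥ m_s > 0 are integers with m_1 ≥ 2 and I = ℘_1^{m_1} ∩ ... ∩ ℘_s^{m_s}, then reg(R/I) = m_1 + m_2 - 1. -/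
open MvPolynomial

noncomputable section

namespace FatPts

open Module (Basis finrank)

set_option linter.unusedSectionVars false
set_option linter.unusedSimpArgs false

variable {K : Type} [Field K] {N : ℕ} {ι : Type} [Fintype ι]

/-- Change of coordinates. -/
def G (b : Basis ι K (Fin N → K)) : MvPolynomial (Fin N) K →ₐ[K] MvPolynomial ι K :=
  aeval (fun j => ∑ k, C (b k j) * X k)

/-- Dual linear forms. -/
def L (b : Basis ι K (Fin N → K)) (k : ι) : MvPolynomial (Fin N) K :=
  ∑ j, C (b.repr (Pi.single j 1) k) * X j

lemma L_hom (b : Basis ι K (Fin N → K)) (k : ι) : (L b k).IsHomogeneous 1 :=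
  IsHomogeneous.sum _ _ _ fun _ _ => isHomogeneous_C_mul_X _ _

lemma eval_L (b : Basis ι K (Fin N → K)) (k : ι) (v : Fin N → K) :
    eval v (L b k) = b.repr v k := by
  conv_rhs => rw [pi_eq_sum_univ' v]
  simp [L, map_sum, Finsupp.finsetSum_apply, mul_comm]

lemma G_hom (b : Basis ι K (Fin N → K)) {f : MvPolynomial (Fin N) K} {t : ℕ}
    (hf : f.IsHomogeneous t) : (G b f).IsHomogeneous t := by
  have := hf.aeval (S := K) (fun j => ∑ k, C (b k j) * X k) (n := 1)
    (fun j => IsHomogeneous.sum _ _ _ fun _ _ => isHomogeneous_C_mul_X _ _)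
  simpa [G] using this

lemma eval_G (b : Basis ι K (Fin N → K)) (x : ι → K) (f : MvPolynomial (Fin N) K) :
    eval x (G b f) = eval (∑ k, x k • b k) f := by
  have : (aeval x).comp (G b) = aeval (R := K) (∑ k, x k • b k) := by
    apply MvPolynomial.algHom_ext
    intro j
    simp [G, mul_comm]
  have h := DFunLike.congr_fun this f
  simpa [coe_aeval_eq_eval] using h

lemma eval_single_G [DecidableEq ι] (b : Basis ι K (Fin N → K)) (k : ι)
    (f : MvPolynomial (Fin N) K) :
    eval (Pi.single k 1) (G b f) = eval (b k) f := by
  rw [eval_G]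
  congr 2
  simp [Pi.single_apply]

lemma G_L (b : Basis ι K (Fin N → K)) (k : ι) : G b (L b k) = X k := by
  classical
  have h1 : ∀ l : ι, ∑ j, b.repr (Pi.single j 1) k * b l j = if l = k then 1 else 0 := by
    intro l
    have := eval_L b k (b l)
    simp only [L, map_sum, map_mul, eval_C, eval_X, Basis.repr_self] at this
    rw [this, Finsupp.single_apply]
  simp only [L, G, map_sum, map_mul, aeval_X, algHom_C, algebraMap_eq, Finset.mul_sum]
  rw [Finset.sum_comm]
  simp only [← mul_assoc, ← Finset.sum_mul, ← C_mul, ← map_sum, h1]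
  simp

lemma inv_G (b : Basis ι K (Fin N → K)) (f : MvPolynomial (Fin N) K) :
    aeval (L b) (G b f) = f := by
  have : (aeval (L b)).comp (G b) = AlgHom.id K _ := by
    apply MvPolynomial.algHom_ext
    intro j
    have h1 : ∀ l : Fin N, ∑ k, b k j * b.repr (Pi.single l 1) k = if l = j then 1 else 0 := by
      intro l
      have := congrFun (b.sum_repr (Pi.single l 1)) j
      simp only [Finset.sum_apply, Pi.smul_apply, smul_eq_mul] at this
      simp only [mul_comm (b _ j), this, Pi.single_apply, eq_comm]
    simp only [G, L, AlgHom.comp_apply, aeval_X, map_sum, map_mul, algHom_C, algebraMap_eq,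
      Finset.mul_sum]
    rw [Finset.sum_comm]
    simp only [← mul_assoc, ← Finset.sum_mul, ← C_mul, ← map_sum, h1]
    simp
  exact DFunLike.congr_fun this f

/-- Order filtration at the coordinate point `k`. -/
def A (K : Type) [Field K] {ι : Type} (k : ι) (m : ℕ) : Ideal (MvPolynomial ι K) where
  carrier := {f | ∀ α ∈ f.support, m + α k ≤ α.degree}
  zero_mem' := by simp
  add_mem' := by
    classical
    intro f g hf hg α hα
    rcases Finset.mem_union.1 (support_add hα) with h | h
    · exact hf α h
    · exact hg α h
  smul_mem' := by
    classical
    intro c f hf α hα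
    obtain ⟨β, hβ, γ, hγ, rfl⟩ := Finset.mem_add.1 (support_mul c f hα)
    have h1 := hf γ hγ
    have h2 := β.le_degree k
    simp only [map_add, Finsupp.add_apply]
    omega

lemma A_mul {k : ι} {m m' : ℕ} : A K k m * A K k m' ≤ A K k (m + m') := by
  classical
  rw [Ideal.mul_le]
  intro f hf g hg α hα
  obtain ⟨β, hβ, γ, hγ, rfl⟩ := Finset.mem_add.1 (support_mul f g hα)
  have h1 := hf β hβ
  have h2 := hg γ hγ
  simp only [map_add, Finsupp.add_apply]
  omega

lemma coeff_single_eq_eval [DecidableEq ι] {f : MvPolynomial ι K} {t : ℕ} (hf : f.IsHomogeneous t)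
    (k : ι) : coeff (Finsupp.single k t) f = eval (Pi.single k 1) f := by
  rw [eval_eq']
  by_cases h : Finsupp.single k t ∈ f.support
  · rw [Finset.sum_eq_single_of_mem _ h]
    · rw [Finset.prod_eq_one, mul_one]
      intro i _
      by_cases hi : i = k
      · subst hi; simp
      · simp [Finsupp.single_apply, Ne.symm hi]
    · intro α hα hne
      have hd : α.degree = t := by
        by_contra hne
        exact mem_support_iff.1 hα (hf.coeff_eq_zero hne)
      have : ∃ i, i ≠ k ∧ α i ≠ 0 := by
        by_contra hcon
        push Not at hcon
        apply hne
        have : α = Finsupp.single k (α k) := by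
          ext i
          by_cases hi : i = k
          · subst hi; simp
          · simp [Finsupp.single_apply, Ne.symm hi, hcon i hi]
        rw [this, Finsupp.degree_single] at hd
        rw [this, hd]
      obtain ⟨i, hi, hi0⟩ := this
      rw [Finset.prod_eq_zero (Finset.mem_univ i), mul_zero]
      simp [Pi.single_apply, hi, hi0]
  · rw [notMem_support_iff.1 h, Finset.sum_eq_zero]
    intro α hα
    have hd : α.degree = t := by
      by_contra hne
      exact mem_support_iff.1 hα (hf.coeff_eq_zero hne)
    have : ∃ i, i ≠ k ∧ α i ≠ 0 := by
      by_contra hcon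
      push Not at hcon
      apply h
      have : α = Finsupp.single k (α k) := by
        ext i
        by_cases hi : i = k
        · subst hi; simp
        · simp [Finsupp.single_apply, Ne.symm hi, hcon i hi]
      rw [this, Finsupp.degree_single] at hd
      rwa [this, hd] at hα
    obtain ⟨i, hi, hi0⟩ := this
    rw [Finset.prod_eq_zero (Finset.mem_univ i), mul_zero]
    simp [Pi.single_apply, hi, hi0]

lemma pointIdeal_le (b : Basis ι K (Fin N → K)) (k : ι) :
    pointIdeal (b k) ≤ (A K k 1).comap (G b) := by
  classical
  rw [pointIdeal, Ideal.span_le]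
  rintro f ⟨hf, h0⟩ α hα
  have hG := G_hom b hf
  have hd : α.degree = 1 := by
    by_contra hne
    exact mem_support_iff.1 hα (hG.coeff_eq_zero hne)
  have hk : α k = 0 := by
    by_contra hne
    have h1 := α.le_degree k
    have : Finsupp.single k 1 ≤ α := by
      rw [Finsupp.single_le_iff]; omega
    obtain ⟨β, rfl⟩ := exists_add_of_le this
    have hβ : β.degree = 0 := by
      simp only [map_add, Finsupp.degree_single] at hd; omega
    rw [Finsupp.degree_eq_zero_iff] at hβ
    subst hβ
    rw [add_zero] at hα
    rw [mem_support_iff, coeff_single_eq_eval hG, eval_single_G] at hα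
    exact hα h0
  omega

lemma pow_le_A (k : ι) (m : ℕ) : A K k 1 ^ m ≤ A K k m := by
  induction m with
  | zero => intro f _ α _; simpa using α.le_degree k
  | succ m ih =>
    rw [pow_succ]
    exact (Ideal.mul_mono_left ih).trans A_mul

lemma G_mem_A (b : Basis ι K (Fin N → K)) (k : ι) (m : ℕ) {f : MvPolynomial (Fin N) K}
    (hf : f ∈ pointIdeal (b k) ^ m) : G b f ∈ A K k m := by
  have h1 := Ideal.pow_right_mono (pointIdeal_le b k) m hf
  have h2 := Ideal.le_comap_pow (G b) (K := A K k 1) m h1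
  exact pow_le_A k m h2

lemma L_mem (b : Basis ι K (Fin N → K)) (k : ι) {v : Fin N → K} (h : b.repr v k = 0) :
    L b k ∈ pointIdeal v :=
  Ideal.subset_span ⟨L_hom b k, by rw [eval_L, h]⟩

lemma mem_iff (b : Basis ι K (Fin N → K)) (k : ι) (m : ℕ) (f : MvPolynomial (Fin N) K) :
    f ∈ pointIdeal (b k) ^ m ↔ G b f ∈ A K k m := by
  classical
  refine ⟨G_mem_A b k m, fun h => ?_⟩
  rw [← inv_G b f, (G b f).as_sum, map_sum]
  refine Ideal.sum_mem _ fun α hα => ?_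
  have hαdeg := h α hα
  rw [aeval_monomial, Finsupp.prod_fintype _ _ (by simp)]
  refine Ideal.mul_mem_left _ _ ?_
  rw [← Finset.mul_prod_erase _ _ (Finset.mem_univ k)]
  refine Ideal.mul_mem_left _ _ ?_
  have h1 : ∏ l ∈ Finset.univ.erase k, L b l ^ α l ∈
      ∏ l ∈ Finset.univ.erase k, pointIdeal (b k) ^ α l := by
    refine Ideal.prod_mem_prod fun l hl => Ideal.pow_mem_pow (L_mem b l ?_) _
    simp [Finsupp.single_apply, (Finset.ne_of_mem_erase hl).symm]
  rw [Finset.prod_pow_eq_pow_sum] at h1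
  refine Ideal.pow_le_pow_right ?_ h1
  rw [Finsupp.degree_eq_sum, ← Finset.add_sum_erase _ _ (Finset.mem_univ k)] at hαdeg
  omega

/-- Index set for jets. -/
abbrev D {ι : Type} (k : ι) (m : ℕ) : Type := {α : ι →₀ ℕ // α k = 0 ∧ α.degree < m}

instance (k : ι) (m : ℕ) : Finite (D k m) :=
  Set.Finite.subset (Finsupp.finite_of_degree_lt m) (fun _ h => h.2)

lemma card_D {n : ℕ} (hn : 1 ≤ n) (hι : Fintype.card ι = n + 1) (k : ι) (m : ℕ) :
    Nat.card (D k m) = (m + n - 1).choose n := by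
  classical
  rcases m with _ | m
  · have : IsEmpty (D k 0) := ⟨fun x => by simpa using x.2.2⟩
    rw [Nat.card_of_isEmpty, Nat.choose_eq_zero_of_lt (by omega)]
  · let e : D k (m + 1) ≃ (Finset.finsuppAntidiag (Finset.univ : Finset ι) m) :=
      { toFun := fun x => ⟨x.1 + Finsupp.single k (m - x.1.degree), by
          have := x.2.2
          rw [Finset.mem_finsuppAntidiag]
          refine ⟨?_, Finset.subset_univ _⟩
          have h2 := Finsupp.degree_eq_sum (x.1 + Finsupp.single k (m - x.1.degree))
          rw [map_add, Finsupp.degree_single] at h2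
          rw [← h2]; omega⟩
        invFun := fun y => ⟨y.1.erase k, by simp, by
          have := (Finset.mem_finsuppAntidiag.1 y.2).1
          rw [← Finsupp.degree_eq_sum] at this
          have h2 := congrArg Finsupp.degree (Finsupp.erase_add_single k y.1)
          rw [map_add] at h2
          omega⟩
        left_inv := by
          rintro ⟨x, hx, hd⟩
          ext i
          by_cases hi : i = k
          · subst hi; simp [hx]
          · simp [Finsupp.erase_ne hi, hi]
        right_inv := by
          rintro ⟨y, hy⟩
          have := (Finset.mem_finsuppAntidiag.1 hy).1
          rw [← Finsupp.degree_eq_sum] at this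
          have h2 := congrArg Finsupp.degree (Finsupp.erase_add_single k y)
          rw [map_add, Finsupp.degree_single] at h2
          have h3 : m - (y.erase k).degree = y k := by omega
          apply Subtype.ext
          simp only [h3]
          exact Finsupp.erase_add_single k y }
    rw [Nat.card_congr e, Nat.card_eq_fintype_card, Fintype.card_coe,
      Finset.card_finsuppAntidiag_nat_eq_choose, Finset.card_univ, hι]
    have : n + 1 + m - 1 = m + n := by omega
    rw [this]
    have : m + 1 + n - 1 = m + n := by omega
    rw [this, Nat.choose_symm_add]

section family

variable {s : ℕ} {I : Fin s → Type} [∀ i, Fintype (I i)]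
  (b : ∀ i, Basis (I i) K (Fin N → K)) (κ : ∀ i, I i) (m : Fin s → ℕ) (t : ℕ)

/-- The jet map. -/
def phi : MvPolynomial (Fin N) K →ₗ[K] ((Σ i, D (κ i) (m i)) → K) :=
  LinearMap.pi fun x =>
    (lcoeff K (x.2.1 + Finsupp.single (κ x.1) (t - x.2.1.degree))).comp (G (b x.1)).toLinearMap

lemma phi_apply (f : MvPolynomial (Fin N) K) (x : Σ i, D (κ i) (m i)) :
    phi b κ m t f x = coeff (x.2.1 + Finsupp.single (κ x.1) (t - x.2.1.degree)) (G (b x.1) f) := rfl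

lemma point_iff {f : MvPolynomial (Fin N) K} (hf : f.IsHomogeneous t) (i : Fin s) :
    f ∈ pointIdeal (b i (κ i)) ^ m i ↔ ∀ α : D (κ i) (m i), phi b κ m t f ⟨i, α⟩ = 0 := by
  classical
  rw [mem_iff]
  constructor
  · rintro h ⟨α, h0, hd⟩
    rw [phi_apply]
    by_contra hne
    have := h _ (mem_support_iff.2 hne)
    rw [map_add, Finsupp.degree_single, Finsupp.add_apply, Finsupp.single_eq_same] at this
    simp only [h0] at this
    omega
  · intro h α hα
    have hd : α.degree = t := by
      by_contra hne
      exact mem_support_iff.1 hα ((G_hom (b i) hf).coeff_eq_zero hne)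
    by_contra hlt
    have h2 := congrArg Finsupp.degree (Finsupp.erase_add_single (κ i) α)
    rw [map_add, Finsupp.degree_single] at h2
    have := h ⟨α.erase (κ i), by simp, by omega⟩
    rw [phi_apply] at this
    simp only at this
    have h3 : t - (α.erase (κ i)).degree = α (κ i) := by omega
    rw [h3, Finsupp.erase_add_single] at this
    exact mem_support_iff.1 hα this

lemma fat_iff {f : MvPolynomial (Fin N) K} (hf : f.IsHomogeneous t) :
    f ∈ fatIdeal (fun i => b i (κ i)) m ↔ phi b κ m t f = 0 := by
  simp only [fatIdeal, Ideal.mem_iInf, point_iff b κ m t hf]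
  constructor
  · intro h
    ext ⟨i, α⟩
    exact h i α
  · intro h i α
    rw [h]; rfl

instance (t : ℕ) : FiniteDimensional K (homogeneousSubmodule (Fin N) K t) :=
  Module.Finite.iff_fg.2 (homogeneousSubmodule_fg _ _ t)

/-- The jet map on forms. -/
def phiH : homogeneousSubmodule (Fin N) K t →ₗ[K] ((Σ i, D (κ i) (m i)) → K) :=
  (phi b κ m t).domRestrict _

lemma hilb_eq : hilbFn K (fatIdeal (fun i => b i (κ i)) m) t
    = finrank K (LinearMap.range (phiH b κ m t)) := by
  have h := (phiH b κ m t).finrank_range_add_finrank_ker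
  have h2 : gradedDim K (fatIdeal (fun i => b i (κ i)) m) t
      = finrank K (LinearMap.ker (phiH b κ m t)) := by
    rw [gradedDim]
    rw [← Submodule.finrank_map_subtype_eq]
    have hsub : homogeneousSubmodule (Fin N) K t ⊓
        (fatIdeal (fun i => b i (κ i)) m).restrictScalars K =
        (LinearMap.ker (phiH b κ m t)).map (homogeneousSubmodule (Fin N) K t).subtype := by
      ext f
      simp only [Submodule.mem_inf, Submodule.mem_map, LinearMap.mem_ker]
      constructor
      · rintro ⟨h1, h2⟩
        exact ⟨⟨f, h1⟩, (fat_iff b κ m t h1).1 h2, rfl⟩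
      · rintro ⟨⟨g, h1⟩, h2, rfl⟩
        exact ⟨h1, (fat_iff b κ m t h1).2 h2⟩
    rw [hsub]
  rw [hilbFn, h2]
  omega

lemma hilb_iff {n : ℕ} (hn : 1 ≤ n) (hι : ∀ i, Fintype.card (I i) = n + 1) :
    hilbFn K (fatIdeal (fun i => b i (κ i)) m) t = fatMult n m ↔
      Function.Surjective (phiH b κ m t) := by
  have he : fatMult n m = finrank K ((Σ i, D (κ i) (m i)) → K) := by
    have : ∀ i, Fintype (D (κ i) (m i)) := fun i => Fintype.ofFinite _
    rw [Module.finrank_fintype_fun_eq_card, Fintype.card_sigma, fatMult]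
    refine Finset.sum_congr rfl fun i _ => ?_
    rw [← Nat.card_eq_fintype_card, card_D hn (hι i)]
  rw [hilb_eq, he, ← LinearMap.range_eq_top]
  constructor
  · exact Submodule.eq_top_of_finrank_eq
  · intro h; rw [h, finrank_top]

/-- product of dual forms -/
def mon (i : Fin s) (d : I i →₀ ℕ) : MvPolynomial (Fin N) K := ∏ k, L (b i) k ^ d k

lemma mon_hom (i : Fin s) (d : I i →₀ ℕ) : (mon b i d).IsHomogeneous d.degree := by
  rw [Finsupp.degree_eq_sum]
  refine IsHomogeneous.prod _ _ _ fun k _ => ?_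
  simpa using (L_hom (b i) k).pow (d k)

lemma G_mon (i : Fin s) (d : I i →₀ ℕ) : G (b i) (mon b i d) = monomial d 1 := by
  rw [mon, map_prod, monomial_eq, Finsupp.prod_fintype _ _ (by simp)]
  simp [G_L]

lemma surj (h : ∀ i (d : D (κ i) (m i)), d.1.degree ≤ t ∧
      ∃ H : MvPolynomial (Fin N) K, H.IsHomogeneous (t - d.1.degree) ∧
      eval (b i (κ i)) H ≠ 0 ∧ ∀ j, j ≠ i → mon b i d.1 * H ∈ pointIdeal (b j (κ j)) ^ m j) :
    Function.Surjective (phiH b κ m t) := by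
  classical
  rw [← LinearMap.range_eq_top]
  have : ∀ i, Fintype (D (κ i) (m i)) := fun i => Fintype.ofFinite _
  have key : ∀ (r : ℕ) (i : Fin s) (d : D (κ i) (m i)), m i - d.1.degree ≤ r →
      (Pi.single ⟨i, d⟩ 1 : (Σ i, D (κ i) (m i)) → K) ∈ LinearMap.range (phiH b κ m t) := by
    intro r
    induction r with
    | zero =>
      intro i d hd
      have := d.2.2
      omega
    | succ r ih =>
      intro i d hd
      obtain ⟨hdt, H, hH, hev, hv⟩ := h i d
      have hF : (mon b i d.1 * H).IsHomogeneous t := by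
        have := (mon_hom b i d.1).mul hH
        rwa [Nat.add_sub_cancel' hdt] at this
      set F := mon b i d.1 * H with hFdef
      have hother : ∀ j (e : D (κ j) (m j)), j ≠ i → phi b κ m t F ⟨j, e⟩ = 0 :=
        fun j e hj => (point_iff b κ m t hF j).1 (hv j hj) e
      have hval : ∀ e : D (κ i) (m i), e.1.degree ≤ d.1.degree →
          phi b κ m t F ⟨i, e⟩ = if e = d then eval (b i (κ i)) H else 0 := by
        intro e he
        rw [phi_apply, hFdef, map_mul, G_mon, coeff_monomial_mul', one_mul]
        simp only
        by_cases hed : e = d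
        · subst hed
          rw [if_pos (by simp), if_pos rfl, add_tsub_cancel_left,
            coeff_single_eq_eval (G_hom (b i) hH), eval_single_G]
        · rw [if_neg hed, if_neg]
          intro hle
          apply hed
          have hle2 : d.1 ≤ e.1 := by
            intro k
            by_cases hk : k = κ i
            · subst hk; rw [d.2.1]; exact Nat.zero_le _
            · have := hle k
              simpa [Finsupp.single_apply, Ne.symm hk] using this
          obtain ⟨c, hc⟩ := exists_add_of_le hle2
          have hc0 : c.degree = 0 := by
            rw [hc, map_add] at he; omega
          rw [Finsupp.degree_eq_zero_iff] at hc0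
          apply Subtype.ext
          rw [hc, hc0, add_zero]
      have hsum : phi b κ m t F = ∑ x, phi b κ m t F x • (Pi.single x 1 : (Σ i, D (κ i) (m i)) → K) := by
        exact pi_eq_sum_univ' _
      have hmem : phi b κ m t F ∈ LinearMap.range (phiH b κ m t) := ⟨⟨F, hF⟩, rfl⟩
      rw [← Finset.add_sum_erase _ _ (Finset.mem_univ (⟨i, d⟩ : Σ i, D (κ i) (m i))),
        hval d le_rfl, if_pos rfl] at hsum
      have hrest : ∑ x ∈ Finset.univ.erase (⟨i, d⟩ : Σ i, D (κ i) (m i)),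
          phi b κ m t F x • (Pi.single x 1 : (Σ i, D (κ i) (m i)) → K) ∈
            LinearMap.range (phiH b κ m t) := by
        refine Submodule.sum_mem _ ?_
        rintro ⟨j, e⟩ hx
        by_cases hj : j = i
        · subst hj
          by_cases hle : e.1.degree ≤ d.1.degree
          · rw [hval e hle, if_neg, zero_smul]
            · exact Submodule.zero_mem _
            · rintro rfl
              simp at hx
          · exact Submodule.smul_mem _ _ (ih j e (by omega))
        · rw [hother j e hj, zero_smul]; exact Submodule.zero_mem _
      have h5 := Submodule.sub_mem _ hmem hrest
      rw [← eq_sub_of_add_eq hsum.symm] at h5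
      exact (Submodule.smul_mem_iff _ hev).1 h5
  rw [eq_top_iff]
  intro x _
  rw [pi_eq_sum_univ' x]
  exact Submodule.sum_mem _ fun y _ => Submodule.smul_mem _ _ (key _ y.1 y.2 le_rfl)

lemma lower {i j : Fin s} (hij : i ≠ j) (k : I i) (hk : k ≠ κ i) (hbk : b i k = b j (κ j))
    (hi : 0 < m i)
    (hsurj : Function.Surjective (phiH b κ m t)) : m i + m j - 1 ≤ t := by
  classical
  have hdD : (Finsupp.single k (m i - 1) : I i →₀ ℕ) (κ i) = 0 ∧
      (Finsupp.single k (m i - 1) : I i →₀ ℕ).degree < m i := by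
    constructor
    · simp [Finsupp.single_apply, hk]
    · rw [Finsupp.degree_single]; omega
  obtain ⟨⟨F, hF⟩, hFs⟩ := hsurj (Pi.single ⟨i, ⟨_, hdD⟩⟩ 1)
  change phi b κ m t F = _ at hFs
  have hF' : F.IsHomogeneous t := hF
  have h1 : F ∈ pointIdeal (b j (κ j)) ^ m j := by
    rw [point_iff b κ m t hF']
    intro α
    rw [hFs, Pi.single_apply, if_neg]
    intro h
    exact hij (congrArg Sigma.fst h).symm
  rw [← hbk] at h1
  have h2 := G_mem_A (b i) k (m j) h1
  have h3 : phi b κ m t F ⟨i, ⟨_, hdD⟩⟩ = 1 := by rw [hFs, Pi.single_eq_same]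
  rw [phi_apply] at h3
  simp only [Finsupp.degree_single] at h3
  have hne : coeff (Finsupp.single k (m i - 1) + Finsupp.single (κ i) (t - (m i - 1))) (G (b i) F)
      ≠ 0 := by rw [h3]; exact one_ne_zero
  have h4 := h2 _ (mem_support_iff.2 hne)
  have h5 : (Finsupp.single k (m i - 1) + Finsupp.single (κ i) (t - (m i - 1)) : I i →₀ ℕ).degree
      = t := by
    by_contra hcon
    exact hne ((G_hom (b i) hF').coeff_eq_zero hcon)
  rw [map_add, Finsupp.degree_single, Finsupp.degree_single] at h5 h4
  simp [Finsupp.single_apply, Ne.symm hk] at h4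
  omega

lemma reg_eq {n : ℕ} (hn : 1 ≤ n) (hι : ∀ i, Fintype.card (I i) = n + 1)
    {i j : Fin s} (hij : i ≠ j) (k : I i) (hk : k ≠ κ i) (hbk : b i k = b j (κ j))
    (hi : 0 < m i) (ht : t = m i + m j - 1)
    (h : ∀ i (d : D (κ i) (m i)), d.1.degree ≤ t ∧
      ∃ H : MvPolynomial (Fin N) K, H.IsHomogeneous (t - d.1.degree) ∧
      eval (b i (κ i)) H ≠ 0 ∧ ∀ j, j ≠ i → mon b i d.1 * H ∈ pointIdeal (b j (κ j)) ^ m j) :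
    regIndex K (fatIdeal (fun i => b i (κ i)) m) (fatMult n m) = t := by
  apply le_antisymm
  · exact Nat.sInf_le ((hilb_iff b κ m t hn hι).2 (surj b κ m t h))
  · refine le_csInf ⟨t, (hilb_iff b κ m t hn hι).2 (surj b κ m t h)⟩ ?_
    intro t' ht'
    rw [ht]
    exact lower b κ m t' hij k hk hbk hi ((hilb_iff b κ m t' hn hι).1 ht')

end family

lemma comb {n s : ℕ} (hn : 3 ≤ n) (hs : s = n + 2) (m c : Fin s → ℕ) (i Q : Fin s) (hiQ : i ≠ Q)
    (a u m1 B : ℕ) (hc : ∑ r, c r = a) (hu : u + a + 1 = m1 + B) (ha : a + 1 ≤ m1) (h2 : 2 ≤ m1)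
    (hQ : m Q ≤ u) (hQ1 : m Q ≤ m1) (hB : ∀ r, r ≠ i → r ≠ Q → m r ≤ B) :
    ∃ g : Fin s → ℕ, g i = 0 ∧ ∑ r, g r = u ∧ g Q + m Q ≤ u ∧
      ∀ r, r ≠ i → r ≠ Q → m r + g r ≤ u + (a - c r) := by
  classical
  have hBu : B ≤ u := by omega
  let f : Fin s → ℕ := fun r => if r = i then 0 else if r = Q then u - m Q else
    u - (m r - (a - c r))
  have hfQ : f Q = u - m Q := by simp [f, hiQ.symm]
  have hfi : f i = 0 := by simp [f]
  have hfr : ∀ r, r ≠ i → r ≠ Q → f r = u - (m r - (a - c r)) := by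
    intro r h1 h2; simp [f, h1, h2]
  have hca : ∀ r, c r ≤ a := fun r => by
    rw [← hc]; exact Finset.single_le_sum (fun _ _ => Nat.zero_le _) (Finset.mem_univ r)
  have hsum : u ≤ ∑ r, f r := by
    by_cases hex : ∃ r, r ≠ i ∧ r ≠ Q ∧ m r ≤ a - c r
    · obtain ⟨r, h1, h3, h4⟩ := hex
      have : f r = u := by rw [hfr r h1 h3]; omega
      rw [← this]
      exact Finset.single_le_sum (fun _ _ => Nat.zero_le _) (Finset.mem_univ r)
    · push Not at hex
      set S := (Finset.univ.erase i).erase Q with hS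
      have hQm : Q ∈ Finset.univ.erase i := Finset.mem_erase.2 ⟨hiQ.symm, Finset.mem_univ _⟩
      have hcard : S.card = n := by
        rw [hS, Finset.card_erase_of_mem hQm, Finset.card_erase_of_mem (Finset.mem_univ _)]
        simp [hs]
      have e1 : ∑ r, f r = f Q + ∑ r ∈ S, f r := by
        rw [hS, Finset.add_sum_erase _ _ hQm, ← Finset.add_sum_erase _ _ (Finset.mem_univ i), hfi,
          zero_add]
      have e2 : ∑ r ∈ S, c r ≤ a := by
        rw [← hc]; exact Finset.sum_le_sum_of_subset (Finset.subset_univ _)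
      have e3 : ∑ r ∈ S, (u + a) ≤ ∑ r ∈ S, (f r + c r + B) := by
        refine Finset.sum_le_sum fun r hr => ?_
        have hrQ := Finset.ne_of_mem_erase hr
        have hri := Finset.ne_of_mem_erase (Finset.mem_of_mem_erase hr)
        have h4 := hex r hri hrQ
        have h5 := hB r hri hrQ
        have h6 := hca r
        rw [hfr r hri hrQ]
        omega
      have e4 : u + a = B + (m1 - 1) := by omega
      rw [e4, Finset.sum_add_distrib, Finset.sum_add_distrib, Finset.sum_add_distrib,
        Finset.sum_const, Finset.sum_const, hcard, smul_eq_mul, smul_eq_mul] at e3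
      have e5 : 3 * (m1 - 1) ≤ n * (m1 - 1) := Nat.mul_le_mul_right _ hn
      rw [e1, hfQ]
      omega
  obtain ⟨g, hg, hgd⟩ := Finsupp.exists_le_degree_eq (Finsupp.equivFunOnFinite.symm f) u (by
    rw [Finsupp.degree_eq_sum]; simpa using hsum)
  have hgf : ∀ r, g r ≤ f r := fun r => by simpa using hg r
  refine ⟨g, ?_, ?_, ?_, ?_⟩
  · have := hgf i; omega
  · rw [← hgd, Finsupp.degree_eq_sum]
  · have := hgf Q; omega
  · intro r h1 h3
    have h4 := hgf r
    rw [hfr r h1 h3] at h4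
    have h5 := hB r h1 h3
    omega

lemma indep {n s : ℕ} (p : Fin s → Fin (n + 1) → K)
    (hgen : ∀ j : ℕ, j < n → ∀ T : Finset (Fin s), T.card = j + 2 → ¬ OnLinearSubspace p T j)
    (T : Finset (Fin s)) (h2 : 2 ≤ T.card) (hT : T.card ≤ n + 1) :
    LinearIndependent K (fun x : T => p x) := by
  rw [linearIndependent_iff_card_le_finrank_span]
  by_contra hcon
  rw [Fintype.card_coe] at hcon
  refine hgen (T.card - 2) (by omega) T (by omega)
    ⟨Submodule.span K (Set.range fun x : T => p x), ?_, ?_⟩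
  · unfold Set.finrank at hcon
    omega
  · intro i hi
    exact Submodule.subset_span ⟨⟨i, hi⟩, rfl⟩

lemma case1 {n s : ℕ} (hn : 3 ≤ n) (z0 z1 : Fin s) (hz0 : (z0 : ℕ) = 0) (hz1 : (z1 : ℕ) = 1)
    (p : Fin s → Fin (n + 1) → K) (hp : LinearIndependent K p)
    (m : Fin s → ℕ) (hmono : ∀ i j : Fin s, i ≤ j → m j ≤ m i)
    (hpos : ∀ i, 0 < m i) :
    regFat K p m = m z0 + m z1 - 1 := by
  classical
  let B := Basis.extend hp.linearIndepOn_id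
  have hfin : Finite (hp.linearIndepOn_id.extend (Set.subset_univ (Set.range p))) :=
    Module.Finite.finite_basis B
  have : Fintype (hp.linearIndepOn_id.extend (Set.subset_univ (Set.range p))) :=
    Fintype.ofFinite _
  let κ : Fin s → hp.linearIndepOn_id.extend (Set.subset_univ (Set.range p)) := fun i =>
    ⟨p i, hp.linearIndepOn_id.subset_extend _ ⟨i, rfl⟩⟩
  have hB : ∀ i, B (κ i) = p i := fun i => Basis.extend_apply_self _ _
  have hκ : ∀ i j, κ i = κ j → i = j := fun i j h => hp.injective (congrArg Subtype.val h)
  have hcard : Fintype.card (hp.linearIndepOn_id.extend (Set.subset_univ (Set.range p))) = n + 1 := by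
    rw [← Module.finrank_eq_card_basis B]; simp
  have h01 : z0 ≠ z1 := fun h => by rw [h] at hz0; omega
  have hpair : ∀ i j : Fin s, i ≠ j → m i + m j ≤ m z0 + m z1 := by
    intro i j hij
    have hi0 := hmono z0 i (Fin.le_def.2 (by omega))
    have hj0 := hmono z0 j (Fin.le_def.2 (by omega))
    by_cases h : (i : ℕ) = 0
    · have : (j : ℕ) ≠ 0 := fun h' => hij (Fin.ext (by omega))
      have := hmono z1 j (Fin.le_def.2 (by omega))
      omega
    · have := hmono z1 i (Fin.le_def.2 (by omega))
      omega
  have key := reg_eq (fun _ : Fin s => B) κ m (m z0 + m z1 - 1)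
    (n := n) (by omega) (fun _ => hcard) h01 (κ z1) (fun h => h01 (hκ _ _ h).symm) rfl
    (hpos _) rfl ?_
  · rw [regFat]
    simp only [hB] at key
    exact key
  · intro i d
    have hd := d.2.2
    have hi0 := hmono z0 i (Fin.le_def.2 (by omega))
    have hp1 := hpos z1
    refine ⟨by omega, L B (κ i) ^ (m z0 + m z1 - 1 - d.1.degree), ?_, ?_, ?_⟩
    · simpa using (L_hom B (κ i)).pow _
    · rw [map_pow, eval_L]; simp
    · intro j hj
      rw [mem_iff B (κ j), map_mul, map_pow, G_L,
        G_mon (fun _ : Fin s => B) i d.1, X_pow_eq_monomial, monomial_mul]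
      intro α hα
      have : α = _ := Finset.mem_singleton.1 (support_monomial_subset hα)
      have h1 := d.1.le_degree (κ j)
      have h2 := hpair i j hj.symm
      have h3 : κ i ≠ κ j := fun h => hj (hκ _ _ h).symm
      rw [this, map_add, Finsupp.degree_single, Finsupp.add_apply, Finsupp.single_apply, if_neg h3]
      omega

lemma case2 {n s : ℕ} (hn : 3 ≤ n) (z0 z1 : Fin s) (hz0 : (z0 : ℕ) = 0) (hz1 : (z1 : ℕ) = 1) (hs : s = n + 2)
    (p : Fin s → Fin (n + 1) → K)
    (hgen : ∀ j : ℕ, j < n → ∀ T : Finset (Fin s), T.card = j + 2 →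
      ¬ OnLinearSubspace p T j)
    (m : Fin s → ℕ) (hmono : ∀ i j : Fin s, i ≤ j → m j ≤ m i)
    (hpos : ∀ i, 0 < m i) (hm1 : 2 ≤ m z0) :
    regFat K p m = m z0 + m z1 - 1 := by
  classical
  have hcard : ∀ q : Fin s, Fintype.card {j // j ≠ q} = n + 1 := by
    intro q
    simp [Fintype.card_subtype_compl, hs]
  have hLI : ∀ q : Fin s, LinearIndependent K (fun x : {j // j ≠ q} => p x) := by
    intro q
    have hc : (Finset.univ.erase q).card = n + 1 := by
      rw [Finset.card_erase_of_mem (Finset.mem_univ _)]; simp [hs]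
    have h := indep p hgen (Finset.univ.erase q) (by omega) (by omega)
    exact h.comp (fun x : {j // j ≠ q} => (⟨x.1, Finset.mem_erase.2 ⟨x.2, Finset.mem_univ _⟩⟩ :
      (Finset.univ.erase q : Finset (Fin s)))) (fun x y hxy => Subtype.ext (congrArg (fun z => z.1) hxy))
  have hB : ∀ q : Fin s, ∃ B : Basis {j // j ≠ q} K (Fin (n + 1) → K), ∀ j, B j = p j := by
    intro q
    have : Nonempty {j // j ≠ q} := Fintype.card_pos_iff.1 (by rw [hcard]; omega)
    exact ⟨basisOfLinearIndependentOfCardEqFinrank (hLI q) (by rw [hcard]; simp), fun j => by simp⟩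
  choose B hB using hB
  let zl : Fin s := ⟨n + 1, by omega⟩
  have hzl0 : zl ≠ z0 := fun h => by
    have := congrArg Fin.val h
    simp only [zl] at this; omega
  have hzl1 : zl ≠ z1 := fun h => by
    have := congrArg Fin.val h
    simp only [zl] at this; omega
  let Q : Fin s → Fin s := fun i => if i = z0 then zl else z0
  have hQ0 : Q z0 = zl := by simp [Q]
  have hQ1 : ∀ i, i ≠ z0 → Q i = z0 := fun i h => by simp [Q, h]
  have hQ : ∀ i, i ≠ Q i := by
    intro i
    by_cases h : i = z0
    · rw [h, hQ0]; exact hzl0.symm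
    · rw [hQ1 i h]; exact h
  have hle0 : ∀ i, m i ≤ m z0 := fun i => hmono _ _ (Fin.le_def.2 (by omega))
  have hle1 : ∀ i, i ≠ z0 → m i ≤ m z1 := by
    intro i hi
    refine hmono _ _ (Fin.le_def.2 ?_)
    have : (i : ℕ) ≠ 0 := fun h => hi (Fin.ext (by omega))
    omega
  let κ : ∀ i : Fin s, {j // j ≠ Q i} := fun i => ⟨i, hQ i⟩
  have h01 : z0 ≠ z1 := fun h => by rw [h] at hz0; omega
  have key := reg_eq (fun i : Fin s => B (Q i)) κ m (m z0 + m z1 - 1)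
    (n := n) (by omega) (fun i => hcard (Q i)) h01 ⟨z1, by rw [hQ0]; exact hzl1.symm⟩
    (fun h => h01 (congrArg Subtype.val h).symm) (by rw [hB, hB]) (hpos _) rfl ?_
  · rw [regFat]
    simp only [hB] at key
    exact key
  · rintro i ⟨d, hd0, hd⟩
    simp only [hB]
    have hi0 := hle0 i
    have hp1 := hpos z1
    refine ⟨by omega, ?_⟩
    set a := d.degree with ha
    let c : Fin s → ℕ := fun r => if h : r ≠ Q i then d ⟨r, h⟩ else 0
    have hc : ∑ r, c r = a := by
      rw [ha, Finsupp.degree_eq_sum, ← Finset.add_sum_erase _ _ (Finset.mem_univ (Q i))]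
      have : c (Q i) = 0 := by simp [c]
      rw [this, zero_add, ← Finset.sum_subtype_of_mem (p := fun j => j ≠ Q i) (s := Finset.univ.erase (Q i)) c (fun x hx => Finset.ne_of_mem_erase hx)]
      refine Finset.sum_congr ?_ ?_
      · ext x; simp [x.2]
      · intro x _
        simp [c, x.2]
    obtain ⟨g, hgi, hgs, hgQ, hgr⟩ := comb hn hs m c i (Q i) (hQ i) a (m z0 + m z1 - 1 - a)
      (m z0) (m z1) hc (by omega) (by omega) hm1 (by
        by_cases h : i = z0
        · have h1 := hle1 (Q i) (by rw [h, hQ0]; exact hzl0)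
          rw [h] at hd h1 ⊢
          omega
        · have := hle1 i h
          have := hle0 (Q i)
          omega) (hle0 _) (by
        intro r h1 h2
        apply hle1
        by_cases h : i = z0
        · rwa [← h]
        · rwa [← hQ1 i h])
    let ell : Fin s → MvPolynomial (Fin (n + 1)) K := fun l =>
      if h : i ≠ l then L (B l) ⟨i, h⟩ else 1
    have hell : ∀ l (h : i ≠ l), ell l = L (B l) ⟨i, h⟩ := fun l h => by simp [ell, h]
    refine ⟨∏ l ∈ Finset.univ.erase i, ell l ^ g l, ?_, ?_, ?_⟩
    · have e : m z0 + m z1 - 1 - a = ∑ l ∈ Finset.univ.erase i, g l := by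
        rw [← hgs, ← Finset.add_sum_erase _ _ (Finset.mem_univ i), hgi, zero_add]
      rw [e]
      refine IsHomogeneous.prod _ _ _ fun l hl => ?_
      rw [hell l (Finset.ne_of_mem_erase hl).symm]
      simpa using (L_hom _ _).pow (g l)
    · rw [map_prod, Finset.prod_ne_zero_iff]
      intro l hl
      rw [hell l (Finset.ne_of_mem_erase hl).symm, map_pow, eval_L]
      have := hB l ⟨i, (Finset.ne_of_mem_erase hl).symm⟩
      simp only at this
      apply pow_ne_zero
      change (B l).repr (p i) _ ≠ 0
      rw [← this, Basis.repr_self, Finsupp.single_eq_same]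
      exact one_ne_zero
    · intro r hr
      change _ ∈ pointIdeal (p r) ^ m r
      have hH : ∏ l ∈ Finset.univ.erase i, ell l ^ g l ∈
          pointIdeal (p r) ^ (m z0 + m z1 - 1 - a - g r) := by
        have hrm : r ∈ Finset.univ.erase i := Finset.mem_erase.2 ⟨hr, Finset.mem_univ _⟩
        have e : m z0 + m z1 - 1 - a - g r = ∑ l ∈ (Finset.univ.erase i).erase r, g l := by
          rw [← hgs, ← Finset.add_sum_erase _ _ (Finset.mem_univ i), hgi, zero_add,
            ← Finset.add_sum_erase _ _ hrm, Nat.add_sub_cancel_left]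
        rw [← Finset.mul_prod_erase _ _ hrm, e, ← Finset.prod_pow_eq_pow_sum]
        refine Ideal.mul_mem_left _ _ (Ideal.prod_mem_prod fun l hl => Ideal.pow_mem_pow ?_ _)
        have hlr := Finset.ne_of_mem_erase hl
        have hli := Finset.ne_of_mem_erase (Finset.mem_of_mem_erase hl)
        rw [hell l hli.symm]
        apply L_mem
        have := hB l ⟨r, hlr.symm⟩
        simp only at this
        rw [← this, Basis.repr_self, Finsupp.single_apply, if_neg]
        simpa using hr
      by_cases hrQ : r = Q i
      · refine Ideal.mul_mem_left _ _ (Ideal.pow_le_pow_right ?_ hH)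
        rw [← hrQ] at hgQ
        omega
      · have hM : mon (fun i : Fin s => B (Q i)) i d ∈ pointIdeal (p r) ^ (a - c r) := by
          have h5 : p r = B (Q i) ⟨r, hrQ⟩ := (hB (Q i) ⟨r, hrQ⟩).symm
          rw [h5, mem_iff, G_mon (fun i : Fin s => B (Q i)) i d]
          intro α hα
          have : α = _ := Finset.mem_singleton.1 (support_monomial_subset hα)
          have h6 : c r = d ⟨r, hrQ⟩ := by simp [c, hrQ]
          have h7 := d.le_degree ⟨r, hrQ⟩
          rw [this, h6]
          omega
        have h8 := Ideal.mul_mem_mul hM hH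
        rw [← pow_add] at h8
        refine Ideal.pow_le_pow_right ?_ h8
        have h9 := hgr r hr hrQ
        have h10 : g r ≤ m z0 + m z1 - 1 - a := by
          rw [← hgs]; exact Finset.single_le_sum (fun _ _ => Nat.zero_le _) (Finset.mem_univ r)
        omega

end FatPts

/-- Lemma 2.4 (CTV): for `2 ≤ s ≤ n+2` points in linearly general position in `ℙⁿ`,
`n ≥ 3`, `reg(R/I) = m₁ + m₂ - 1`. -/
theorem stmt17 {K : Type} [Field K] [IsAlgClosed K] {n s : ℕ}
    (hn : 3 ≤ n) (hs2 : 2 ≤ s) (hs : s ≤ n + 2)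
    (p : Fin s → Fin (n + 1) → K) (hdist : ProjDistinct p)
    (hgen : ∀ j : ℕ, j < n → ∀ T : Finset (Fin s), T.card = j + 2 →
      ¬ OnLinearSubspace p T j)
    (m : Fin s → ℕ) (hmono : ∀ i j : Fin s, i ≤ j → m j ≤ m i)
    (hpos : ∀ i, 0 < m i) (hm1 : 2 ≤ m ⟨0, by omega⟩) :
    regFat K p m = m ⟨0, by omega⟩ + m ⟨1, by omega⟩ - 1 := by
  rcases Nat.lt_or_ge s (n + 2) with h | h
  · refine FatPts.case1 hn _ _ rfl rfl p ?_ m hmono hpos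
    have h1 := FatPts.indep p hgen Finset.univ (by simpa using hs2) (by simp; omega)
    exact h1.comp (fun i => ⟨i, Finset.mem_univ i⟩) (fun x y hxy => congrArg (fun z => z.1) hxy)
  · exact FatPts.case2 hn _ _ rfl rfl (by omega) p hgen m hmono hpos hm1
end
end
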